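/- Let φ be a continuous injective map on {z ∈ ℂ : |z| ≥ 1} that is holomorphic on {|z| > 1} with Laurent expansion φ(z) = z + φ₀ + ∑_{k≥1} φ_{-k} z^{-k} at infinity; assume θ ↦ φ(e^{iθ}) is five times continuously differentiable with α-Hölder continuous fifth derivative for some α ∈ (0,1) and nonvanishing derivative, that φ' extends continuously and without zeros to {|z| ≥ 1}, and that the Grunsky expansion of φ converges absolutely for |z|, |ζ| ≥ 1 (so the image curve γ = φ(𝕋) is a C^{5+α} Jordan curve of logarithmic capacity 1). Set b_{kℓ} = √(kℓ) a_{kℓ} and let K_m be the associated 2m×2m real symmetric block matrix. Define the partition function Z_n = (1/n!) ∫_{[−π,π]^n} ∏_{1≤μ<ν≤n} |φ(e^{iθ_μ}) − φ(e^{iθ_ν})|² ∏_{μ=1}^n |φ'(e^{iθ_μ})| dθ. Then det(I_{2m} + K_m) > 0 for every m, the limit D = lim_{m→∞} det(I_{2m} + K_m) exists in (0, ∞), and lim_{n→∞} Z_n/(2π)^n = D^{−1/2}. -/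

import Mathlib

open MeasureTheory Filter Matrix

/-- The `2m × 2m` real symmetric block matrix `K_m = [[B⁽¹⁾, B⁽²⁾],[B⁽²⁾, −B⁽¹⁾]]`
built from the truncated Grunsky matrix `B_m = (√(kℓ) a_{kℓ})_{1≤k,ℓ≤m}`
(with `B_m = B⁽¹⁾ + iB⁽²⁾`, `B⁽ʲ⁾` real). -/
noncomputable def grunskyK (a : ℕ → ℕ → ℂ) (m : ℕ) :
    Matrix (Fin m ⊕ Fin m) (Fin m ⊕ Fin m) ℝ :=
  Matrix.fromBlocks
    (Matrix.of fun k l : Fin m =>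
      ((Real.sqrt ((((k : ℕ) + 1) * ((l : ℕ) + 1) : ℕ)) : ℂ)
        * a ((k : ℕ) + 1) ((l : ℕ) + 1)).re)
    (Matrix.of fun k l : Fin m =>
      ((Real.sqrt ((((k : ℕ) + 1) * ((l : ℕ) + 1) : ℕ)) : ℂ)
        * a ((k : ℕ) + 1) ((l : ℕ) + 1)).im)
    (Matrix.of fun k l : Fin m =>
      ((Real.sqrt ((((k : ℕ) + 1) * ((l : ℕ) + 1) : ℕ)) : ℂ)
        * a ((k : ℕ) + 1) ((l : ℕ) + 1)).im)
    (-(Matrix.of fun k l : Fin m =>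
      ((Real.sqrt ((((k : ℕ) + 1) * ((l : ℕ) + 1) : ℕ)) : ℂ)
        * a ((k : ℕ) + 1) ((l : ℕ) + 1)).re))

namespace Grun

/-- multi-index monomials over factorials sum up to the exponential, finite support version -/
lemma hasSum_exp_finset {ι : Type*} (s : Finset ι) (a : ι → ℂ) :
    HasSum (fun ν : {ν : ι →₀ ℕ // ν.support ⊆ s} => ∏ k ∈ s, a k ^ (ν.1 k) / ((ν.1 k).factorial : ℂ))
      (Complex.exp (∑ k ∈ s, a k)) ∧
    Summable (fun ν : {ν : ι →₀ ℕ // ν.support ⊆ s} => ‖∏ k ∈ s, a k ^ (ν.1 k) / ((ν.1 k).factorial : ℂ)‖) := by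
  classical
  induction s using Finset.induction_on with
  | empty =>
    have : Unique {ν : ι →₀ ℕ // ν.support ⊆ (∅ : Finset ι)} :=
      ⟨⟨⟨0, by simp⟩⟩, fun ν => by
        apply Subtype.ext
        have := ν.2
        rw [Finset.subset_empty, Finsupp.support_eq_empty] at this
        exact this⟩
    constructor
    · simpa using hasSum_unique (fun ν : {ν : ι →₀ ℕ // ν.support ⊆ (∅ : Finset ι)} => (1:ℂ))
    · exact (hasSum_unique _).summable
  | insert x s hx ih =>
    let e : ℕ × {ν : ι →₀ ℕ // ν.support ⊆ s} ≃ {ν : ι →₀ ℕ // ν.support ⊆ insert x s} :=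
      { toFun := fun p => ⟨p.2.1 + Finsupp.single x p.1, by
          refine Finsupp.support_add.trans (Finset.union_subset (p.2.2.trans (Finset.subset_insert _ _)) ?_)
          exact Finsupp.support_single_subset.trans (by simp)⟩
        invFun := fun ν => (ν.1 x, ⟨ν.1.erase x, by
          rw [Finsupp.support_erase]
          intro y hy
          rw [Finset.mem_erase] at hy
          have := ν.2 hy.2
          rw [Finset.mem_insert] at this
          tauto⟩)
        left_inv := by
          rintro ⟨j, ν, hν⟩
          have hνx : ν x = 0 := by
            by_contra h
            exact hx (hν (Finsupp.mem_support_iff.2 h))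
          refine Prod.ext ?_ (Subtype.ext ?_)
          · simp [hνx]
          · ext y
            by_cases hy : y = x
            · subst hy; simp [hνx]
            · simp [Finsupp.erase_ne hy, Finsupp.single_apply, Ne.symm hy]
        right_inv := by
          rintro ⟨ν, hν⟩
          apply Subtype.ext
          ext y
          by_cases hy : y = x
          · subst hy; simp
          · simp [Finsupp.erase_ne hy, Finsupp.single_apply, Ne.symm hy] }
    have key : ∀ p, (∏ k ∈ insert x s, a k ^ ((e p).1 k) / (((e p).1 k).factorial : ℂ))
        = (a x ^ p.1 / (p.1.factorial : ℂ)) * ∏ k ∈ s, a k ^ (p.2.1 k) / ((p.2.1 k).factorial : ℂ) := by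
      rintro ⟨j, ν, hν⟩
      have hνx : ν x = 0 := by
        by_contra h
        exact hx (hν (Finsupp.mem_support_iff.2 h))
      rw [Finset.prod_insert hx]
      congr 1
      · simp [e, hνx]
      · refine Finset.prod_congr rfl fun k hk => ?_
        have : k ≠ x := fun h => hx (h ▸ hk)
        simp [e, Finsupp.single_apply, Ne.symm this]
    have h1 : HasSum (fun n : ℕ => a x ^ n / (n.factorial : ℂ)) (Complex.exp (a x)) := by
      rw [Complex.exp_eq_exp_ℂ]
      exact NormedSpace.expSeries_div_hasSum_exp (a x)
    have h1n : Summable (fun n : ℕ => ‖a x ^ n / (n.factorial : ℂ)‖) := h1.summable.norm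
    have hsn : Summable (fun p : ℕ × {ν : ι →₀ ℕ // ν.support ⊆ s} =>
        ‖(a x ^ p.1 / (p.1.factorial : ℂ)) * ∏ k ∈ s, a k ^ (p.2.1 k) / ((p.2.1 k).factorial : ℂ)‖) :=
      Summable.mul_norm (f := fun n : ℕ => a x ^ n / (n.factorial : ℂ))
        (g := fun ν : {ν : ι →₀ ℕ // ν.support ⊆ s} => ∏ k ∈ s, a k ^ (ν.1 k) / ((ν.1 k).factorial : ℂ)) h1n ih.2
    constructor
    · rw [Finset.sum_insert hx, Complex.exp_add, ← e.hasSum_iff]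
      have h3 := h1.mul ih.1 hsn.of_norm
      refine h3.congr_fun ?_
      exact key
    · rw [← e.summable_iff]
      refine hsn.congr fun p => ?_
      rw [Function.comp, key]

noncomputable def mono {ι : Type*} (a : ι → ℂ) (ν : ι →₀ ℕ) : ℂ := ν.prod fun k e => a k ^ e
noncomputable def fac {ι : Type*} (ν : ι →₀ ℕ) : ℝ := ν.prod fun _ e => (e.factorial : ℝ)

lemma fac_pos {ι : Type*} (ν : ι →₀ ℕ) : 0 < fac ν := by
  unfold fac Finsupp.prod
  exact Finset.prod_pos fun _ _ => by positivity

lemma mono_div_fac {ι : Type*} (a : ι → ℂ) (ν : ι →₀ ℕ) (s : Finset ι) (hs : ν.support ⊆ s) :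
    mono a ν / (fac ν : ℂ) = ∏ k ∈ s, a k ^ (ν k) / ((ν k).factorial : ℂ) := by
  unfold mono fac
  rw [Finset.prod_div_distrib, Finsupp.prod_of_support_subset _ hs _ (by simp),
    Finsupp.prod_of_support_subset _ hs _ (by simp)]
  push_cast
  rfl

lemma norm_mono {ι : Type*} (a : ι → ℂ) (ν : ι →₀ ℕ) :
    ((‖mono a ν‖ : ℝ) : ℂ) = mono (fun k => (‖a k‖ : ℂ)) ν := by
  unfold mono Finsupp.prod
  simp

lemma summable_mono {ι : Type*} (a : ι → ℂ) (ha : Summable fun k => ‖a k‖) :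
    Summable (fun ν : ι →₀ ℕ => ‖mono a ν / (fac ν : ℂ)‖) := by
  classical
  refine summable_of_sum_le (c := Real.exp (∑' k, ‖a k‖)) (fun _ => norm_nonneg _) fun u => ?_
  obtain ⟨s, hs⟩ : ∃ s : Finset ι, ∀ ν ∈ u, ν.support ⊆ s :=
    ⟨u.biUnion fun ν => ν.support, fun ν hν => Finset.subset_biUnion_of_mem (fun ν : ι →₀ ℕ => ν.support) hν⟩
  have h := (hasSum_exp_finset s (fun k => (‖a k‖ : ℂ)))
  let f : {ν : ι →₀ ℕ // ν.support ⊆ s} → ℝ := fun ν => ‖mono a ν.1 / (fac ν.1 : ℂ)‖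
  have hf : ∀ ν, ((f ν : ℝ) : ℂ) = ∏ k ∈ s, (‖a k‖ : ℂ) ^ (ν.1 k) / ((ν.1 k).factorial : ℂ) := by
    intro ν
    rw [← mono_div_fac _ _ s ν.2, ← norm_mono]
    simp [f, abs_of_pos (fac_pos _)]
  have h2 : HasSum f (Real.exp (∑ k ∈ s, ‖a k‖)) := by
    have := h.1
    simp_rw [← hf] at this
    rw [← Complex.ofReal_sum, ← Complex.ofReal_exp, Complex.hasSum_ofReal] at this
    exact this
  calc ∑ ν ∈ u, ‖mono a ν / (fac ν : ℂ)‖ = ∑ ν ∈ u.attach, f ⟨ν.1, hs _ ν.2⟩ := by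
        rw [← Finset.sum_attach]
    _ = ∑ ν ∈ u.attach.map ⟨fun ν => (⟨ν.1, hs _ ν.2⟩ : {ν : ι →₀ ℕ // ν.support ⊆ s}),
          fun x y hxy => Subtype.ext (by simpa using hxy)⟩, f ν := by
        rw [Finset.sum_map]; rfl
    _ ≤ Real.exp (∑ k ∈ s, ‖a k‖) := sum_le_hasSum _ (fun _ _ => norm_nonneg _) h2
    _ ≤ _ := Real.exp_le_exp.2 (ha.sum_le_tsum _ (fun _ _ => norm_nonneg _))

lemma hasSum_mono {ι : Type*} (a : ι → ℂ) (ha : Summable fun k => ‖a k‖) :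
    HasSum (fun ν : ι →₀ ℕ => mono a ν / (fac ν : ℂ)) (Complex.exp (∑' k, a k)) := by
  classical
  have hs := (summable_mono a ha)
  rw [hs.of_norm.hasSum_iff]
  -- both are limits along finsets
  have h1 : Tendsto (fun s : Finset ι => Complex.exp (∑ k ∈ s, a k)) atTop
      (nhds (Complex.exp (∑' k, a k))) :=
    (Complex.continuous_exp.tendsto _).comp ha.of_norm.hasSum
  have h2 : ∀ s : Finset ι, Complex.exp (∑ k ∈ s, a k)
      = ∑' ν : ι →₀ ℕ, Set.indicator {ν | ν.support ⊆ s} (fun ν => mono a ν / (fac ν : ℂ)) ν := by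
    intro s
    rw [← (hasSum_exp_finset s a).1.tsum_eq, ← tsum_subtype]
    refine tsum_congr fun ν => ?_
    rw [mono_div_fac _ _ s ν.2]
  refine tendsto_nhds_unique ?_ h1
  simp_rw [h2]
  refine tendsto_tsum_of_dominated_convergence hs ?_ ?_
  · intro ν
    refine tendsto_const_nhds.congr' ?_
    filter_upwards [eventually_ge_atTop ν.support] with s hs'
    rw [Set.indicator_of_mem]
    exact hs'
  · refine Eventually.of_forall fun s ν => ?_
    exact norm_indicator_le_norm_self _ _

end Grun

namespace Grun

/-- the (reflected) parametrization of the unit circle -/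
noncomputable def par (θ : ℝ) : ℂ := Complex.exp (-(Complex.I * θ))

/-- the uniform probability measure on the unit circle, as a measure on the complex plane -/
noncomputable def tau : Measure ℂ :=
  (ENNReal.ofReal (2 * Real.pi))⁻¹ • (volume.restrict (Set.Icc (-Real.pi) Real.pi)).map par

noncomputable def taun (n : ℕ) : Measure (Fin n → ℂ) := Measure.pi fun _ => tau

def torus (n : ℕ) : Set (Fin n → ℂ) := {x | ∀ i, ‖x i‖ = 1}

lemma continuous_par : Continuous par := by unfold par; fun_prop

lemma norm_par (θ : ℝ) : ‖par θ‖ = 1 := by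
  unfold par
  rw [Complex.norm_exp]; simp

lemma par_ne_zero (θ : ℝ) : par θ ≠ 0 := Complex.exp_ne_zero _

lemma two_pi_pos' : (0:ℝ) < 2 * Real.pi := by positivity

instance : IsProbabilityMeasure tau := by
  constructor
  unfold tau
  rw [Measure.smul_apply, Measure.map_apply continuous_par.measurable MeasurableSet.univ]
  simp only [Set.preimage_univ, Measure.restrict_apply_univ, Real.volume_Icc, smul_eq_mul]
  rw [show Real.pi - -Real.pi = 2 * Real.pi by ring]
  exact ENNReal.inv_mul_cancel (by simp [Real.pi_pos]) ENNReal.ofReal_ne_top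

instance (n : ℕ) : IsProbabilityMeasure (taun n) := by unfold taun; infer_instance

lemma tau_ae : ∀ᵐ u ∂tau, ‖u‖ = 1 := by
  unfold tau
  apply Measure.ae_smul_measure
  rw [ae_map_iff continuous_par.measurable.aemeasurable
    (measurableSet_eq_fun measurable_norm measurable_const)]
  exact Eventually.of_forall norm_par

lemma taun_ae (n : ℕ) : ∀ᵐ u ∂(taun n), u ∈ torus n := by
  unfold torus taun
  simp only [Set.mem_setOf_eq]
  rw [ae_all_iff]
  intro i
  exact (Measure.quasiMeasurePreserving_eval (fun _ : Fin n => tau) i).ae tau_ae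

lemma isCompact_torus (n : ℕ) : IsCompact (torus n) := by
  have : torus n = Set.pi Set.univ fun _ => Metric.sphere (0:ℂ) 1 := by
    ext x; simp [torus]
  rw [this]
  exact isCompact_univ_pi fun _ => isCompact_sphere _ _

lemma taun_restrict (n : ℕ) : (taun n).restrict (torus n) = taun n :=
  Measure.restrict_eq_self_of_ae_mem (taun_ae n)

lemma integrable_torus {E : Type*} [NormedAddCommGroup E] {n : ℕ} {f : (Fin n → ℂ) → E} (hf : ContinuousOn f (torus n)) :
    Integrable f (taun n) := by
  rw [← taun_restrict]
  exact hf.integrableOn_compact (isCompact_torus n)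

lemma tau_restrict : tau.restrict (Metric.sphere 0 1) = tau :=
  Measure.restrict_eq_self_of_ae_mem (by simpa using tau_ae)

lemma integrable_tau {E : Type*} [NormedAddCommGroup E] {f : ℂ → E} (hf : ContinuousOn f (Metric.sphere 0 1)) :
    Integrable f tau := by
  rw [← tau_restrict]
  exact hf.integrableOn_compact (isCompact_sphere _ _)

lemma integral_tau {f : ℂ → ℂ} (hf : ContinuousOn f (Metric.sphere 0 1)) :
    ∫ u, f u ∂tau = Real.circleAverage f 0 1 := by
  have h0 : Integrable f ((volume.restrict (Set.Icc (-Real.pi) Real.pi)).map par) := by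
    have := integrable_tau hf
    unfold tau at this
    rwa [integrable_smul_measure (ENNReal.inv_ne_zero.2 ENNReal.ofReal_ne_top) (by simp [Real.pi_pos])] at this
  unfold tau
  rw [integral_smul_measure, integral_map continuous_par.measurable.aemeasurable h0.1,
    integral_Icc_eq_integral_Ioc, ← intervalIntegral.integral_of_le (by linarith [Real.pi_pos]),
    Real.circleAverage_def]
  have h1 : (∫ x in (-Real.pi)..Real.pi, f (par x)) = ∫ x in (-Real.pi)..Real.pi, f (circleMap 0 1 x) := by
    have := intervalIntegral.integral_comp_neg (a := -Real.pi) (b := Real.pi) (fun x => f (circleMap 0 1 x))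
    rw [neg_neg] at this
    rw [← this]
    refine intervalIntegral.integral_congr fun x _ => ?_
    simp [par, circleMap, mul_comm]
  rw [h1]
  have hp : Function.Periodic (fun x => f (circleMap 0 1 x)) (2 * Real.pi) := fun x => by
    simp only [periodic_circleMap 0 1 x]
  have h2 := hp.intervalIntegral_add_eq (-Real.pi) 0
  rw [show -Real.pi + 2 * Real.pi = Real.pi by ring, zero_add] at h2
  rw [h2, ENNReal.toReal_inv, ENNReal.toReal_ofReal two_pi_pos'.le]

lemma meanValue {f : ℂ → ℂ} (hf : DiffContOnCl ℂ f (Metric.ball 0 1)) : ∫ u, f u ∂tau = f 0 := by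
  have hc : ContinuousOn f (Metric.closedBall 0 1) := by
    have := hf.continuousOn
    rwa [closure_ball _ one_ne_zero] at this
  rw [integral_tau (hc.mono Metric.sphere_subset_closedBall)]
  exact DiffContOnCl.circleAverage (by simpa using hf)

lemma conj_eq_inv {u : ℂ} (hu : ‖u‖ = 1) : (starRingEnd ℂ) u = u⁻¹ := by
  rw [Complex.inv_def, Complex.normSq_eq_norm_sq, hu]; simp

lemma moment_aux {a b : ℕ} (h : b < a) : ∫ u, u ^ a * (starRingEnd ℂ) u ^ b ∂tau = 0 := by
  have : ∫ u, u ^ a * (starRingEnd ℂ) u ^ b ∂tau = ∫ u, u ^ (a - b) ∂tau := by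
    refine integral_congr_ae ?_
    filter_upwards [tau_ae] with u hu
    have h0 : u ≠ 0 := by rintro rfl; simp at hu
    rw [conj_eq_inv hu]
    rw [pow_sub₀ _ h0 h.le, inv_pow]
  rw [this, meanValue (f := fun u => u ^ (a - b))]
  · simp; omega
  · exact (differentiable_id.pow _).diffContOnCl

lemma moment (a b : ℕ) : ∫ u, u ^ a * (starRingEnd ℂ) u ^ b ∂tau = if a = b then 1 else 0 := by
  rcases lt_trichotomy a b with h | h | h
  · rw [if_neg h.ne]
    have h2 := moment_aux h
    have h3 := congrArg (starRingEnd ℂ) h2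
    rw [← integral_conj] at h3
    simp only [map_mul, map_pow, Complex.conj_conj, map_zero] at h3
    rw [← h3]
    congr 1; ext u; ring
  · subst h
    rw [if_pos rfl]
    have : ∫ u, u ^ a * (starRingEnd ℂ) u ^ a ∂tau = ∫ u, (1:ℂ) ∂tau := by
      refine integral_congr_ae ?_
      filter_upwards [tau_ae] with u hu
      have h0 : u ≠ 0 := by rintro rfl; simp at hu
      rw [conj_eq_inv hu, ← mul_pow, mul_inv_cancel₀ h0, one_pow]
    rw [this]; simp
  · rw [if_neg h.ne', moment_aux h]

end Grun

namespace Grun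

lemma cauchy_aux (p q s t : ℂ) (h1 : 1 - p * t ≠ 0) (h2 : 1 - p * s ≠ 0) (h3 : 1 - q * t ≠ 0) :
    (1 - p * t)⁻¹ = (p - q) * (1 - p * s)⁻¹ * ((t - s) * (1 - q * t)⁻¹) * (1 - p * t)⁻¹
      + (1 - q * s) * (1 - p * s)⁻¹ * (1 - q * t)⁻¹ := by
  have e1 := inv_mul_cancel₀ h1
  have e2 := inv_mul_cancel₀ h2
  have e3 := inv_mul_cancel₀ h3
  generalize (1 - p * t)⁻¹ = A at *
  generalize (1 - p * s)⁻¹ = B at *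
  generalize (1 - q * t)⁻¹ = C at *
  have k : (p - q) * (t - s) + (1 - q * s) * (1 - p * t) - (1 - q * t) * (1 - p * s) = 0 := by ring
  linear_combination (-A) * e2 + (-A * B * (1 - p * s)) * e3 + (1 - q * s) * B * C * e1 - A * B * C * k

/-- Cauchy determinant -/
lemma cauchy_det : ∀ (n : ℕ) (y x : Fin n → ℂ), (∀ i j, 1 - y i * x j ≠ 0) →
    (Matrix.of fun i j => (1 - y i * x j)⁻¹).det
      = (vandermonde y).det * (vandermonde x).det * ∏ i, ∏ j, (1 - y i * x j)⁻¹ := by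
  intro n
  induction n with
  | zero => intro y x _; simp
  | succ n ih =>
    intro y x h
    let B : Matrix (Fin (n+1)) (Fin (n+1)) ℂ := Matrix.of fun i j => Fin.cases (1 - y 0 * x j)⁻¹
      (fun i' : Fin n => (y i'.succ - y 0) * (1 - y i'.succ * x 0)⁻¹ * ((x j - x 0) * (1 - y 0 * x j)⁻¹)
        * (1 - y i'.succ * x j)⁻¹) i
    have h1 : (Matrix.of fun i j => (1 - y i * x j)⁻¹).det = B.det := by
      refine Matrix.det_eq_of_forall_row_eq_smul_add_const
        (Fin.cons 0 fun i' : Fin n => (1 - y 0 * x 0) * (1 - y i'.succ * x 0)⁻¹) 0 (by simp) ?_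
      intro i j
      refine Fin.cases ?_ (fun i' => ?_) i
      · simp [B]
      · simp only [B, Matrix.of_apply, Fin.cases_succ, Fin.cons_succ, Fin.cases_zero]
        have a1 := h i'.succ j
        have a2 := h i'.succ 0
        have a3 := h 0 j
        exact cauchy_aux _ _ _ _ a1 a2 a3
    have h2 : B.det = (1 - y 0 * x 0)⁻¹ * (B.submatrix Fin.succ Fin.succ).det := by
      rw [Matrix.det_succ_column_zero, Fin.sum_univ_succ]
      simp [B, Fin.succAbove_zero]
    have h3 : B.submatrix Fin.succ Fin.succ = Matrix.of fun i j : Fin n =>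
        ((y i.succ - y 0) * (1 - y i.succ * x 0)⁻¹) *
        (Matrix.of (fun i j : Fin n => ((x j.succ - x 0) * (1 - y 0 * x j.succ)⁻¹) *
          (Matrix.of (fun i j : Fin n => (1 - y i.succ * x j.succ)⁻¹) i j)) i j) := by
      ext i j
      simp [B]; ring
    rw [h1, h2, h3, Matrix.det_mul_column, Matrix.det_mul_row,
      ih (fun i => y i.succ) (fun i => x i.succ) (fun i j => h _ _)]
    rw [Matrix.det_vandermonde, Matrix.det_vandermonde, Matrix.det_vandermonde, Matrix.det_vandermonde]
    simp only [Fin.prod_univ_succ, Fin.prod_Ioi_zero, Fin.prod_Ioi_succ, Finset.prod_mul_distrib]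
    ring

noncomputable def VV {n : ℕ} (x : Fin n → ℂ) : ℂ := (vandermonde x).det

/-- CUE expectation -/
noncomputable def En (n : ℕ) (f : (Fin n → ℂ) → ℂ) : ℂ :=
  ((n.factorial : ℂ))⁻¹ * ∫ x, (VV x * (starRingEnd ℂ) (VV x)) * f x ∂(taun n)

/-- power sums -/
noncomputable def pp {n : ℕ} (x : Fin n → ℂ) (k : ℕ) : ℂ := ∑ i, x i ^ (k + 1)

/-- monomials in the power sums -/
noncomputable def pm {n : ℕ} (ν : ℕ →₀ ℕ) (x : Fin n → ℂ) : ℂ := mono (pp x) ν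

noncomputable def PM (n : ℕ) (ν : ℕ →₀ ℕ) : MvPolynomial (Fin n) ℂ :=
  ν.prod fun k e => (∑ i, (MvPolynomial.X i) ^ (k + 1)) ^ e

noncomputable def VP (n : ℕ) : MvPolynomial (Fin n) ℂ := (vandermonde fun i => MvPolynomial.X i).det

lemma eval_PM {n : ℕ} (ν : ℕ →₀ ℕ) (x : Fin n → ℂ) : MvPolynomial.eval x (PM n ν) = pm ν x := by
  simp [PM, pm, mono, pp, Finsupp.prod]

lemma eval_VP {n : ℕ} (x : Fin n → ℂ) : MvPolynomial.eval x (VP n) = VV x := by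
  simp [VP, VV, Matrix.det_vandermonde]

lemma VP_ne_zero (n : ℕ) : VP n ≠ 0 := by
  unfold VP
  rw [Matrix.det_vandermonde_ne_zero_iff]
  exact MvPolynomial.X_injective

lemma cauchy_one {y : ℂ} (hy : ‖y‖ < 1) (m : ℕ) :
    ∫ u, u ^ m * (1 - y * (starRingEnd ℂ) u)⁻¹ ∂tau = y ^ m := by
  have h1 : ∫ u, u ^ m * (1 - y * (starRingEnd ℂ) u)⁻¹ ∂tau = ∫ u, ((u - 0) / (u - y)) • u ^ m ∂tau := by
    refine integral_congr_ae ?_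
    filter_upwards [tau_ae] with u hu
    have h0 : u ≠ 0 := by rintro rfl; simp at hu
    have h2 : u - y ≠ 0 := by
      intro h
      rw [sub_eq_zero] at h
      rw [h] at hu
      linarith
    rw [conj_eq_inv hu]
    simp only [sub_zero, smul_eq_mul]
    rw [mul_comm]
    congr 1
    field_simp
  rw [h1, integral_tau]
  · have := DiffContOnCl.circleAverage_smul_div (f := fun u : ℂ => u ^ m) (c := 0) (R := 1) (w := y)
      ((differentiable_id.pow _).diffContOnCl) (by simpa using hy)
    simpa using this
  · intro u hu
    have hu : ‖u‖ = 1 := by simpa using hu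
    have h2 : u - y ≠ 0 := by
      intro h
      rw [sub_eq_zero] at h
      rw [h] at hu
      linarith
    apply ContinuousAt.continuousWithinAt
    fun_prop (disch := assumption)

lemma one_sub_ne {y u : ℂ} (hy : ‖y‖ < 1) (hu : ‖u‖ = 1) : 1 - y * (starRingEnd ℂ) u ≠ 0 := by
  intro h
  have h2 : y * (starRingEnd ℂ) u = 1 := (sub_eq_zero.1 h).symm
  have h3 := congrArg norm h2
  rw [norm_mul, RCLike.norm_conj, hu] at h3
  simp at h3
  linarith

lemma contOn_kernel {n : ℕ} (y : Fin n → ℂ) (hy : ∀ i, ‖y i‖ < 1) (i j : Fin n) :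
    ContinuousOn (fun x : Fin n → ℂ => (1 - y i * (starRingEnd ℂ) (x j))⁻¹) (torus n) := by
  refine ContinuousOn.inv₀ (Continuous.continuousOn (by fun_prop)) ?_
  intro x hx
  exact one_sub_ne (hy i) (hx j)

lemma cauchy_mv {n : ℕ} (h : MvPolynomial (Fin n) ℂ) (y : Fin n → ℂ) (hy : ∀ i, ‖y i‖ < 1) :
    ∫ x, MvPolynomial.eval x h * ∏ j, (1 - y j * (starRingEnd ℂ) (x j))⁻¹ ∂(taun n)
      = MvPolynomial.eval y h := by
  have e : ∀ x : Fin n → ℂ, MvPolynomial.eval x h * ∏ j, (1 - y j * (starRingEnd ℂ) (x j))⁻¹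
      = ∑ d ∈ h.support, h.coeff d * ∏ j, (x j ^ (d j) * (1 - y j * (starRingEnd ℂ) (x j))⁻¹) := by
    intro x
    rw [MvPolynomial.eval_eq', Finset.sum_mul]
    refine Finset.sum_congr rfl fun d _ => ?_
    rw [Finset.prod_mul_distrib]; ring
  simp_rw [e]
  rw [integral_finset_sum]
  · rw [MvPolynomial.eval_eq']
    refine Finset.sum_congr rfl fun d _ => ?_
    rw [integral_const_mul]
    congr 1
    unfold taun
    rw [integral_fintype_prod_eq_prod (μ := fun _ => tau)
      (f := fun (j : Fin n) (u : ℂ) => u ^ (d j) * (1 - y j * (starRingEnd ℂ) u)⁻¹)]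
    exact Finset.prod_congr rfl fun j _ => cauchy_one (hy j) _
  · intro d _
    apply integrable_torus
    refine ContinuousOn.mul continuousOn_const (continuousOn_finset_prod _ fun j _ => ?_)
    exact ContinuousOn.mul (Continuous.continuousOn (by fun_prop)) (contOn_kernel y hy j j)

lemma continuous_VV {n : ℕ} : Continuous (VV : (Fin n → ℂ) → ℂ) := by
  unfold VV
  simp only [Matrix.det_vandermonde]
  fun_prop

lemma continuous_pp {n : ℕ} (k : ℕ) : Continuous (fun x : Fin n → ℂ => pp x k) := by
  unfold pp; fun_prop

lemma continuous_pm {n : ℕ} (ν : ℕ →₀ ℕ) : Continuous (fun x : Fin n → ℂ => pm ν x) := by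
  simp_rw [← eval_PM]
  exact MvPolynomial.continuous_eval _

lemma pm_perm {n : ℕ} (ν : ℕ →₀ ℕ) (σ : Equiv.Perm (Fin n)) (y : Fin n → ℂ) :
    pm ν (fun i => y (σ i)) = pm ν y := by
  unfold pm
  congr 1
  ext k
  unfold pp
  exact Equiv.sum_comp σ (fun i => y i ^ (k+1))

lemma VV_perm {n : ℕ} (σ : Equiv.Perm (Fin n)) (y : Fin n → ℂ) :
    VV (fun i => y (σ i)) = (Equiv.Perm.sign σ : ℤ) * VV y := by
  unfold VV
  rw [← Matrix.det_permute]
  rfl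

lemma conj_VV {n : ℕ} (x : Fin n → ℂ) : (starRingEnd ℂ) (VV x) = VV fun i => (starRingEnd ℂ) (x i) := by
  simp [VV, Matrix.det_vandermonde]

lemma repro {n : ℕ} (ν : ℕ →₀ ℕ) (y : Fin n → ℂ) (hy : ∀ i, ‖y i‖ < 1) :
    VV y * En n (fun x => pm ν x * ∏ i, ∏ j, (1 - y i * (starRingEnd ℂ) (x j))⁻¹) = VV y * pm ν y := by
  have h1 : VV y * ∫ x, (VV x * (starRingEnd ℂ) (VV x)) *
      (pm ν x * ∏ i, ∏ j, (1 - y i * (starRingEnd ℂ) (x j))⁻¹) ∂(taun n)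
      = ∫ x, ∑ σ : Equiv.Perm (Fin n), ((Equiv.Perm.sign σ : ℤ) : ℂ) *
        (MvPolynomial.eval x (VP n * PM n ν) * ∏ j, (1 - y (σ j) * (starRingEnd ℂ) (x j))⁻¹) ∂(taun n) := by
    rw [← integral_const_mul]
    refine integral_congr_ae ?_
    filter_upwards [taun_ae n] with x hx
    have hc := cauchy_det n y (fun j => (starRingEnd ℂ) (x j)) (fun i j => one_sub_ne (hy i) (hx j))
    rw [map_mul, eval_VP, eval_PM, conj_VV]
    rw [Matrix.det_apply'] at hc
    simp only [Matrix.of_apply] at hc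
    calc _ = VV x * pm ν x * (VV y * VV (fun i => (starRingEnd ℂ) (x i)) *
          ∏ i, ∏ j, (1 - y i * (starRingEnd ℂ) (x j))⁻¹) := by ring
      _ = _ := by
          unfold VV
          rw [← hc, Finset.mul_sum]
          refine Finset.sum_congr rfl fun σ _ => ?_
          ring
  have h2 : ∫ x, ∑ σ : Equiv.Perm (Fin n), ((Equiv.Perm.sign σ : ℤ) : ℂ) *
        (MvPolynomial.eval x (VP n * PM n ν) * ∏ j, (1 - y (σ j) * (starRingEnd ℂ) (x j))⁻¹) ∂(taun n)
      = n.factorial * (VV y * pm ν y) := by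
    rw [integral_finset_sum]
    · have : ∀ σ : Equiv.Perm (Fin n), ∫ x, ((Equiv.Perm.sign σ : ℤ) : ℂ) *
        (MvPolynomial.eval x (VP n * PM n ν) * ∏ j, (1 - y (σ j) * (starRingEnd ℂ) (x j))⁻¹) ∂(taun n)
          = VV y * pm ν y := by
        intro σ
        rw [integral_const_mul, cauchy_mv _ (fun i => y (σ i)) (fun i => hy _), map_mul, eval_VP, eval_PM,
          pm_perm, VV_perm]
        rcases Int.units_eq_one_or (Equiv.Perm.sign σ) with h | h <;> simp [h]
      simp_rw [this]
      simp [Fintype.card_perm]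
    · intro σ _
      apply integrable_torus
      refine ContinuousOn.mul continuousOn_const (ContinuousOn.mul
        (MvPolynomial.continuous_eval _).continuousOn (continuousOn_finset_prod _ fun j _ => ?_))
      exact contOn_kernel (fun i => y (σ i)) (fun i => hy _) j j
  unfold En
  rw [mul_left_comm, h1, h2, ← mul_assoc, inv_mul_cancel₀ (by exact_mod_cast n.factorial_ne_zero), one_mul]

end Grun

namespace Grun

def wt (ν : ℕ →₀ ℕ) : ℕ := ν.sum fun k e => (k + 1) * e

noncomputable def zz (ν : ℕ →₀ ℕ) : ℝ := (ν.prod fun k e => ((k:ℝ) + 1) ^ e) * fac ν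

lemma zz_pos (ν : ℕ →₀ ℕ) : 0 < zz ν := by
  unfold zz
  refine mul_pos (Finset.prod_pos fun _ _ => by positivity) (fac_pos ν)

lemma wt_finite (d : ℕ) : {ν : ℕ →₀ ℕ | wt ν < d}.Finite := by
  classical
  refine ((Finset.range d).finsupp (fun _ => Finset.range d)).finite_toSet.subset ?_
  intro ν hν
  have hν : wt ν < d := hν
  have key : ∀ k ∈ ν.support, (k + 1) * ν k ≤ wt ν := fun k hk =>
    Finset.single_le_sum (f := fun k => (k+1) * ν k) (fun _ _ => Nat.zero_le _) hk
  simp only [Finset.mem_coe, Finset.mem_finsupp_iff, Finset.mem_range]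
  constructor
  · intro k hk
    have h1 := key k hk
    have h2 : 1 ≤ ν k := Nat.one_le_iff_ne_zero.2 (Finsupp.mem_support_iff.1 hk)
    simp only [Finset.mem_range]
    nlinarith
  · intro k hk
    by_cases h : k ∈ ν.support
    · have h1 := key k h
      nlinarith
    · rw [Finsupp.notMem_support_iff.1 h]
      omega

noncomputable def WW (d : ℕ) : Finset (ℕ →₀ ℕ) := (wt_finite d).toFinset

lemma mem_WW {d : ℕ} {ν : ℕ →₀ ℕ} : ν ∈ WW d ↔ wt ν < d := by simp [WW]

lemma PM_hom (n : ℕ) (ν : ℕ →₀ ℕ) : (PM n ν).IsHomogeneous (wt ν) := by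
  unfold PM wt
  refine MvPolynomial.IsHomogeneous.prod _ _ _ fun k _ => ?_
  refine MvPolynomial.IsHomogeneous.pow ?_ _
  refine MvPolynomial.IsHomogeneous.sum _ _ _ fun i _ => ?_
  simpa using (MvPolynomial.isHomogeneous_X ℂ i).pow (k+1)

lemma VP_hom (n : ℕ) : ∃ N, (VP n).IsHomogeneous N := by
  unfold VP
  rw [Matrix.det_vandermonde]
  refine ⟨∑ i : Fin n, ∑ j ∈ Finset.Ioi i, 1, ?_⟩
  refine MvPolynomial.IsHomogeneous.prod _ _ _ fun i _ => ?_
  refine MvPolynomial.IsHomogeneous.prod _ _ _ fun j _ => ?_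
  exact (MvPolynomial.isHomogeneous_X _ _).sub (MvPolynomial.isHomogeneous_X _ _)

lemma orth_hom {n : ℕ} (P Q : MvPolynomial (Fin n) ℂ) {a b : ℕ} (hP : P.IsHomogeneous a)
    (hQ : Q.IsHomogeneous b) (hab : a ≠ b) :
    ∫ x, MvPolynomial.eval x P * (starRingEnd ℂ) (MvPolynomial.eval x Q) ∂(taun n) = 0 := by
  have e : ∀ x : Fin n → ℂ, MvPolynomial.eval x P * (starRingEnd ℂ) (MvPolynomial.eval x Q)
      = ∑ α ∈ P.support, ∑ β ∈ Q.support, (P.coeff α * (starRingEnd ℂ) (Q.coeff β)) *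
        ∏ i, (x i ^ α i * (starRingEnd ℂ) (x i) ^ β i) := by
    intro x
    rw [MvPolynomial.eval_eq', MvPolynomial.eval_eq', map_sum, Finset.sum_mul_sum]
    refine Finset.sum_congr rfl fun α _ => Finset.sum_congr rfl fun β _ => ?_
    rw [Finset.prod_mul_distrib]
    simp only [map_mul, map_prod, map_pow]
    ring
  simp_rw [e]
  rw [integral_finset_sum]
  · refine Finset.sum_eq_zero fun α hα => ?_
    rw [integral_finset_sum]
    · refine Finset.sum_eq_zero fun β hβ => ?_
      rw [integral_const_mul]
      have h1 : ∫ x : Fin n → ℂ, ∏ i, (x i ^ α i * (starRingEnd ℂ) (x i) ^ β i) ∂(taun n)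
          = ∏ i, ∫ u, u ^ α i * (starRingEnd ℂ) u ^ β i ∂tau := by
        unfold taun
        exact integral_fintype_prod_eq_prod (μ := fun _ => tau)
          (f := fun i u => u ^ α i * (starRingEnd ℂ) u ^ β i)
      rw [h1]
      have h2 : ∃ i, α i ≠ β i := by
        by_contra hcon
        push Not at hcon
        have : α = β := Finsupp.ext hcon
        subst this
        exact hab ((hP (MvPolynomial.mem_support_iff.1 hα)).symm.trans (hQ (MvPolynomial.mem_support_iff.1 hβ)))
      obtain ⟨i, hi⟩ := h2
      rw [Finset.prod_eq_zero (Finset.mem_univ i), mul_zero]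
      rw [moment, if_neg hi]
    · intro β _
      exact integrable_torus (Continuous.continuousOn (by fun_prop))
  · intro α _
    exact integrable_torus (Continuous.continuousOn (by fun_prop))

noncomputable def GG (n : ℕ) (μ ν : ℕ →₀ ℕ) : ℂ := En n fun x => pm μ x * (starRingEnd ℂ) (pm ν x)

lemma GG_wt (n : ℕ) (μ ν : ℕ →₀ ℕ) (h : wt μ ≠ wt ν) : GG n μ ν = 0 := by
  obtain ⟨N, hN⟩ := VP_hom n
  have := orth_hom (VP n * PM n μ) (VP n * PM n ν) (hN.mul (PM_hom n μ)) (hN.mul (PM_hom n ν)) (by omega)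
  unfold GG En
  rw [mul_eq_zero]; right
  rw [← this]
  congr 1
  ext x
  simp only [map_mul, eval_VP, eval_PM]
  ring

lemma En_hasSum {n : ℕ} {ι : Type*} [Countable ι] (F : ι → (Fin n → ℂ) → ℂ) (f : (Fin n → ℂ) → ℂ) (b : ι → ℝ)
    (hb : Summable b) (hF : ∀ i, ContinuousOn (F i) (torus n))
    (hFb : ∀ i, ∀ x ∈ torus n, ‖F i x‖ ≤ b i) (hs : ∀ x ∈ torus n, HasSum (fun i => F i x) (f x)) :
    HasSum (fun i => En n (F i)) (En n f) := by
  unfold En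
  refine HasSum.mul_left _ ?_
  have hV : ContinuousOn (fun x : Fin n → ℂ => VV x * (starRingEnd ℂ) (VV x)) (torus n) := by
    have := continuous_VV (n := n)
    exact Continuous.continuousOn (by fun_prop)
  refine hasSum_integral_of_dominated_convergence (fun i x => ‖VV x * (starRingEnd ℂ) (VV x)‖ * b i) ?_ ?_ ?_ ?_ ?_
  · intro i
    exact (integrable_torus (hV.mul (hF i))).1
  · intro i
    filter_upwards [taun_ae n] with x hx
    rw [norm_mul]
    exact mul_le_mul_of_nonneg_left (hFb i x hx) (norm_nonneg _)
  · exact Eventually.of_forall fun x => hb.mul_left _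
  · simp_rw [tsum_mul_left]
    exact (integrable_torus hV.norm).mul_const _
  · filter_upwards [taun_ae n] with x hx
    exact (hs x hx).mul_left _

end Grun

namespace Grun

lemma norm_pp_le {n : ℕ} (x : Fin n → ℂ) (hx : x ∈ torus n) (k : ℕ) : ‖pp x k‖ ≤ n := by
  unfold pp
  refine (norm_sum_le _ _).trans ?_
  simp [norm_pow, hx _]

lemma mono_div_zz {n : ℕ} (s t : ℕ → ℂ) (ν : ℕ →₀ ℕ) :
    mono (fun k => s k * t k / ((k:ℂ) + 1)) ν / (fac ν : ℂ) = mono s ν * mono t ν / (zz ν : ℂ) := by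
  unfold mono zz Finsupp.prod
  push_cast
  rw [← div_div]
  congr 1
  rw [← Finset.prod_mul_distrib, ← Finset.prod_div_distrib]
  refine Finset.prod_congr rfl fun k _ => ?_
  rw [div_pow, mul_pow]

lemma mono_conj {ι : Type*} (s : ι → ℂ) (ν : ι →₀ ℕ) :
    mono (fun k => (starRingEnd ℂ) (s k)) ν = (starRingEnd ℂ) (mono s ν) := by
  unfold mono Finsupp.prod
  simp

lemma summable_pp_y {n : ℕ} (y : Fin n → ℂ) (hy : ∀ i, ‖y i‖ < 1) :
    Summable fun k => ‖pp y k * (n : ℂ) / ((k:ℂ) + 1)‖ := by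
  have h : Summable fun k => ∑ i, ‖y i‖ ^ k * n := by
    refine summable_sum fun i _ => ?_
    exact (summable_geometric_of_lt_one (norm_nonneg _) (hy i)).mul_right _
  refine Summable.of_nonneg_of_le (fun _ => norm_nonneg _) (fun k => ?_) h
  rw [norm_div, norm_mul]
  have h1 : (1:ℝ) ≤ ‖(k:ℂ) + 1‖ := by
    have : ((k:ℂ) + 1) = ((k + 1 : ℕ) : ℂ) := by push_cast; ring
    rw [this, Complex.norm_natCast]
    push_cast; linarith [Nat.cast_nonneg (α := ℝ) k]
  refine (div_le_self (by positivity) h1).trans ?_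
  rw [← Finset.sum_mul, Complex.norm_natCast]
  refine mul_le_mul_of_nonneg_right ?_ (by positivity)
  unfold pp
  refine (norm_sum_le _ _).trans (Finset.sum_le_sum fun i _ => ?_)
  rw [norm_pow]
  exact pow_le_pow_of_le_one (norm_nonneg _) (hy i).le (Nat.le_succ k)

lemma kernel_sum {n : ℕ} (y : Fin n → ℂ) (hy : ∀ i, ‖y i‖ < 1) (x : Fin n → ℂ) (hx : x ∈ torus n) :
    HasSum (fun ν : ℕ →₀ ℕ => pm ν y * (starRingEnd ℂ) (pm ν x) / (zz ν : ℂ))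
      (∏ i, ∏ j, (1 - y i * (starRingEnd ℂ) (x j))⁻¹) := by
  set a : ℕ → ℂ := fun k => pp y k * (starRingEnd ℂ) (pp x k) / ((k:ℂ) + 1) with ha
  have hle : ∀ k, ‖a k‖ ≤ ‖pp y k * (n : ℂ) / ((k:ℂ) + 1)‖ := by
    intro k
    simp only [ha, norm_div, norm_mul, RCLike.norm_conj, Complex.norm_natCast]
    gcongr
    exact norm_pp_le x hx k
  have hsum : Summable fun k => ‖a k‖ := Summable.of_nonneg_of_le (fun _ => norm_nonneg _) hle (summable_pp_y y hy)
  have h1 := hasSum_mono a hsum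
  have h2 : HasSum a (∑ i, ∑ j, -Complex.log (1 - y i * (starRingEnd ℂ) (x j))) := by
    have e : a = fun k => ∑ i, ∑ j, (y i * (starRingEnd ℂ) (x j)) ^ (k+1) / ((k+1 : ℕ) : ℂ) := by
      ext k
      simp only [ha, pp, map_sum, Finset.sum_mul_sum, Finset.sum_div]
      simp [mul_pow]
    rw [e]
    refine hasSum_sum fun i _ => hasSum_sum fun j _ => ?_
    have hn : ‖y i * (starRingEnd ℂ) (x j)‖ < 1 := by
      rw [norm_mul, RCLike.norm_conj, hx j, mul_one]; exact hy i
    have := Complex.hasSum_taylorSeries_neg_log hn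
    rw [← hasSum_nat_add_iff' 1] at this
    simpa using this
  have h3 : Complex.exp (∑' k, a k) = ∏ i, ∏ j, (1 - y i * (starRingEnd ℂ) (x j))⁻¹ := by
    rw [h2.tsum_eq, Complex.exp_sum]
    refine Finset.prod_congr rfl fun i _ => ?_
    rw [Complex.exp_sum]
    refine Finset.prod_congr rfl fun j _ => ?_
    rw [Complex.exp_neg, Complex.exp_log (one_sub_ne (hy i) (hx j))]
  rw [h3] at h1
  convert! h1 using 2 with ν
  rw [ha, mono_div_zz (n := n), mono_conj]
  rfl

lemma norm_mono_le {ι : Type*} (a b : ι → ℂ) (h : ∀ k, ‖a k‖ ≤ ‖b k‖) (ν : ι →₀ ℕ) : ‖mono a ν‖ ≤ ‖mono b ν‖ := by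
  unfold mono Finsupp.prod
  rw [norm_prod, norm_prod]
  refine Finset.prod_le_prod (fun _ _ => norm_nonneg _) fun k _ => ?_
  rw [norm_pow, norm_pow]
  exact pow_le_pow_left₀ (norm_nonneg _) (h k) _

lemma norm_pm_le {n : ℕ} (ν : ℕ →₀ ℕ) (x : Fin n → ℂ) (hx : x ∈ torus n) :
    ‖pm ν x‖ ≤ ‖mono (fun _ => (n:ℂ)) ν‖ := by
  refine norm_mono_le _ _ (fun k => ?_) ν
  rw [Complex.norm_natCast]
  exact norm_pp_le x hx k

lemma En_const_mul (n : ℕ) (c : ℂ) (f : (Fin n → ℂ) → ℂ) : En n (fun x => c * f x) = c * En n f := by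
  unfold En
  have : ∀ x : Fin n → ℂ, VV x * (starRingEnd ℂ) (VV x) * (c * f x) = c * (VV x * (starRingEnd ℂ) (VV x) * f x) := by
    intro x; ring
  simp_rw [this]
  rw [integral_const_mul]; ring

lemma GG_sum {n : ℕ} (μ : ℕ →₀ ℕ) (y : Fin n → ℂ) (hy : ∀ i, ‖y i‖ < 1) :
    HasSum (fun ν : ℕ →₀ ℕ => GG n μ ν / (zz ν : ℂ) * pm ν y)
      (En n (fun x => pm μ x * ∏ i, ∏ j, (1 - y i * (starRingEnd ℂ) (x j))⁻¹)) := by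
  have hb := (summable_mono _ (summable_pp_y y hy)).mul_left ‖mono (fun _ => (n:ℂ)) μ‖
  have := En_hasSum (n := n) (fun ν x => pm μ x * (pm ν y * (starRingEnd ℂ) (pm ν x) / (zz ν : ℂ)))
    (fun x => pm μ x * ∏ i, ∏ j, (1 - y i * (starRingEnd ℂ) (x j))⁻¹) _ hb ?_ ?_ ?_
  · convert! this using 2 with ν
    have e : (fun x : Fin n → ℂ => pm μ x * (pm ν y * (starRingEnd ℂ) (pm ν x) / (zz ν : ℂ)))
      = fun x => (pm ν y / (zz ν : ℂ)) * (pm μ x * (starRingEnd ℂ) (pm ν x)) := by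
      ext x; ring
    rw [e, En_const_mul]
    unfold GG
    ring
  · intro ν
    have h1 := continuous_pm (n := n) μ
    have h2 := continuous_pm (n := n) ν
    exact Continuous.continuousOn (by fun_prop)
  · intro ν x hx
    rw [norm_mul]
    refine mul_le_mul (norm_pm_le μ x hx) ?_ (norm_nonneg _) (norm_nonneg _)
    rw [mono_div_zz (n := n), norm_div, norm_div, norm_mul, norm_mul, RCLike.norm_conj]
    refine div_le_div_of_nonneg_right ?_ (norm_nonneg _)
    refine mul_le_mul_of_nonneg_left (norm_pm_le ν x hx) (norm_nonneg _)
  · intro x hx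
    exact (kernel_sum y hy x hx).mul_left _

/-- the reproducing identity for power sum monomials -/
lemma repr_PM {n : ℕ} (μ : ℕ →₀ ℕ) (T : Finset (ℕ →₀ ℕ)) (hT : ∀ ν, wt ν = wt μ → ν ∈ T) :
    PM n μ = ∑ ν ∈ T, MvPolynomial.C (GG n μ ν / (zz ν : ℂ)) * PM n ν := by
  have key : VP n * PM n μ = VP n * ∑ ν ∈ T, MvPolynomial.C (GG n μ ν / (zz ν : ℂ)) * PM n ν := by
    refine MvPolynomial.funext_set (fun _ => Metric.ball (0:ℂ) 1) (fun _ => ?_) fun y hy => ?_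
    · exact infinite_of_mem_nhds 0 (Metric.ball_mem_nhds _ one_pos)
    have hy' : ∀ i, ‖y i‖ < 1 := fun i => by simpa using hy i (Set.mem_univ _)
    have h1 := repro μ y hy'
    have h2 := GG_sum μ y hy'
    have h3 : HasSum (fun ν : ℕ →₀ ℕ => GG n μ ν / (zz ν : ℂ) * pm ν y)
        (∑ ν ∈ T, GG n μ ν / (zz ν : ℂ) * pm ν y) := by
      refine hasSum_sum_of_ne_finset_zero fun ν hν => ?_
      rw [GG_wt n μ ν (fun h => hν (hT ν h.symm)), zero_div, zero_mul]
    rw [h2.unique h3] at h1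
    simp only [map_mul, map_sum, eval_VP, eval_PM, MvPolynomial.eval_C]
    exact h1.symm
  exact mul_left_cancel₀ (VP_ne_zero n) key

lemma repr_pm {n : ℕ} (μ : ℕ →₀ ℕ) (T : Finset (ℕ →₀ ℕ)) (hT : ∀ ν, wt ν = wt μ → ν ∈ T) (y : Fin n → ℂ) :
    pm μ y = ∑ ν ∈ T, (GG n μ ν / (zz ν : ℂ)) * pm ν y := by
  have := congrArg (MvPolynomial.eval y) (repr_PM (n := n) μ T hT)
  simpa only [map_mul, map_sum, eval_PM, MvPolynomial.eval_C] using this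

lemma pp_append {m n : ℕ} (x : Fin m → ℂ) (y : Fin n → ℂ) (k : ℕ) : pp (Fin.append x y) k = pp x k + pp y k := by
  unfold pp
  rw [Fin.sum_univ_add]
  simp

lemma root_sum (d : ℕ) (w : ℂ) : ∃ y : Fin (d+1) → ℂ, (∀ k < d, pp y k = 0) ∧ pp y d = w := by
  obtain ⟨c, hc⟩ := IsAlgClosed.exists_pow_nat_eq (w / ((d+1 : ℕ) : ℂ)) (Nat.succ_pos d)
  have hω := Complex.isPrimitiveRoot_exp (d+1) (Nat.succ_ne_zero d)
  set ω := Complex.exp (2 * Real.pi * Complex.I / ((d+1 : ℕ) : ℂ))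
  have e : ∀ k, pp (fun j : Fin (d+1) => c * ω ^ (j:ℕ)) k = c ^ (k+1) * ∑ j ∈ Finset.range (d+1), (ω ^ (k+1)) ^ j := by
    intro k
    unfold pp
    rw [Finset.mul_sum, Finset.sum_range (fun j => c ^ (k+1) * (ω ^ (k+1)) ^ j)]
    refine Finset.sum_congr rfl fun j _ => ?_
    rw [mul_pow, ← pow_mul, ← pow_mul, mul_comm (k+1)]
  refine ⟨fun j => c * ω ^ (j:ℕ), fun k hk => ?_, ?_⟩
  · rw [e]
    have h1 : ω ^ (k+1) ≠ 1 := hω.pow_ne_one_of_pos_of_lt (Nat.succ_ne_zero _) (by omega)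
    have h2 := mul_geom_sum (ω ^ (k+1)) (d+1)
    rw [← pow_mul, mul_comm (k+1), pow_mul, hω.pow_eq_one, one_pow, sub_self] at h2
    rw [(mul_eq_zero.1 h2).resolve_left (sub_ne_zero.2 h1), mul_zero]
  · rw [e]
    rw [hω.pow_eq_one, hc]
    simp only [one_pow, Finset.sum_const, Finset.card_range, nsmul_eq_mul, mul_one]
    have : ((d+1 : ℕ) : ℂ) ≠ 0 := by exact_mod_cast Nat.succ_ne_zero d
    field_simp

lemma exists_pp (d : ℕ) : ∃ N, ∀ n ≥ N, ∀ s : ℕ → ℂ, ∃ y : Fin n → ℂ, ∀ k < d, pp y k = s k := by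
  have main : ∃ N, ∀ s : ℕ → ℂ, ∃ y : Fin N → ℂ, ∀ k < d, pp y k = s k := by
    induction d with
    | zero => exact ⟨0, fun s => ⟨fun _ => 0, fun k hk => absurd hk (Nat.not_lt_zero k)⟩⟩
    | succ d ih =>
      obtain ⟨N, hN⟩ := ih
      refine ⟨N + (d+1), fun s => ?_⟩
      obtain ⟨y, hy⟩ := hN s
      obtain ⟨w, hw, hw2⟩ := root_sum d (s d - pp y d)
      refine ⟨Fin.append y w, fun k hk => ?_⟩
      rw [pp_append]
      rcases Nat.lt_succ_iff_lt_or_eq.1 hk with h | rfl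
      · rw [hy k h, hw k h, add_zero]
      · rw [hw2]; ring
  obtain ⟨N, hN⟩ := main
  refine ⟨N, fun n hn s => ?_⟩
  obtain ⟨m, rfl⟩ := Nat.exists_eq_add_of_le hn
  obtain ⟨y, hy⟩ := hN s
  refine ⟨Fin.append y (fun _ => 0), fun k hk => ?_⟩
  rw [pp_append, hy k hk]
  simp [pp]

lemma supp_lt {ν : ℕ →₀ ℕ} {k : ℕ} (hk : k ∈ ν.support) : k < wt ν := by
  have : (k + 1) * ν k ≤ wt ν :=
    Finset.single_le_sum (f := fun k => (k+1) * ν k) (fun _ _ => Nat.zero_le _) hk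
  have h2 : 1 ≤ ν k := Nat.one_le_iff_ne_zero.2 (Finsupp.mem_support_iff.1 hk)
  nlinarith

/-- exact orthogonality for large n -/
lemma GG_large (d : ℕ) : ∃ N, ∀ n ≥ N, ∀ μ, ∀ ν, wt ν < d → GG n μ ν = if μ = ν then (zz ν : ℂ) else 0 := by
  classical
  obtain ⟨N, hN⟩ := exists_pp d
  refine ⟨N, fun n hn μ ν hν => ?_⟩
  by_cases hw : wt μ = wt ν
  swap
  · rw [GG_wt n μ ν hw, if_neg (by rintro rfl; exact hw rfl)]
  have key : MvPolynomial.monomial μ (1:ℂ)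
      = ∑ η ∈ (WW d).filter (fun η => wt η = wt μ), MvPolynomial.monomial η (GG n μ η / (zz η : ℂ)) := by
    refine MvPolynomial.funext fun s => ?_
    obtain ⟨y, hy⟩ := hN n hn s
    have hm : ∀ η : ℕ →₀ ℕ, wt η < d → η.prod (fun k e => s k ^ e) = pm η y := by
      intro η hη
      unfold pm mono Finsupp.prod
      refine Finset.prod_congr rfl fun k hk => ?_
      show s k ^ _ = pp y k ^ _
      rw [hy k ((supp_lt hk).trans hη)]
    rw [map_sum, MvPolynomial.eval_monomial, one_mul, hm μ (hw ▸ hν),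
      repr_pm μ ((WW d).filter (fun η => wt η = wt μ)) ?_ y]
    · refine Finset.sum_congr rfl fun η hη => ?_
      rw [MvPolynomial.eval_monomial, hm η (mem_WW.1 (Finset.mem_filter.1 hη).1)]
    · intro η hη
      rw [Finset.mem_filter, mem_WW]
      exact ⟨by omega, hη⟩
  have h2 := congrArg (MvPolynomial.coeff ν) key
  rw [MvPolynomial.coeff_sum] at h2
  simp only [MvPolynomial.coeff_monomial] at h2
  have hmem : ν ∈ (WW d).filter (fun η => wt η = wt μ) := by
    rw [Finset.mem_filter, mem_WW]; exact ⟨hν, hw.symm⟩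
  rw [Finset.sum_ite_eq', if_pos hmem] at h2
  have hz : (zz ν : ℂ) ≠ 0 := by exact_mod_cast (zz_pos ν).ne'
  rw [eq_div_iff hz] at h2
  rw [← h2]
  split_ifs <;> simp

lemma En_cont {n : ℕ} {f : (Fin n → ℂ) → ℂ} (hf : ContinuousOn f (torus n)) :
    Integrable (fun x => VV x * (starRingEnd ℂ) (VV x) * f x) (taun n) := by
  have := continuous_VV (n := n)
  exact integrable_torus (ContinuousOn.mul (Continuous.continuousOn (by fun_prop)) hf)

lemma En_sum {n : ℕ} {ι : Type*} (s : Finset ι) (F : ι → (Fin n → ℂ) → ℂ) (hF : ∀ i ∈ s, ContinuousOn (F i) (torus n)) :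
    En n (fun x => ∑ i ∈ s, F i x) = ∑ i ∈ s, En n (F i) := by
  unfold En
  rw [← Finset.mul_sum, ← integral_finset_sum]
  · simp_rw [Finset.mul_sum]
  · intro i hi
    exact En_cont (hF i hi)

lemma En_conj (n : ℕ) (f : (Fin n → ℂ) → ℂ) : En n (fun x => (starRingEnd ℂ) (f x)) = (starRingEnd ℂ) (En n f) := by
  unfold En
  rw [map_mul, ← integral_conj]
  simp only [map_mul, map_inv₀, map_natCast, Complex.conj_conj]
  congr 2
  ext x
  ring

lemma En_sq {n : ℕ} (f : (Fin n → ℂ) → ℂ) : En n (fun x => f x * (starRingEnd ℂ) (f x))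
    = (((n.factorial : ℝ)⁻¹ * ∫ x, ‖VV x‖ ^ 2 * ‖f x‖ ^ 2 ∂(taun n) : ℝ) : ℂ) := by
  unfold En
  push_cast
  congr 1
  rw [← integral_complex_ofReal]
  congr 1
  ext x
  push_cast
  rw [Complex.mul_conj, Complex.mul_conj, Complex.normSq_eq_norm_sq, Complex.normSq_eq_norm_sq]
  push_cast
  ring

lemma En_sq_nonneg {n : ℕ} (f : (Fin n → ℂ) → ℂ) : 0 ≤ (En n (fun x => f x * (starRingEnd ℂ) (f x))).re := by
  rw [En_sq, Complex.ofReal_re]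
  exact mul_nonneg (by positivity) (integral_nonneg fun x => by positivity)

lemma bessel_T {n : ℕ} (d : ℕ) (Q : (ℕ →₀ ℕ) → ℂ) :
    (En n (fun x => (∑ ν ∈ WW d, Q ν * pm ν x) * (starRingEnd ℂ) (∑ ν ∈ WW d, Q ν * pm ν x))).re
      ≤ ∑ ν ∈ WW d, ‖Q ν‖ ^ 2 * zz ν := by
  set T := WW d
  set q : (ℕ →₀ ℕ) → ℂ := fun ν => ∑ μ ∈ T, Q μ * GG n μ ν with hq
  have hcp : ∀ ν : ℕ →₀ ℕ, Continuous (fun x : Fin n → ℂ => pm ν x) := fun ν => continuous_pm ν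
  have hqE : ∀ R : (ℕ →₀ ℕ) → ℂ, En n (fun x => (∑ ν ∈ T, Q ν * pm ν x) * (starRingEnd ℂ) (∑ ν ∈ T, R ν * pm ν x))
      = ∑ ν ∈ T, (starRingEnd ℂ) (R ν) * q ν := by
    intro R
    have e : (fun x : Fin n → ℂ => (∑ ν ∈ T, Q ν * pm ν x) * (starRingEnd ℂ) (∑ ν ∈ T, R ν * pm ν x))
        = fun x => ∑ ν ∈ T, ∑ μ ∈ T, (Q μ * (starRingEnd ℂ) (R ν)) * (pm μ x * (starRingEnd ℂ) (pm ν x)) := by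
      ext x
      rw [Finset.sum_comm, map_sum, Finset.sum_mul_sum]
      refine Finset.sum_congr rfl fun μ _ => Finset.sum_congr rfl fun ν _ => ?_
      rw [map_mul]; ring
    rw [e, En_sum]
    · refine Finset.sum_congr rfl fun ν _ => ?_
      rw [En_sum, hq, Finset.mul_sum]
      · refine Finset.sum_congr rfl fun μ _ => ?_
        rw [En_const_mul]
        unfold GG
        ring
      · intro μ _
        have h1 := hcp μ
        have h2 := hcp ν
        exact Continuous.continuousOn (by fun_prop)
    · intro ν _
      exact Continuous.continuousOn (by fun_prop)
  have hrep : ∀ x : Fin n → ℂ, ∑ ν ∈ T, Q ν * pm ν x = ∑ ν ∈ T, (q ν / (zz ν : ℂ)) * pm ν x := by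
    intro x
    have h1 : ∀ μ ∈ T, Q μ * pm μ x = ∑ ν ∈ T, Q μ * GG n μ ν / (zz ν : ℂ) * pm ν x := by
      intro μ hμ
      rw [repr_pm μ T (fun ν hν => mem_WW.2 (hν ▸ mem_WW.1 hμ)) x, Finset.mul_sum]
      refine Finset.sum_congr rfl fun ν _ => ?_
      ring
    rw [Finset.sum_congr rfl h1, Finset.sum_comm]
    refine Finset.sum_congr rfl fun ν _ => ?_
    rw [hq, Finset.sum_div, Finset.sum_mul]
  have hX1 := hqE Q
  have hX2 := hqE (fun ν => q ν / (zz ν : ℂ))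
  simp_rw [← hrep] at hX2
  set X := En n (fun x => (∑ ν ∈ T, Q ν * pm ν x) * (starRingEnd ℂ) (∑ ν ∈ T, Q ν * pm ν x))
  have h0 : 0 ≤ ∑ ν ∈ T, ‖q ν - zz ν * Q ν‖ ^ 2 / zz ν :=
    Finset.sum_nonneg fun ν _ => div_nonneg (by positivity) (zz_pos ν).le
  have h1 : ∀ ν, ‖q ν - zz ν * Q ν‖ ^ 2 / zz ν =
      ((starRingEnd ℂ) (q ν / (zz ν : ℂ)) * q ν).re - 2 * ((starRingEnd ℂ) (Q ν) * q ν).re + ‖Q ν‖ ^ 2 * zz ν := by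
    intro ν
    have hz := (zz_pos ν).ne'
    rw [← Complex.normSq_eq_norm_sq, ← Complex.normSq_eq_norm_sq, Complex.normSq_apply, Complex.normSq_apply]
    have e : (starRingEnd ℂ) (q ν / (zz ν : ℂ)) * q ν = ((((q ν).re ^ 2 + (q ν).im ^ 2) / zz ν : ℝ) : ℂ) := by
      rw [map_div₀, Complex.conj_ofReal, div_mul_eq_mul_div, mul_comm, Complex.mul_conj, Complex.normSq_apply]
      push_cast
      ring
    rw [e]
    simp only [Complex.ofReal_re, Complex.sub_re, Complex.sub_im, Complex.mul_re, Complex.mul_im, Complex.ofReal_im, Complex.conj_re, Complex.conj_im]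
    field_simp
    ring
  rw [Finset.sum_congr rfl fun ν _ => h1 ν, Finset.sum_add_distrib, Finset.sum_sub_distrib, ← Finset.mul_sum,
    ← Complex.re_sum, ← Complex.re_sum, ← hX1, ← hX2] at h0
  linarith

lemma exists_WW (S : Finset (ℕ →₀ ℕ)) : ∃ d, S ⊆ WW d :=
  ⟨S.sup wt + 1, fun ν hν => mem_WW.2 (Nat.lt_succ_of_le (Finset.le_sup hν))⟩

lemma bessel {n : ℕ} (S : Finset (ℕ →₀ ℕ)) (Q : (ℕ →₀ ℕ) → ℂ) :
    (En n (fun x => (∑ ν ∈ S, Q ν * pm ν x) * (starRingEnd ℂ) (∑ ν ∈ S, Q ν * pm ν x))).re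
      ≤ ∑ ν ∈ S, ‖Q ν‖ ^ 2 * zz ν := by
  classical
  obtain ⟨d, hd⟩ := exists_WW S
  have h := bessel_T (n := n) d (fun ν => if ν ∈ S then Q ν else 0)
  have e1 : ∀ x : Fin n → ℂ, ∑ ν ∈ WW d, (if ν ∈ S then Q ν else 0) * pm ν x = ∑ ν ∈ S, Q ν * pm ν x := by
    intro x
    rw [← Finset.sum_subset hd]
    · exact Finset.sum_congr rfl fun ν hν => by rw [if_pos hν]
    · intro ν _ hν; rw [if_neg hν, zero_mul]
  have e2 : ∑ ν ∈ WW d, ‖if ν ∈ S then Q ν else 0‖ ^ 2 * zz ν = ∑ ν ∈ S, ‖Q ν‖ ^ 2 * zz ν := by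
    rw [← Finset.sum_subset hd]
    · exact Finset.sum_congr rfl fun ν hν => by rw [if_pos hν]
    · intro ν _ hν; rw [if_neg hν]; simp
  simp_rw [e1] at h
  rwa [e2] at h

end Grun

namespace Grun

noncomputable def nuu (η : (ℕ × ℕ) →₀ ℕ) : ℕ →₀ ℕ := η.mapDomain Prod.fst + η.mapDomain Prod.snd

noncomputable def tt (A : ℕ → ℕ → ℂ) (p : ℕ × ℕ) : ℂ := -(1/2) * A p.1 p.2

noncomputable def cc (A : ℕ → ℕ → ℂ) (ν : ℕ →₀ ℕ) : ℂ :=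
  ∑' η : {η : (ℕ × ℕ) →₀ ℕ // nuu η = ν}, mono (tt A) η.1 / (fac η.1 : ℂ)

noncomputable def FF (A : ℕ → ℕ → ℂ) (s : ℕ → ℂ) : ℂ := Complex.exp (-(1/2) * ∑' p : ℕ × ℕ, A p.1 p.2 * s p.1 * s p.2)

lemma mono_nuu (s : ℕ → ℂ) (η : (ℕ × ℕ) →₀ ℕ) : mono s (nuu η) = mono (fun p => s p.1 * s p.2) η := by
  unfold mono nuu
  rw [Finsupp.prod_add_index' (by simp) (by intros; rw [pow_add]),
    Finsupp.prod_mapDomain_index (by simp) (by intros; rw [pow_add]),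
    Finsupp.prod_mapDomain_index (by simp) (by intros; rw [pow_add])]
  unfold Finsupp.prod
  rw [← Finset.prod_mul_distrib]
  simp [mul_pow]

lemma mono_mul {ι : Type*} (s t : ι → ℂ) (ν : ι →₀ ℕ) : mono (fun k => s k * t k) ν = mono s ν * mono t ν := by
  unfold mono Finsupp.prod
  rw [← Finset.prod_mul_distrib]
  simp [mul_pow]

variable {A : ℕ → ℕ → ℂ}

lemma summable_ts (hA : Summable fun p : ℕ × ℕ => ‖A p.1 p.2‖) {s : ℕ → ℂ} {R : ℝ} (hs : ∀ k, ‖s k‖ ≤ R) :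
    Summable fun p : ℕ × ℕ => ‖tt A p * (s p.1 * s p.2)‖ := by
  refine Summable.of_nonneg_of_le (fun _ => norm_nonneg _) (fun p => ?_) (hA.mul_right (1/2 * (R * R)))
  have hR : 0 ≤ R := (norm_nonneg _).trans (hs 0)
  rw [norm_mul, norm_mul]
  unfold tt
  rw [norm_mul]
  have : ‖(-(1/2) : ℂ)‖ = 1/2 := by norm_num
  rw [this]
  have h3 : ‖s p.1‖ * ‖s p.2‖ ≤ R * R := mul_le_mul (hs _) (hs _) (norm_nonneg _) hR
  nlinarith [mul_le_mul_of_nonneg_left h3 (norm_nonneg (A p.1 p.2))]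

lemma mono_ts (s : ℕ → ℂ) (η : (ℕ × ℕ) →₀ ℕ) : mono (fun p => tt A p * (s p.1 * s p.2)) η / (fac η : ℂ)
    = mono (tt A) η / (fac η : ℂ) * mono s (nuu η) := by
  rw [mono_nuu, mono_mul (tt A) (fun p => s p.1 * s p.2), mul_div_right_comm]

lemma summable_eta (hA : Summable fun p : ℕ × ℕ => ‖A p.1 p.2‖) {s : ℕ → ℂ} {R : ℝ} (hs : ∀ k, ‖s k‖ ≤ R) :
    Summable fun η : (ℕ × ℕ) →₀ ℕ => ‖mono (tt A) η / (fac η : ℂ) * mono s (nuu η)‖ := by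
  have := summable_mono _ (summable_ts hA hs)
  simp_rw [mono_ts] at this
  exact this

lemma hasSum_eta (hA : Summable fun p : ℕ × ℕ => ‖A p.1 p.2‖) {s : ℕ → ℂ} {R : ℝ} (hs : ∀ k, ‖s k‖ ≤ R) :
    HasSum (fun η : (ℕ × ℕ) →₀ ℕ => mono (tt A) η / (fac η : ℂ) * mono s (nuu η)) (FF A s) := by
  have := hasSum_mono _ (summable_ts hA hs)
  simp_rw [mono_ts] at this
  convert! this using 1
  unfold FF
  congr 1
  rw [← tsum_mul_left]
  unfold tt
  congr 1
  ext p
  ring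

lemma mono_one {ι : Type*} (ν : ι →₀ ℕ) : mono (fun _ => (1:ℂ)) ν = 1 := by simp [mono, Finsupp.prod]

lemma summable_fib (hA : Summable fun p : ℕ × ℕ => ‖A p.1 p.2‖) (ν : ℕ →₀ ℕ) :
    Summable fun η : {η : (ℕ × ℕ) →₀ ℕ // nuu η = ν} => ‖mono (tt A) η.1 / (fac η.1 : ℂ)‖ := by
  have := summable_eta hA (s := fun _ => 1) (R := 1) (by simp)
  simp_rw [mono_one, mul_one] at this
  exact this.subtype _

lemma FF_hasSum (hA : Summable fun p : ℕ × ℕ => ‖A p.1 p.2‖) {s : ℕ → ℂ} {R : ℝ} (hs : ∀ k, ‖s k‖ ≤ R) :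
    HasSum (fun ν => cc A ν * mono s ν) (FF A s) := by
  have h := (Equiv.sigmaFiberEquiv nuu).hasSum_iff.2 (hasSum_eta hA hs)
  refine h.sigma fun ν => ?_
  have h1 := (summable_fib hA ν).of_norm.hasSum.mul_right (mono s ν)
  convert! h1 using 2 with η
  simp [η.2]

lemma cc_summable (hA : Summable fun p : ℕ × ℕ => ‖A p.1 p.2‖) (s : ℕ → ℂ) {R : ℝ} (hs : ∀ k, ‖s k‖ ≤ R) :
    Summable fun ν => ‖cc A ν * mono s ν‖ := by
  have h := ((Equiv.sigmaFiberEquiv nuu).summable_iff.2 (summable_eta hA hs)).sigma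
  refine Summable.of_nonneg_of_le (fun _ => norm_nonneg _) (fun ν => ?_) h
  have h1 := (summable_fib hA ν).of_norm.hasSum.mul_right (mono s ν)
  unfold cc
  rw [← h1.tsum_eq]
  have h2 : Summable fun η : {η : (ℕ × ℕ) →₀ ℕ // nuu η = ν} => ‖mono (tt A) η.1 / (fac η.1 : ℂ) * mono s ν‖ := by
    simp_rw [norm_mul]
    exact (summable_fib hA ν).mul_right _
  refine (norm_tsum_le_tsum_norm h2).trans (le_of_eq ?_)
  refine tsum_congr fun η => ?_
  simp [η.2]

noncomputable def bb (A : ℕ → ℕ → ℂ) (n : ℕ) (ν : ℕ →₀ ℕ) : ℝ := ‖cc A ν * mono (fun _ => (n:ℂ)) ν‖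

lemma bb_summable (hA : Summable fun p : ℕ × ℕ => ‖A p.1 p.2‖) (n : ℕ) : Summable (bb A n) :=
  cc_summable hA _ (R := n) (by simp)

lemma bb_bound {n : ℕ} (ν : ℕ →₀ ℕ) (x : Fin n → ℂ) (hx : x ∈ torus n) : ‖cc A ν * pm ν x‖ ≤ bb A n ν := by
  unfold bb
  rw [norm_mul, norm_mul]
  exact mul_le_mul_of_nonneg_left (norm_pm_le ν x hx) (norm_nonneg _)

lemma FFpp_hasSum (hA : Summable fun p : ℕ × ℕ => ‖A p.1 p.2‖) {n : ℕ} (x : Fin n → ℂ) (hx : x ∈ torus n) :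
    HasSum (fun ν => cc A ν * pm ν x) (FF A (pp x)) := FF_hasSum hA (norm_pp_le x hx)

lemma FFpp_cont (hA : Summable fun p : ℕ × ℕ => ‖A p.1 p.2‖) {n : ℕ} :
    ContinuousOn (fun x : Fin n → ℂ => FF A (pp x)) (torus n) := by
  have : ContinuousOn (fun x : Fin n → ℂ => ∑' ν, cc A ν * pm ν x) (torus n) := by
    refine continuousOn_tsum (u := bb A n) ?_ (bb_summable hA n) ?_
    · intro ν
      have := continuous_pm (n := n) ν
      exact Continuous.continuousOn (by fun_prop)
    · intro ν x hx
      exact bb_bound ν x hx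
  refine this.congr fun x hx => ?_
  exact (FFpp_hasSum hA x hx).tsum_eq.symm

noncomputable def ZZ (A : ℕ → ℕ → ℂ) (n : ℕ) : ℝ :=
  (En n (fun x => FF A (pp x) * (starRingEnd ℂ) (FF A (pp x)))).re

noncomputable def xx (A : ℕ → ℕ → ℂ) (ν : ℕ →₀ ℕ) : ℝ := ‖cc A ν‖ ^ 2 * zz ν

lemma xx_nonneg (ν : ℕ →₀ ℕ) : 0 ≤ xx A ν := mul_nonneg (by positivity) (zz_pos ν).le

lemma ZZ_upper (hA : Summable fun p : ℕ × ℕ => ‖A p.1 p.2‖) (n : ℕ) (X : ℝ)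
    (hX : ∀ S : Finset (ℕ →₀ ℕ), ∑ ν ∈ S, xx A ν ≤ X) : ZZ A n ≤ X := by
  have hV := continuous_VV (n := n)
  have hlim : Tendsto (fun S : Finset (ℕ →₀ ℕ) =>
      (En n (fun x => (∑ ν ∈ S, cc A ν * pm ν x) * (starRingEnd ℂ) (∑ ν ∈ S, cc A ν * pm ν x))).re) atTop (nhds (ZZ A n)) := by
    refine (Complex.continuous_re.tendsto _).comp ?_
    unfold En
    refine Tendsto.const_mul _ ?_
    refine tendsto_integral_filter_of_dominated_convergence
      (fun x => ‖VV x * (starRingEnd ℂ) (VV x)‖ * ((∑' ν, bb A n ν) * (∑' ν, bb A n ν))) ?_ ?_ ?_ ?_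
    · refine Eventually.of_forall fun S => ?_
      have := fun ν => continuous_pm (n := n) ν
      exact Continuous.aestronglyMeasurable (by fun_prop)
    · refine Eventually.of_forall fun S => ?_
      filter_upwards [taun_ae n] with x hx
      rw [norm_mul, norm_mul (∑ ν ∈ S, cc A ν * pm ν x), RCLike.norm_conj]
      have : ‖∑ ν ∈ S, cc A ν * pm ν x‖ ≤ ∑' ν, bb A n ν := by
        refine (norm_sum_le _ _).trans ?_
        refine (Finset.sum_le_sum fun ν _ => bb_bound ν x hx).trans ?_
        exact (bb_summable hA n).sum_le_tsum _ (fun _ _ => norm_nonneg _)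
      exact mul_le_mul_of_nonneg_left (mul_le_mul this this (norm_nonneg _) ((norm_nonneg _).trans this)) (norm_nonneg _)
    · refine Integrable.mul_const (integrable_torus (Continuous.continuousOn (by fun_prop))) _
    · filter_upwards [taun_ae n] with x hx
      have h : Tendsto (fun S : Finset (ℕ →₀ ℕ) => ∑ ν ∈ S, cc A ν * pm ν x) atTop (nhds (FF A (pp x))) := by
        simpa [HasSum] using FFpp_hasSum hA x hx
      exact Tendsto.const_mul _ (Filter.Tendsto.mul h ((Complex.continuous_conj.tendsto _).comp h))
  refine le_of_tendsto hlim (Eventually.of_forall fun S => ?_)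
  exact (bessel S _).trans (hX S)

lemma ZZ_lower (hA : Summable fun p : ℕ × ℕ => ‖A p.1 p.2‖) (S : Finset (ℕ →₀ ℕ)) :
    ∃ N, ∀ n ≥ N, ∑ ν ∈ S, xx A ν ≤ ZZ A n := by
  classical
  obtain ⟨d, hd⟩ := exists_WW S
  obtain ⟨N, hN⟩ := GG_large d
  refine ⟨N, fun n hn => ?_⟩
  have hc := fun ν => continuous_pm (n := n) ν
  have h1 : ∀ ν ∈ S, En n (fun x => FF A (pp x) * (starRingEnd ℂ) (pm ν x)) = cc A ν * (zz ν : ℂ) := by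
    intro ν hν
    have h := En_hasSum (n := n) (fun μ x => cc A μ * pm μ x * (starRingEnd ℂ) (pm ν x))
      (fun x => FF A (pp x) * (starRingEnd ℂ) (pm ν x)) (fun μ => bb A n μ * ‖mono (fun _ => (n:ℂ)) ν‖)
      ((bb_summable hA n).mul_right _) ?_ ?_ ?_
    · refine h.unique ?_
      have e : (fun μ => En n (fun x => cc A μ * pm μ x * (starRingEnd ℂ) (pm ν x)))
          = fun μ => if μ = ν then cc A ν * (zz ν : ℂ) else 0 := by
        ext μ
        simp_rw [mul_assoc]
        rw [En_const_mul]
        have := hN n hn μ ν (mem_WW.1 (hd hν))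
        unfold GG at this
        rw [this]
        split_ifs with h
        · rw [h]
        · simp
      rw [e]
      exact hasSum_ite_eq ν _
    · intro μ
      exact Continuous.continuousOn (by fun_prop)
    · intro μ x hx
      rw [norm_mul, RCLike.norm_conj]
      exact mul_le_mul (bb_bound μ x hx) (norm_pm_le ν x hx) (norm_nonneg _) (norm_nonneg _)
    · intro x hx
      exact (FFpp_hasSum hA x hx).mul_right _
  have hF := FFpp_cont hA (n := n)
  set Q : (Fin n → ℂ) → ℂ := fun x => ∑ ν ∈ S, cc A ν * pm ν x with hQ
  have hQc : Continuous Q := by fun_prop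
  set F : (Fin n → ℂ) → ℂ := fun x => FF A (pp x) with hFd
  have hFQ : En n (fun x => F x * (starRingEnd ℂ) (Q x)) = ((∑ ν ∈ S, xx A ν : ℝ) : ℂ) := by
    have e : (fun x => F x * (starRingEnd ℂ) (Q x))
        = fun x => ∑ ν ∈ S, (starRingEnd ℂ) (cc A ν) * (F x * (starRingEnd ℂ) (pm ν x)) := by
      ext x
      simp only [hQ, map_sum, map_mul, Finset.mul_sum]
      refine Finset.sum_congr rfl fun ν _ => ?_
      ring
    rw [e, En_sum]
    · push_cast
      refine Finset.sum_congr rfl fun ν hν => ?_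
      rw [En_const_mul, h1 ν hν, ← mul_assoc, mul_comm ((starRingEnd ℂ) _), Complex.mul_conj, Complex.normSq_eq_norm_sq]
      simp [xx]
    · intro ν _
      exact continuousOn_const.mul (hF.mul (Continuous.continuousOn (by fun_prop)))
  have hQF : En n (fun x => Q x * (starRingEnd ℂ) (F x)) = ((∑ ν ∈ S, xx A ν : ℝ) : ℂ) := by
    have := En_conj n (fun x => F x * (starRingEnd ℂ) (Q x))
    rw [hFQ, Complex.conj_ofReal] at this
    rw [← this]
    congr 1
    ext x
    simp [mul_comm]
  have hB := bessel (n := n) S (cc A)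
  have h0 := En_sq_nonneg (n := n) (fun x => F x - Q x)
  have hexp : En n (fun x => (F x - Q x) * (starRingEnd ℂ) (F x - Q x))
      = En n (fun x => F x * (starRingEnd ℂ) (F x)) + (-1) * En n (fun x => F x * (starRingEnd ℂ) (Q x))
        + (-1) * En n (fun x => Q x * (starRingEnd ℂ) (F x)) + En n (fun x => Q x * (starRingEnd ℂ) (Q x)) := by
    have hcF : ContinuousOn (fun x => (starRingEnd ℂ) (F x)) (torus n) := Complex.continuous_conj.comp_continuousOn hF
    have hcQ : ContinuousOn (fun x => (starRingEnd ℂ) (Q x)) (torus n) := Continuous.continuousOn (by fun_prop)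
    have := En_sum (n := n) (Finset.univ : Finset (Fin 4))
      ![fun x => F x * (starRingEnd ℂ) (F x), fun x => (-1) * (F x * (starRingEnd ℂ) (Q x)),
        fun x => (-1) * (Q x * (starRingEnd ℂ) (F x)), fun x => Q x * (starRingEnd ℂ) (Q x)] ?_
    · simp only [Fin.sum_univ_four, Matrix.cons_val_zero, Matrix.cons_val_one, Matrix.cons_val] at this
      rw [← En_const_mul, ← En_const_mul, ← this]
      congr 1
      ext x
      rw [map_sub]; ring
    · intro i _
      fin_cases i
      · exact hF.mul hcF
      · exact continuousOn_const.mul (hF.mul hcQ)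
      · exact continuousOn_const.mul (hQc.continuousOn.mul hcF)
      · exact hQc.continuousOn.mul hcQ
  rw [hexp, hFQ, hQF] at h0
  simp only [Complex.add_re, Complex.mul_re, Complex.ofReal_re, Complex.neg_re, Complex.one_re, Complex.neg_im, Complex.one_im,
    Complex.ofReal_im] at h0
  change (En n (fun x => Q x * (starRingEnd ℂ) (Q x))).re ≤ ∑ ν ∈ S, xx A ν at hB
  change ∑ ν ∈ S, xx A ν ≤ (En n (fun x => F x * (starRingEnd ℂ) (F x))).re
  linarith

/-- the limit theorem, given boundedness -/
theorem ZZ_limit (hA : Summable fun p : ℕ × ℕ => ‖A p.1 p.2‖) (C : ℝ) (hC : ∀ n, ZZ A n ≤ C) :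
    Summable (xx A) ∧ Tendsto (ZZ A) atTop (nhds (∑' ν, xx A ν)) := by
  have hs : Summable (xx A) := by
    refine summable_of_sum_le (c := C) xx_nonneg fun S => ?_
    obtain ⟨N, hN⟩ := ZZ_lower hA S
    exact (hN N le_rfl).trans (hC N)
  refine ⟨hs, ?_⟩
  have hup : ∀ n, ZZ A n ≤ ∑' ν, xx A ν := fun n => ZZ_upper hA n _ fun S => hs.sum_le_tsum _ (fun _ _ => xx_nonneg _)
  rw [tendsto_order]
  refine ⟨fun b hb => ?_, fun b hb => Eventually.of_forall fun n => (hup n).trans_lt hb⟩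
  obtain ⟨S, hS⟩ := ((tendsto_order.1 hs.hasSum).1 b hb).exists
  obtain ⟨N, hN⟩ := ZZ_lower hA S
  filter_upwards [eventually_ge_atTop N] with n hn
  exact hS.trans_le (hN n hn)

end Grun

namespace Grun

lemma lintegral_fin_prod {E : Type*} [MeasureSpace E] [SigmaFinite (volume : Measure E)] :
    ∀ (n : ℕ) (f : Fin n → E → ENNReal), (∀ i, Measurable (f i)) →
    ∫⁻ x : Fin n → E, ∏ i, f i (x i) = ∏ i, ∫⁻ x, f i x := by
  intro n
  induction n with
  | zero => intro f _; simp [volume_pi]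
  | succ n ih =>
    intro f hf
    have h := (volume_preserving_piFinSuccAbove (fun _ : Fin (n+1) => E) 0).symm
    rw [← h.lintegral_comp_emb (MeasurableEquiv.measurableEmbedding _)]
    simp_rw [Fin.prod_univ_succ]
    rw [← ih _ (fun i => hf i.succ), ← lintegral_prod_mul (hf 0).aemeasurable (Finset.measurable_prod _ fun i _ => (hf i.succ).comp (measurable_pi_apply i)).aemeasurable]
    rfl

lemma lintegral_pi_prod {ι E : Type*} [Fintype ι] [MeasureSpace E] [SigmaFinite (volume : Measure E)]
    (f : ι → E → ENNReal) (hf : ∀ i, Measurable (f i)) :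
    ∫⁻ x : ι → E, ∏ i, f i (x i) = ∏ i, ∫⁻ x, f i x := by
  let e := (Fintype.equivFin ι).symm
  rw [← (volume_measurePreserving_piCongrLeft (fun _ : ι => E) e).lintegral_comp_emb (MeasurableEquiv.measurableEmbedding _),
    ← e.prod_comp, ← lintegral_fin_prod _ _ (fun i => hf (e i))]
  congr 1
  ext x
  rw [← e.prod_comp]
  refine Finset.prod_congr rfl fun i _ => ?_
  rw [MeasurableEquiv.piCongrLeft_apply_apply]

lemma lintegral_gauss_pos (b : ℝ) : ∫⁻ x : ℝ, ENNReal.ofReal (Real.exp (-b * x ^ 2)) ≠ 0 := by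
  intro h
  rw [lintegral_eq_zero_iff (by fun_prop)] at h
  have h2 : ∀ᵐ x : ℝ, False := by
    filter_upwards [h] with x hx
    simp at hx
    exact absurd hx (not_le.2 (Real.exp_pos _))
  rw [Filter.eventually_false_iff_eq_bot, ae_eq_bot] at h2
  exact (NeZero.ne (volume : Measure ℝ)) h2

lemma lintegral_gauss_fin (b : ℝ) (h : ∫⁻ x : ℝ, ENNReal.ofReal (Real.exp (-b * x ^ 2)) ≠ ⊤) :
    0 < b ∧ ∫⁻ x : ℝ, ENNReal.ofReal (Real.exp (-b * x ^ 2)) = ENNReal.ofReal (Real.sqrt (Real.pi / b)) := by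
  have hi : Integrable (fun x : ℝ => Real.exp (-b * x ^ 2)) :=
    ⟨by fun_prop, by
      rw [hasFiniteIntegral_iff_ofReal (Eventually.of_forall fun _ => (Real.exp_pos _).le)]
      exact lt_top_iff_ne_top.2 h⟩
  refine ⟨integrable_exp_neg_mul_sq_iff.1 hi, ?_⟩
  rw [← integral_gaussian, ofReal_integral_eq_lintegral_ofReal hi (Eventually.of_forall fun _ => (Real.exp_pos _).le)]

lemma gauss_diag {ι : Type*} [Fintype ι] [DecidableEq ι] (M : Matrix ι ι ℝ) (hM : M.IsHermitian)
    (hfin : ∫⁻ v : ι → ℝ, ENNReal.ofReal (Real.exp (-(v ⬝ᵥ M *ᵥ v))) ≠ ⊤) :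
    0 < M.det ∧ ∫⁻ v : ι → ℝ, ENNReal.ofReal (Real.exp (-(v ⬝ᵥ M *ᵥ v)))
      = ENNReal.ofReal (Real.sqrt Real.pi ^ (Fintype.card ι) * (Real.sqrt M.det)⁻¹) := by
  set U : Matrix ι ι ℝ := (hM.eigenvectorUnitary : Matrix ι ι ℝ) with hU
  have hUU : Uᵀ * U = 1 := by
    have := hM.eigenvectorUnitary.2
    have := (Matrix.mem_unitaryGroup_iff'.1 this)
    simpa [Matrix.star_eq_conjTranspose] using this
  have hdet : |U.det| = 1 := by
    have := congrArg Matrix.det hUU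
    rw [Matrix.det_mul, Matrix.det_transpose, Matrix.det_one] at this
    rw [← abs_one, ← sq_eq_sq_iff_abs_eq_abs]; nlinarith
  have hdet0 : U.det ≠ 0 := by intro h; rw [h] at hdet; simp at hdet
  have hmap := Real.map_matrix_volume_pi_eq_smul_volume_pi hdet0
  rw [abs_inv, hdet] at hmap
  simp only [inv_one, ENNReal.ofReal_one, one_smul] at hmap
  have hspec : M = U * diagonal hM.eigenvalues * Uᵀ := by
    have := hM.spectral_theorem
    rw [Unitary.conjStarAlgAut_apply] at this
    simpa [Matrix.star_eq_conjTranspose] using this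
  have hq : ∀ w : ι → ℝ, (U *ᵥ w) ⬝ᵥ M *ᵥ (U *ᵥ w) = ∑ i, hM.eigenvalues i * w i ^ 2 := by
    intro w
    have e1 : M *ᵥ (U *ᵥ w) = U *ᵥ (diagonal hM.eigenvalues *ᵥ w) := by
      have : M * U = U * diagonal hM.eigenvalues := by
        calc M * U = U * diagonal hM.eigenvalues * Uᵀ * U := by rw [← hspec]
          _ = _ := by rw [Matrix.mul_assoc, hUU, Matrix.mul_one]
      rw [Matrix.mulVec_mulVec, this, ← Matrix.mulVec_mulVec]
    rw [e1, Matrix.dotProduct_mulVec, Matrix.vecMul_mulVec, hUU, Matrix.vecMul_one]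
    simp only [dotProduct, Matrix.mulVec_diagonal]
    exact Finset.sum_congr rfl fun i _ => by ring
  have key : ∫⁻ v : ι → ℝ, ENNReal.ofReal (Real.exp (-(v ⬝ᵥ M *ᵥ v)))
      = ∏ i, ∫⁻ x : ℝ, ENNReal.ofReal (Real.exp (-(hM.eigenvalues i) * x ^ 2)) := by
    rw [← lintegral_pi_prod _ (fun i => by fun_prop)]
    conv_lhs => rw [← hmap]
    rw [lintegral_map]
    · refine lintegral_congr fun w => ?_
      rw [Matrix.toLin'_apply, hq, ← ENNReal.ofReal_prod_of_nonneg (fun _ _ => (Real.exp_pos _).le), ← Real.exp_sum,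
        ← Finset.sum_neg_distrib]
      simp only [neg_mul]
    · simp only [dotProduct, Matrix.mulVec]
      fun_prop
    · exact (LinearMap.continuous_of_finiteDimensional _).measurable
  rw [key] at hfin ⊢
  have hi : ∀ i, ∫⁻ x : ℝ, ENNReal.ofReal (Real.exp (-(hM.eigenvalues i) * x ^ 2)) ≠ ⊤ := by
    intro i hi
    refine hfin ?_
    rw [← Finset.mul_prod_erase _ _ (Finset.mem_univ i), hi, ENNReal.top_mul]
    exact Finset.prod_ne_zero_iff.2 fun j _ => lintegral_gauss_pos _
  have hpos : ∀ i, 0 < hM.eigenvalues i := fun i => (lintegral_gauss_fin _ (hi i)).1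
  have hd : M.det = ∏ i, hM.eigenvalues i := by simpa using hM.det_eq_prod_eigenvalues
  refine ⟨by rw [hd]; exact Finset.prod_pos fun i _ => hpos i, ?_⟩
  rw [Finset.prod_congr rfl fun i _ => (lintegral_gauss_fin _ (hi i)).2, ← ENNReal.ofReal_prod_of_nonneg (fun _ _ => Real.sqrt_nonneg _)]
  congr 1
  rw [hd, Real.sqrt_prod _ fun i _ => (hpos i).le, ← Finset.prod_inv_distrib, ← Finset.card_univ, ← Finset.prod_const, ← Finset.prod_mul_distrib]
  refine Finset.prod_congr rfl fun i _ => ?_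
  rw [Real.sqrt_div Real.pi_pos.le, div_eq_mul_inv]

/-- change of variables between complex and real coordinates -/
lemma lintegral_complex_real (m : ℕ) (f : (Fin m ⊕ Fin m → ℝ) → ENNReal) :
    ∫⁻ ξ : Fin m → ℂ, f (Sum.elim (fun k => (ξ k).re) (fun k => (ξ k).im)) = ∫⁻ v, f v := by
  have h1 := volume_preserving_pi (fun _ : Fin m => Complex.volume_preserving_equiv_real_prod)
  have h2 := volume_measurePreserving_arrowProdEquivProdArrow ℝ ℝ (Fin m)
  have h3 := (volume_measurePreserving_sumPiEquivProdPi (fun _ : Fin m ⊕ Fin m => ℝ)).symm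
  have e1 : MeasurableEmbedding (fun (a : Fin m → ℂ) i => Complex.measurableEquivRealProd (a i)) :=
    (MeasurableEquiv.piCongrRight fun _ : Fin m => Complex.measurableEquivRealProd).measurableEmbedding
  rw [← h3.lintegral_comp_emb (MeasurableEquiv.measurableEmbedding _), ← h2.lintegral_comp_emb (MeasurableEquiv.measurableEmbedding _),
    ← h1.lintegral_comp_emb e1]
  refine lintegral_congr fun ξ => ?_
  congr 1

end Grun

namespace Grun

lemma hasSum_mul_conj {ι : Type*} (f : ι → ℂ) (a : ℂ) (h : Summable fun i => ‖f i‖) (hf : HasSum f a) :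
    HasSum (fun p : ι × ι => f p.1 * (starRingEnd ℂ) (f p.2)) (a * (starRingEnd ℂ) a) := by
  have h4 : HasSum (fun i => (starRingEnd ℂ) (f i)) ((starRingEnd ℂ) a) :=
    hf.map (starRingEnd ℂ) Complex.continuous_conj
  have h5 : Summable fun i => ‖(starRingEnd ℂ) (f i)‖ := by
    simpa only [RCLike.norm_conj] using h
  obtain ⟨g, hg⟩ : ∃ g : ι → ℂ, g = fun i => (starRingEnd ℂ) (f i) := ⟨_, rfl⟩
  have hg' : ∀ i, (starRingEnd ℂ) (f i) = g i := fun i => by rw [hg]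
  simp only [hg'] at h4 h5 ⊢
  have h6 : Summable fun p : ι × ι => f p.1 * g p.2 := summable_mul_of_summable_norm h h5
  exact hf.mul h4 h6

lemma parseval_gen {m : ℕ} {ι : Type*} [Countable ι] [DecidableEq ι] (d : ι → ℂ) (hd : Summable fun i => ‖d i‖)
    (e : ι → (Fin m → ℂ) → ℂ) (he : ∀ i, Continuous (e i)) (heb : ∀ i, ∀ u ∈ torus m, ‖e i u‖ ≤ 1)
    (horth : ∀ i j, d i * (starRingEnd ℂ) (d j) * ∫ u, e i u * (starRingEnd ℂ) (e j u) ∂(taun m)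
      = if i = j then ((‖d i‖ ^ 2 : ℝ) : ℂ) else 0)
    (F : (Fin m → ℂ) → ℂ) (hF : Continuous F) (hs : ∀ u ∈ torus m, HasSum (fun i => d i * e i u) (F u)) :
    ∫⁻ u, ENNReal.ofReal (‖F u‖ ^ 2) ∂(taun m) = ∑' i, ENNReal.ofReal (‖d i‖ ^ 2) := by
  have h2 : HasSum (fun p : ι × ι => ∫ u, (d p.1 * e p.1 u) * (starRingEnd ℂ) (d p.2 * e p.2 u) ∂(taun m))
      (∫ u, F u * (starRingEnd ℂ) (F u) ∂(taun m)) := by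
    have hsum : Summable fun p : ι × ι => ‖d p.1‖ * ‖d p.2‖ := hd.mul_of_nonneg hd (fun _ => norm_nonneg _) (fun _ => norm_nonneg _)
    refine hasSum_integral_of_dominated_convergence (fun p _ => ‖d p.1‖ * ‖d p.2‖) ?_ ?_ ?_ ?_ ?_
    · intro p
      have h1 := he p.1
      have h2 := he p.2
      exact Continuous.aestronglyMeasurable (by fun_prop)
    · intro p
      filter_upwards [taun_ae m] with u hu
      rw [norm_mul, norm_mul, RCLike.norm_conj, norm_mul]
      have h1 := heb p.1 u hu
      have h2 := heb p.2 u hu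
      have : ‖e p.1 u‖ * ‖e p.2 u‖ ≤ 1 := mul_le_one₀ h1 (norm_nonneg _) h2
      calc _ = (‖d p.1‖ * ‖d p.2‖) * (‖e p.1 u‖ * ‖e p.2 u‖) := by ring
        _ ≤ (‖d p.1‖ * ‖d p.2‖) * 1 := by gcongr
        _ = _ := mul_one _
    · exact Eventually.of_forall fun _ => hsum
    · exact integrable_const _
    · filter_upwards [taun_ae m] with u hu
      have h1 : Summable fun i => ‖d i * e i u‖ := by
        refine Summable.of_nonneg_of_le (fun _ => norm_nonneg _) (fun i => ?_) hd
        rw [norm_mul]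
        exact mul_le_of_le_one_right (norm_nonneg _) (heb i u hu)
      have h3 := hs u hu
      exact hasSum_mul_conj (fun i => d i * e i u) (F u) h1 h3
  have h3 : ∀ p : ι × ι, ∫ u, (d p.1 * e p.1 u) * (starRingEnd ℂ) (d p.2 * e p.2 u) ∂(taun m)
      = if p.1 = p.2 then ((‖d p.1‖ ^ 2 : ℝ) : ℂ) else 0 := by
    intro p
    rw [← horth, ← integral_const_mul]
    congr 1
    ext u
    rw [map_mul]; ring
  simp_rw [h3] at h2
  have hinj : Function.Injective (fun i : ι => (i, i)) := fun i j h => (Prod.ext_iff.1 h).1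
  have h4 := (hinj.hasSum_iff (f := fun p : ι × ι => if p.1 = p.2 then ((‖d p.1‖ ^ 2 : ℝ) : ℂ) else 0) (by
    rintro ⟨i, j⟩ hx
    simp only [Set.mem_range, not_exists] at hx
    rw [if_neg]
    intro h
    exact hx i (by simp at h; simp [h]))).2 h2
  have h5 : ∫ u, F u * (starRingEnd ℂ) (F u) ∂(taun m) = ((∫ u, ‖F u‖ ^ 2 ∂(taun m) : ℝ) : ℂ) := by
    rw [← integral_complex_ofReal]
    congr 1; ext u
    rw [Complex.mul_conj, Complex.normSq_eq_norm_sq]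
  rw [h5] at h4
  have h6 : HasSum (fun i => ‖d i‖ ^ 2) (∫ u, ‖F u‖ ^ 2 ∂(taun m)) := by
    have := h4
    simp only [Function.comp_def, if_true] at this
    exact_mod_cast this
  rw [← ENNReal.ofReal_tsum_of_nonneg (fun _ => by positivity) h6.summable, h6.tsum_eq, ofReal_integral_eq_lintegral_ofReal]
  · exact integrable_torus (Continuous.continuousOn (by fun_prop))
  · exact Eventually.of_forall fun _ => by positivity

noncomputable def ss (m : ℕ) (ξ : Fin m → ℂ) (k : ℕ) : ℂ := if h : k < m then (Real.sqrt ((k:ℝ) + 1) : ℂ) * ξ ⟨k, h⟩ else 0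

noncomputable def ex (m : ℕ) (u : Fin m → ℂ) (k : ℕ) : ℂ := if h : k < m then u ⟨k, h⟩ else 1

lemma ss_mul {m : ℕ} (u ξ : Fin m → ℂ) : ss m (fun i => u i * ξ i) = fun k => ss m ξ k * ex m u k := by
  ext k
  unfold ss ex
  split_ifs
  · ring
  · simp

lemma mono_ex {m : ℕ} (u : Fin m → ℂ) (ν : ℕ →₀ ℕ) : mono (ex m u) ν = ∏ i : Fin m, u i ^ ν i := by
  classical
  have h0 : mono (ex m u) ν = ∏ k ∈ ν.support ∪ Finset.range m, ex m u k ^ ν k := by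
    unfold mono
    exact Finsupp.prod_of_support_subset _ Finset.subset_union_left _ (by simp)
  rw [h0, ← Finset.prod_subset (s₁ := Finset.range m) Finset.subset_union_right]
  · rw [Finset.prod_range]
    refine Finset.prod_congr rfl fun i _ => ?_
    simp [ex]
  · intro k _ hk
    simp only [Finset.mem_range] at hk
    simp [ex, hk]

lemma mono_ss_zero {m : ℕ} (ξ : Fin m → ℂ) (ν : ℕ →₀ ℕ) (h : ¬ ν.support ⊆ Finset.range m) : mono (ss m ξ) ν = 0 := by
  rw [Finset.subset_iff] at h
  push Not at h
  obtain ⟨k, hk, hkm⟩ := h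
  unfold mono Finsupp.prod
  refine Finset.prod_eq_zero hk ?_
  simp only [Finset.mem_range] at hkm
  simp only [ss, hkm, dif_neg, not_false_eq_true]
  exact zero_pow (by simpa using hk)

lemma norm_ss_le {m : ℕ} (ξ : Fin m → ℂ) : ∃ R, ∀ u ∈ torus m, ∀ k, ‖ss m (fun i => u i * ξ i) k‖ ≤ R := by
  refine ⟨∑ i : Fin m, ‖ss m ξ i‖, fun u hu k => ?_⟩
  rw [ss_mul]
  by_cases h : k < m
  · have h2 : ‖ex m u k‖ = 1 := by simp [ex, h, hu ⟨k, h⟩]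
    rw [norm_mul, h2, mul_one]
    exact Finset.single_le_sum (f := fun i : Fin m => ‖ss m ξ i‖) (fun _ _ => norm_nonneg _) (Finset.mem_univ ⟨k, h⟩)
  · simp [ss, h]
    positivity

variable {A : ℕ → ℕ → ℂ}

lemma FF_ss {m : ℕ} (ξ : Fin m → ℂ) : FF A (ss m ξ) = Complex.exp (-(1/2) * ∑ k : Fin m, ∑ l : Fin m,
    A k l * ((Real.sqrt (((k:ℕ):ℝ) + 1) : ℂ) * ξ k) * ((Real.sqrt (((l:ℕ):ℝ) + 1) : ℂ) * ξ l)) := by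
  unfold FF
  rw [tsum_eq_sum (s := Finset.range m ×ˢ Finset.range m), Finset.sum_product, Finset.sum_range]
  · congr 3
    ext k
    rw [Finset.sum_range]
    refine Finset.sum_congr rfl fun l _ => ?_
    simp [ss]
  · rintro ⟨k, l⟩ h
    simp only [Finset.mem_product, Finset.mem_range, not_and_or] at h
    rcases h with h | h <;> simp [ss, h]

lemma continuous_FF_ss {m : ℕ} : Continuous (fun ξ : Fin m → ℂ => FF A (ss m ξ)) := by
  simp_rw [FF_ss]
  fun_prop

lemma orth_ex {m : ℕ} (μ ν : ℕ →₀ ℕ) (hμ : μ.support ⊆ Finset.range m) (hν : ν.support ⊆ Finset.range m) :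
    ∫ u, mono (ex m u) μ * (starRingEnd ℂ) (mono (ex m u) ν) ∂(taun m) = if μ = ν then 1 else 0 := by
  simp_rw [mono_ex, map_prod, map_pow, ← Finset.prod_mul_distrib]
  unfold taun
  rw [integral_fintype_prod_eq_prod (𝕜 := ℂ) (fun (i : Fin m) (x : ℂ) => x ^ μ i * (starRingEnd ℂ) x ^ ν i)]
  simp_rw [moment]
  split_ifs with h
  · simp [h]
  · have : ∃ k, μ k ≠ ν k := by
      by_contra hc; push Not at hc; exact h (Finsupp.ext hc)
    obtain ⟨k, hk⟩ := this
    have hkm : k < m := by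
      by_contra hc
      have h1 : k ∉ μ.support := fun h => hc (Finset.mem_range.1 (hμ h))
      have h2 : k ∉ ν.support := fun h => hc (Finset.mem_range.1 (hν h))
      simp at h1 h2
      exact hk (by rw [h1, h2])
    exact Finset.prod_eq_zero (Finset.mem_univ ⟨k, hkm⟩) (by simp [hk])

lemma parseval_ss (hA : Summable fun p : ℕ × ℕ => ‖A p.1 p.2‖) {m : ℕ} (ξ : Fin m → ℂ) :
    ∫⁻ u, ENNReal.ofReal (‖FF A (ss m (fun i => u i * ξ i))‖ ^ 2) ∂(taun m)
      = ∑' ν, ENNReal.ofReal (‖cc A ν * mono (ss m ξ) ν‖ ^ 2) := by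
  classical
  obtain ⟨R, hR⟩ := norm_ss_le ξ
  have h1 : ∀ k, ‖ss m ξ k‖ ≤ R := by
    intro k
    have := hR (fun _ => 1) (by simp [torus]) k
    simpa using this
  refine parseval_gen (fun ν => cc A ν * mono (ss m ξ) ν) (cc_summable hA _ h1) (fun ν u => mono (ex m u) ν) ?_ ?_ ?_ _ ?_ ?_
  · intro ν; simp_rw [mono_ex]; fun_prop
  · intro ν u hu
    simp_rw [mono_ex]
    rw [norm_prod]
    simp [hu _]
  · intro μ ν
    by_cases hμ : μ.support ⊆ Finset.range m
    · by_cases hν : ν.support ⊆ Finset.range m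
      · rw [orth_ex μ ν hμ hν]
        split_ifs with h
        · rw [h, Complex.mul_conj, Complex.normSq_eq_norm_sq]; simp
        · simp
      · have : μ ≠ ν := by rintro rfl; exact hν hμ
        rw [if_neg this, mono_ss_zero ξ ν hν]; simp
    · simp [mono_ss_zero ξ μ hμ]
  · exact continuous_FF_ss.comp (by fun_prop)
  · intro u hu
    have := FF_hasSum hA (hR u hu)
    convert! this using 2 with ν
    rw [ss_mul, mono_mul (ss m ξ)]; ring

lemma lintegral_moment (c : ℝ) (hc : 0 ≤ c) (k : ℕ) : ∫⁻ x : ℂ, ENNReal.ofReal (c * ‖x‖ ^ (2 * k) * Real.exp (-‖x‖ ^ 2))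
    = ENNReal.ofReal (c * (Real.pi * k.factorial)) := by
  have h := Complex.integral_rpow_mul_exp_neg_rpow (p := 2) (q := 2 * k) (by norm_num) (by linarith [Nat.cast_nonneg (α := ℝ) k])
  have h2 : ∫ x : ℂ, ‖x‖ ^ (2 * k) * Real.exp (-‖x‖ ^ 2) = Real.pi * k.factorial := by
    have e : ∀ x : ℂ, ‖x‖ ^ (2 * k) * Real.exp (-‖x‖ ^ 2) = ‖x‖ ^ (2 * (k:ℝ)) * Real.exp (-‖x‖ ^ (2:ℝ)) := by
      intro x
      rw [← Real.rpow_natCast, ← Real.rpow_natCast]; push_cast; rfl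
    simp_rw [e, h]
    rw [show (2 * (k:ℝ) + 2) / 2 = k + 1 by ring, Real.Gamma_nat_eq_factorial]; ring
  have hpos : 0 < Real.pi * k.factorial := by positivity
  have hi : Integrable (fun x : ℂ => ‖x‖ ^ (2 * k) * Real.exp (-‖x‖ ^ 2)) := by
    by_contra hc
    rw [integral_undef hc] at h2
    exact hpos.ne h2
  rw [← h2, ← integral_const_mul, ofReal_integral_eq_lintegral_ofReal (hi.const_mul c) (Eventually.of_forall fun x => by positivity)]
  simp_rw [mul_assoc]

lemma lintegral_mono {m : ℕ} (ν : ℕ →₀ ℕ) (hν : ν.support ⊆ Finset.range m) :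
    ∫⁻ ξ : Fin m → ℂ, ENNReal.ofReal (‖cc A ν * mono (ss m ξ) ν‖ ^ 2 * Real.exp (-∑ i, ‖ξ i‖ ^ 2))
      = ENNReal.ofReal (Real.pi ^ m * xx A ν) := by
  have e : ∀ ξ : Fin m → ℂ, ENNReal.ofReal (‖cc A ν * mono (ss m ξ) ν‖ ^ 2 * Real.exp (-∑ i, ‖ξ i‖ ^ 2))
      = ENNReal.ofReal (‖cc A ν‖ ^ 2) * ∏ i : Fin m, ENNReal.ofReal ((((i:ℕ):ℝ) + 1) ^ ν i * ‖ξ i‖ ^ (2 * ν i) * Real.exp (-‖ξ i‖ ^ 2)) := by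
    intro ξ
    rw [← ENNReal.ofReal_prod_of_nonneg (fun _ _ => by positivity), ← ENNReal.ofReal_mul (by positivity)]
    congr 1
    rw [norm_mul, mul_pow, mul_assoc]
    congr 1
    rw [Finset.prod_mul_distrib, ← Real.exp_sum, Finset.sum_neg_distrib]
    congr 1
    unfold mono
    rw [Finsupp.prod_of_support_subset _ hν _ (by simp), norm_prod, ← Finset.prod_pow, Finset.prod_range]
    refine Finset.prod_congr rfl fun i _ => ?_
    simp only [ss, i.2, dif_pos, norm_pow, norm_mul, Complex.norm_real, Real.norm_eq_abs, abs_of_nonneg (Real.sqrt_nonneg _)]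
    rw [← pow_mul, mul_comm (ν i) 2, pow_mul, mul_pow, mul_pow, Real.sq_sqrt (by positivity), pow_mul]
  simp_rw [e]
  rw [lintegral_const_mul' _ _ ENNReal.ofReal_ne_top,
    lintegral_pi_prod (fun (i : Fin m) (x : ℂ) => ENNReal.ofReal ((((i:ℕ):ℝ) + 1) ^ ν i * ‖x‖ ^ (2 * ν i) * Real.exp (-‖x‖ ^ 2))) (fun i => by fun_prop)]
  simp_rw [lintegral_moment _ (by positivity : (0:ℝ) ≤ (((_:ℕ):ℝ) + 1) ^ _)]
  rw [← ENNReal.ofReal_prod_of_nonneg (fun _ _ => by positivity), ← ENNReal.ofReal_mul (by positivity)]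
  congr 1
  unfold xx zz fac
  rw [Finsupp.prod_of_support_subset _ hν _ (by simp), Finsupp.prod_of_support_subset _ hν _ (by simp), Finset.prod_range, Finset.prod_range,
    Finset.prod_mul_distrib, Finset.prod_mul_distrib]
  simp
  ring

noncomputable def Gf (A : ℕ → ℕ → ℂ) (m : ℕ) (ξ : Fin m → ℂ) : ENNReal :=
  ENNReal.ofReal (‖FF A (ss m ξ)‖ ^ 2 * Real.exp (-∑ i, ‖ξ i‖ ^ 2))

lemma rot_inv {m : ℕ} (u : Fin m → ℂ) (hu : u ∈ torus m) (G : (Fin m → ℂ) → ENNReal) (hG : Measurable G) :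
    ∫⁻ ξ : Fin m → ℂ, G (fun i => u i * ξ i) = ∫⁻ ξ, G ξ := by
  have h1 : ∀ i, MeasurePreserving (fun x : ℂ => u i * x) := by
    intro i
    have := (rotation (⟨u i, by simpa [Submonoid.unitSphere] using hu i⟩ : Circle)).measurePreserving
    exact this
  exact (volume_preserving_pi h1).lintegral_comp hG

lemma gauss_main (hA : Summable fun p : ℕ × ℕ => ‖A p.1 p.2‖) (hx : Summable (xx A)) (m : ℕ) :
    ∫⁻ ξ, Gf A m ξ = ENNReal.ofReal (Real.pi ^ m * ∑' ν : {ν : ℕ →₀ ℕ // ν.support ⊆ Finset.range m}, xx A ν.1) := by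
  have hc := continuous_FF_ss (A := A) (m := m)
  have hm : Measurable (Gf A m) := by unfold Gf; fun_prop
  have h1 : ∫⁻ ξ, Gf A m ξ = ∫⁻ u, ∫⁻ ξ : Fin m → ℂ, Gf A m (fun i => u i * ξ i) ∂volume ∂(taun m) := by
    rw [lintegral_congr_ae (μ := taun m) (g := fun _ => ∫⁻ ξ, Gf A m ξ)]
    · rw [lintegral_const, measure_univ, mul_one]
    · filter_upwards [taun_ae m] with u hu
      exact rot_inv u hu _ hm
  rw [h1, lintegral_lintegral_swap]
  swap
  · exact (hm.comp (by fun_prop : Measurable fun p : (Fin m → ℂ) × (Fin m → ℂ) => fun i => p.1 i * p.2 i)).aemeasurable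
  have h2 : ∀ ξ : Fin m → ℂ, ∫⁻ u, Gf A m (fun i => u i * ξ i) ∂(taun m)
      = ∑' ν, ENNReal.ofReal (‖cc A ν * mono (ss m ξ) ν‖ ^ 2 * Real.exp (-∑ i, ‖ξ i‖ ^ 2)) := by
    intro ξ
    simp_rw [ENNReal.ofReal_mul (sq_nonneg _)]
    rw [ENNReal.tsum_mul_right, ← parseval_ss hA ξ, ← lintegral_mul_const' _ _ ENNReal.ofReal_ne_top]
    refine lintegral_congr_ae ?_
    filter_upwards [taun_ae m] with u hu
    unfold Gf
    rw [← ENNReal.ofReal_mul (sq_nonneg _)]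
    have hu' : ∀ i, ‖u i‖ = 1 := hu
    simp [hu']
  simp_rw [h2]
  rw [lintegral_tsum]
  swap
  · intro ν
    have : Continuous (fun ξ : Fin m → ℂ => mono (ss m ξ) ν) := by
      unfold mono Finsupp.prod
      refine continuous_finset_prod _ fun k _ => Continuous.pow ?_ _
      unfold ss
      split_ifs <;> fun_prop
    exact Measurable.aemeasurable (by fun_prop)
  rw [← tsum_subtype_eq_of_support_subset (s := {ν : ℕ →₀ ℕ | ν.support ⊆ Finset.range m})]
  · rw [← tsum_mul_left, ENNReal.ofReal_tsum_of_nonneg]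
    · exact tsum_congr fun ν => lintegral_mono ν.1 ν.2
    · exact fun ν => mul_nonneg (by positivity) (xx_nonneg _)
    · exact (hx.subtype _).mul_left _
  · intro ν hν
    by_contra hc
    refine hν ?_
    simp [mono_ss_zero _ ν hc]

end Grun

namespace Grun

lemma quad_form (a : ℕ → ℕ → ℂ) (m : ℕ) (ξ : Fin m → ℂ) :
    Gf (fun k l => a (k+1) (l+1)) m (fun i => (starRingEnd ℂ) (ξ i)) =
      ENNReal.ofReal (Real.exp (-((Sum.elim (fun k => (ξ k).re) (fun k => (ξ k).im)) ⬝ᵥ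
        (1 + grunskyK a m) *ᵥ (Sum.elim (fun k => (ξ k).re) (fun k => (ξ k).im))))) := by
  unfold Gf
  congr 1
  rw [FF_ss, Complex.norm_exp, ← Real.exp_nat_mul, ← Real.exp_add]
  congr 1
  have e : ∀ k l : Fin m, (a (k+1) (l+1) * ((Real.sqrt (((k:ℕ):ℝ) + 1) : ℂ) * (starRingEnd ℂ) (ξ k)) * ((Real.sqrt (((l:ℕ):ℝ) + 1) : ℂ) * (starRingEnd ℂ) (ξ l))).re
     = ((Real.sqrt ((((k : ℕ) + 1) * ((l : ℕ) + 1) : ℕ)) : ℂ) * a ((k : ℕ) + 1) ((l : ℕ) + 1)).re * ((ξ k).re * (ξ l).re - (ξ k).im * (ξ l).im)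
      + ((Real.sqrt ((((k : ℕ) + 1) * ((l : ℕ) + 1) : ℕ)) : ℂ) * a ((k : ℕ) + 1) ((l : ℕ) + 1)).im * ((ξ k).re * (ξ l).im + (ξ k).im * (ξ l).re) := by
    intro k l
    push_cast
    rw [Real.sqrt_mul (by positivity)]
    simp
    ring
  have e2 : (-(1/2) * ∑ k : Fin m, ∑ l : Fin m, a (k+1) (l+1) * ((Real.sqrt (((k:ℕ):ℝ) + 1) : ℂ) * (starRingEnd ℂ) (ξ k)) * ((Real.sqrt (((l:ℕ):ℝ) + 1) : ℂ) * (starRingEnd ℂ) (ξ l))).re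
     = -(1/2) * ∑ k : Fin m, ∑ l : Fin m, (a (k+1) (l+1) * ((Real.sqrt (((k:ℕ):ℝ) + 1) : ℂ) * (starRingEnd ℂ) (ξ k)) * ((Real.sqrt (((l:ℕ):ℝ) + 1) : ℂ) * (starRingEnd ℂ) (ξ l))).re := by
    rw [show (-(1/2) : ℂ) = ((-(1/2) : ℝ) : ℂ) by push_cast; ring, Complex.re_ofReal_mul, Complex.re_sum]
    simp_rw [Complex.re_sum]
  rw [e2]
  simp_rw [e]
  rw [Matrix.add_mulVec, dotProduct_add, Matrix.one_mulVec]
  unfold grunskyK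
  rw [Matrix.fromBlocks_mulVec]
  simp only [dotProduct, Fintype.sum_sum_type, Sum.elim_inl, Sum.elim_inr, Matrix.mulVec, Matrix.of_apply, Pi.add_apply, Function.comp_def,
    Matrix.neg_apply, RCLike.norm_conj, Complex.sq_norm, Complex.normSq_apply]
  have h1 : ∀ (X Y P Q R : ℝ), P = X + Y → Q = R → ((2:ℕ):ℝ) * (-(1/2) * Q) + -P = -(X + Y + R) := by
    intro X Y P Q R h1 h2; rw [h1, h2]; push_cast; ring
  refine h1 _ _ _ _ _ Finset.sum_add_distrib ?_
  rw [← Finset.sum_add_distrib]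
  refine Finset.sum_congr rfl fun k _ => ?_
  rw [mul_add, mul_add, Finset.mul_sum, Finset.mul_sum, Finset.mul_sum, Finset.mul_sum, ← Finset.sum_add_distrib, ← Finset.sum_add_distrib, ← Finset.sum_add_distrib]
  refine Finset.sum_congr rfl fun l _ => ?_
  ring

lemma herm (a : ℕ → ℕ → ℂ) (hsym : ∀ k l, a k l = a l k) (m : ℕ) : (1 + grunskyK a m).IsHermitian := by
  refine Matrix.isHermitian_one.add ?_
  unfold grunskyK
  have h : ∀ k l : Fin m, ((Real.sqrt ((((k : ℕ) + 1) * ((l : ℕ) + 1) : ℕ)) : ℂ) * a ((k : ℕ) + 1) ((l : ℕ) + 1))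
     = ((Real.sqrt ((((l : ℕ) + 1) * ((k : ℕ) + 1) : ℕ)) : ℂ) * a ((l : ℕ) + 1) ((k : ℕ) + 1)) := by
    intro k l; rw [hsym, mul_comm ((k:ℕ)+1)]
  refine Matrix.IsHermitian.fromBlocks ?_ ?_ ?_
  · ext k l; simp only [conjTranspose_apply, of_apply, star_trivial]; rw [h]
  · ext k l; simp only [conjTranspose_apply, of_apply, star_trivial]; rw [h]
  · refine Matrix.IsHermitian.neg ?_
    ext k l; simp only [conjTranspose_apply, of_apply, star_trivial]; rw [h]

theorem gauss_concl (a : ℕ → ℕ → ℂ) (hsym : ∀ k l, a k l = a l k)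
    (hA : Summable fun p : ℕ × ℕ => ‖a (p.1 + 1) (p.2 + 1)‖)
    (hx : Summable (xx (fun k l => a (k+1) (l+1)))) :
    (∀ m : ℕ, 0 < (1 + grunskyK a m).det) ∧
    ∃ D : ℝ, 0 < D ∧ Tendsto (fun m : ℕ => (1 + grunskyK a m).det) atTop (nhds D) ∧
      (Real.sqrt D)⁻¹ = ∑' ν, xx (fun k l => a (k+1) (l+1)) ν := by
  set A : ℕ → ℕ → ℂ := fun k l => a (k+1) (l+1) with hAdef
  set X : ℕ → ℝ := fun m => ∑' ν : {ν : ℕ →₀ ℕ // ν.support ⊆ Finset.range m}, xx A ν.1 with hX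
  have hm : ∀ m, Measurable (Gf A m) := by
    intro m
    have hc := continuous_FF_ss (A := A) (m := m)
    unfold Gf; fun_prop
  have hIntEq : ∀ m, ∫⁻ v : Fin m ⊕ Fin m → ℝ, ENNReal.ofReal (Real.exp (-(v ⬝ᵥ (1 + grunskyK a m) *ᵥ v)))
      = ENNReal.ofReal (Real.pi ^ m * X m) := by
    intro m
    rw [← gauss_main (A := A) hA hx m, ← lintegral_complex_real]
    have hconj := (volume_preserving_pi (fun _ : Fin m => Complex.conjLIE.measurePreserving)).lintegral_comp (hm m)
    rw [← hconj]
    exact lintegral_congr fun ξ => (quad_form a m ξ).symm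
  have hg := fun m => gauss_diag _ (herm a hsym m) (by rw [hIntEq m]; exact ENNReal.ofReal_ne_top)
  have hpos : ∀ m, 0 < (1 + grunskyK a m).det := fun m => (hg m).1
  have hXm : ∀ m, X m = (Real.sqrt (1 + grunskyK a m).det)⁻¹ := by
    intro m
    have h2 := (hg m).2
    rw [hIntEq m, ENNReal.ofReal_eq_ofReal_iff] at h2
    · have : Real.sqrt Real.pi ^ (Fintype.card (Fin m ⊕ Fin m)) = Real.pi ^ m := by
        rw [Fintype.card_sum, Fintype.card_fin, ← two_mul, pow_mul, Real.sq_sqrt Real.pi_pos.le]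
      rw [this] at h2
      exact mul_left_cancel₀ (pow_pos Real.pi_pos m).ne' h2
    · exact mul_nonneg (by positivity) (tsum_nonneg fun _ => xx_nonneg _)
    · positivity
  have hXpos : ∀ m, 0 < X m := fun m => by rw [hXm]; exact inv_pos.2 (Real.sqrt_pos.2 (hpos m))
  have hdet : ∀ m, (1 + grunskyK a m).det = ((X m) ^ 2)⁻¹ := by
    intro m
    rw [hXm, inv_pow, inv_inv, Real.sq_sqrt (hpos m).le]
  have hle : ∀ m, X m ≤ ∑' ν, xx A ν := fun m => hx.tsum_subtype_le _ _ (fun _ => xx_nonneg _)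
  have htend : Tendsto X atTop (nhds (∑' ν, xx A ν)) := by
    refine tendsto_order.2 ⟨fun y hy => ?_, fun y hy => Eventually.of_forall fun m => (hle m).trans_lt hy⟩
    obtain ⟨S, hS⟩ := ((tendsto_order.1 hx.hasSum).1 y hy).exists
    obtain ⟨N, hN⟩ : ∃ N, ∀ ν ∈ S, ν.support ⊆ Finset.range N := by
      classical
      refine ⟨(S.biUnion fun ν => ν.support).sup id + 1, fun ν hν k hk => ?_⟩
      rw [Finset.mem_range, Nat.lt_succ_iff]
      exact Finset.le_sup (f := id) (Finset.mem_biUnion.2 ⟨ν, hν, hk⟩)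
    filter_upwards [eventually_ge_atTop N] with m hm
    refine hS.trans_le ?_
    have : ∑ ν ∈ S, xx A ν = ∑ ν ∈ S.attach.map ⟨fun ν => (⟨ν.1, (hN ν.1 ν.2).trans (Finset.range_mono hm)⟩ : {ν : ℕ →₀ ℕ // ν.support ⊆ Finset.range m}),
        fun x y h => Subtype.ext (by simpa using h)⟩, xx A ν.1 := by
      rw [Finset.sum_map, ← Finset.sum_attach]
      rfl
    rw [this]
    exact (hx.subtype _).sum_le_tsum _ (fun _ _ => xx_nonneg _)
  have hXX : 0 < ∑' ν, xx A ν := (hXpos 0).trans_le (hle 0)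
  refine ⟨hpos, ((∑' ν, xx A ν) ^ 2)⁻¹, by positivity, ?_, ?_⟩
  · simp_rw [hdet]
    exact (htend.pow 2).inv₀ (by positivity)
  · rw [Real.sqrt_inv, inv_inv, Real.sqrt_sq hXX.le]

end Grun

namespace Grun

noncomputable def gg (A : ℕ → ℕ → ℂ) (u v : ℂ) : ℂ := ∑' p : ℕ × ℕ, A p.1 p.2 * u ^ (p.1 + 1) * v ^ (p.2 + 1)

lemma gg_symm {A : ℕ → ℕ → ℂ} (hsym : ∀ k l, A k l = A l k) (u v : ℂ) : gg A u v = gg A v u := by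
  unfold gg
  rw [← (Equiv.prodComm ℕ ℕ).tsum_eq]
  refine tsum_congr fun p => ?_
  simp only [Equiv.prodComm_apply, Prod.fst_swap, Prod.snd_swap]
  rw [hsym]; ring

variable {A : ℕ → ℕ → ℂ}

lemma gg_bound {u v : ℂ} (hu : ‖u‖ ≤ 1) (hv : ‖v‖ ≤ 1) (p : ℕ × ℕ) : ‖A p.1 p.2 * u ^ (p.1 + 1) * v ^ (p.2 + 1)‖ ≤ ‖A p.1 p.2‖ := by
  rw [norm_mul, norm_mul, norm_pow, norm_pow]
  have h1 : ‖u‖ ^ (p.1 + 1) ≤ 1 := pow_le_one₀ (norm_nonneg _) hu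
  have h2 : ‖v‖ ^ (p.2 + 1) ≤ 1 := pow_le_one₀ (norm_nonneg _) hv
  calc _ ≤ ‖A p.1 p.2‖ * 1 * 1 := by gcongr
    _ = _ := by ring

lemma gg_summable (hA : Summable fun p : ℕ × ℕ => ‖A p.1 p.2‖) {u v : ℂ} (hu : ‖u‖ ≤ 1) (hv : ‖v‖ ≤ 1) :
    Summable fun p : ℕ × ℕ => A p.1 p.2 * u ^ (p.1 + 1) * v ^ (p.2 + 1) :=
  Summable.of_norm (Summable.of_nonneg_of_le (fun _ => norm_nonneg _) (gg_bound hu hv) hA)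

lemma gg_cont (hA : Summable fun p : ℕ × ℕ => ‖A p.1 p.2‖) :
    ContinuousOn (fun q : ℂ × ℂ => gg A q.1 q.2) (Metric.closedBall 0 1 ×ˢ Metric.closedBall 0 1) := by
  unfold gg
  refine continuousOn_tsum (u := fun p : ℕ × ℕ => ‖A p.1 p.2‖) ?_ hA ?_
  · intro p; exact Continuous.continuousOn (by fun_prop)
  · intro p q hq
    exact gg_bound (by simpa using hq.1) (by simpa using hq.2) p

lemma gg_cont_comp (hA : Summable fun p : ℕ × ℕ => ‖A p.1 p.2‖) {X : Type*} [TopologicalSpace X] {s : Set X} {f h : X → ℂ}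
    (hf : ContinuousOn f s) (hh : ContinuousOn h s) (hf1 : ∀ x ∈ s, ‖f x‖ ≤ 1) (hh1 : ∀ x ∈ s, ‖h x‖ ≤ 1) :
    ContinuousOn (fun x => gg A (f x) (h x)) s := by
  have hm : Set.MapsTo (fun x => (f x, h x)) s (Metric.closedBall (0:ℂ) 1 ×ˢ Metric.closedBall (0:ℂ) 1) := by
    intro x hx
    exact ⟨by simpa using hf1 x hx, by simpa using hh1 x hx⟩
  exact ContinuousOn.comp (g := fun q : ℂ × ℂ => gg A q.1 q.2) (f := fun x => (f x, h x)) (gg_cont hA) (hf.prodMk hh) hm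

lemma gg_diff (hA : Summable fun p : ℕ × ℕ => ‖A p.1 p.2‖) {U : Set ℂ} (hU : IsOpen U) {f h : ℂ → ℂ}
    (hf : DifferentiableOn ℂ f U) (hh : DifferentiableOn ℂ h U) (hf1 : ∀ x ∈ U, ‖f x‖ ≤ 1) (hh1 : ∀ x ∈ U, ‖h x‖ ≤ 1) :
    DifferentiableOn ℂ (fun x => gg A (f x) (h x)) U := by
  unfold gg
  refine Complex.differentiableOn_tsum_of_summable_norm hA (fun p => ?_) hU (fun p w hw => gg_bound (hf1 w hw) (hh1 w hw) p)
  fun_prop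

lemma gg_zero_left (v : ℂ) : gg A 0 v = 0 := by
  unfold gg; simp

lemma zpow_inv_aux (u : ℂ) (k : ℕ) : (u⁻¹) ^ (-(k : ℤ) - 1) = u ^ (k + 1) := by
  rw [_root_.inv_zpow', show -(-(k:ℤ) - 1) = ((k + 1 : ℕ) : ℤ) by push_cast; ring, zpow_natCast]

lemma ident1 {φ : ℂ → ℂ} {a : ℕ → ℕ → ℂ}
    (hGrunsky : ∀ z ζ : ℂ, 1 ≤ ‖z‖ → 1 ≤ ‖ζ‖ →
      Summable (fun p : ℕ × ℕ =>
        ‖a (p.1 + 1) (p.2 + 1) * ζ ^ (-(p.1 : ℤ) - 1) * z ^ (-(p.2 : ℤ) - 1)‖) ∧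
      (z ≠ ζ → φ ζ - φ z = (ζ - z) * Complex.exp
        (-∑' p : ℕ × ℕ, a (p.1 + 1) (p.2 + 1) * ζ ^ (-(p.1 : ℤ) - 1) * z ^ (-(p.2 : ℤ) - 1))))
    {u v : ℂ} (hu0 : u ≠ 0) (hv0 : v ≠ 0) (hu : ‖u‖ ≤ 1) (hv : ‖v‖ ≤ 1) :
    φ u⁻¹ - φ v⁻¹ = (u⁻¹ - v⁻¹) * Complex.exp (-gg (fun k l => a (k+1) (l+1)) u v) := by
  by_cases h : v⁻¹ = u⁻¹
  · rw [h]; simp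
  have h1 : 1 ≤ ‖u⁻¹‖ := by rw [norm_inv]; exact (one_le_inv₀ (norm_pos_iff.2 hu0)).2 hu
  have h2 : 1 ≤ ‖v⁻¹‖ := by rw [norm_inv]; exact (one_le_inv₀ (norm_pos_iff.2 hv0)).2 hv
  rw [(hGrunsky _ _ h2 h1).2 h]
  simp_rw [zpow_inv_aux]
  rfl

lemma A_summable {φ : ℂ → ℂ} {a : ℕ → ℕ → ℂ}
    (hGrunsky : ∀ z ζ : ℂ, 1 ≤ ‖z‖ → 1 ≤ ‖ζ‖ →
      Summable (fun p : ℕ × ℕ =>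
        ‖a (p.1 + 1) (p.2 + 1) * ζ ^ (-(p.1 : ℤ) - 1) * z ^ (-(p.2 : ℤ) - 1)‖) ∧
      (z ≠ ζ → φ ζ - φ z = (ζ - z) * Complex.exp
        (-∑' p : ℕ × ℕ, a (p.1 + 1) (p.2 + 1) * ζ ^ (-(p.1 : ℤ) - 1) * z ^ (-(p.2 : ℤ) - 1)))) :
    Summable fun p : ℕ × ℕ => ‖a (p.1 + 1) (p.2 + 1)‖ := by
  have := (hGrunsky 1 1 (by simp) (by simp)).1
  simpa using this

lemma ident2 {φ ψ : ℂ → ℂ} (hA : Summable fun p : ℕ × ℕ => ‖A p.1 p.2‖)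
    (hholo : DifferentiableOn ℂ φ {z : ℂ | 1 < ‖z‖})
    (hψcont : ContinuousOn ψ {z : ℂ | 1 ≤ ‖z‖})
    (hψ : ∀ z : ℂ, 1 < ‖z‖ → ψ z = deriv φ z)
    (h1 : ∀ u v : ℂ, u ≠ 0 → v ≠ 0 → ‖u‖ ≤ 1 → ‖v‖ ≤ 1 → φ u⁻¹ - φ v⁻¹ = (u⁻¹ - v⁻¹) * Complex.exp (-gg A u v))
    {u : ℂ} (hu : ‖u‖ = 1) : ψ u⁻¹ = Complex.exp (-gg A u u) := by
  have hopen : IsOpen {z : ℂ | 1 < ‖z‖} := isOpen_lt continuous_const continuous_norm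
  have key : ∀ v : ℂ, v ≠ 0 → ‖v‖ < 1 → ψ v⁻¹ = Complex.exp (-gg A v v) := by
    intro v hv0 hv
    have hz : 1 < ‖v⁻¹‖ := by rw [norm_inv]; exact (one_lt_inv₀ (norm_pos_iff.2 hv0)).2 hv
    have hd := (hholo.differentiableAt (hopen.mem_nhds hz)).hasDerivAt
    rw [hψ _ hz]
    rw [hasDerivAt_iff_tendsto_slope] at hd
    refine tendsto_nhds_unique hd ?_
    have hc : ContinuousOn (fun z : ℂ => Complex.exp (-gg A z⁻¹ v)) {z : ℂ | 1 < ‖z‖} := by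
      refine (gg_cont_comp hA ?_ continuousOn_const ?_ ?_).neg.cexp
      · refine continuousOn_id.inv₀ ?_
        intro x hx h; simp at h; rw [h] at hx; simp at hx; linarith
      · intro x hx
        rw [norm_inv]; exact inv_le_one_of_one_le₀ (le_of_lt hx)
      · intro x hx; exact hv.le
    have hc2 := (hc.continuousAt (hopen.mem_nhds hz)).tendsto
    simp only [inv_inv] at hc2
    refine (hc2.mono_left nhdsWithin_le_nhds).congr' ?_
    filter_upwards [self_mem_nhdsWithin, mem_nhdsWithin_of_mem_nhds (hopen.mem_nhds hz)] with ζ hζ hζ2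
    have hζ0 : ζ ≠ 0 := by rintro rfl; simp at hζ2; linarith
    have h3 := h1 ζ⁻¹ v (inv_ne_zero hζ0) hv0 (by rw [norm_inv]; exact inv_le_one_of_one_le₀ (le_of_lt hζ2)) hv.le
    rw [inv_inv] at h3
    rw [slope_def_field, h3]
    have : ζ - v⁻¹ ≠ 0 := sub_ne_zero.2 hζ
    rw [mul_div_cancel_left₀ _ this]
  have hu0 : u ≠ 0 := by rintro rfl; simp at hu
  have hnear : ∀ᶠ r : ℝ in nhdsWithin 1 (Set.Iio 1), 0 < r ∧ r < 1 := by
    filter_upwards [self_mem_nhdsWithin, mem_nhdsWithin_of_mem_nhds (lt_mem_nhds (show (0:ℝ) < 1 by norm_num))] with r h1 h2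
    exact ⟨h2, h1⟩
  have hL : Tendsto (fun r : ℝ => ψ ((r:ℂ) * u)⁻¹) (nhdsWithin 1 (Set.Iio 1)) (nhds (ψ u⁻¹)) := by
    have h3 := (hψcont u⁻¹ (by simp [hu])).tendsto
    refine h3.comp ?_
    refine tendsto_nhdsWithin_iff.2 ⟨?_, ?_⟩
    · have : ContinuousAt (fun r : ℝ => ((r:ℂ) * u)⁻¹) 1 := by
        refine ContinuousAt.inv₀ (by fun_prop) (by simpa using hu0)
      have := this.tendsto
      simp only [Complex.ofReal_one, one_mul] at this
      exact this.mono_left nhdsWithin_le_nhds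
    · filter_upwards [hnear] with r hr
      simp only [Set.mem_setOf_eq, norm_inv, norm_mul, hu, mul_one, Complex.norm_real, Real.norm_eq_abs, abs_of_pos hr.1]
      exact (one_le_inv₀ hr.1).2 hr.2.le
  have hR : Tendsto (fun r : ℝ => Complex.exp (-gg A ((r:ℂ) * u) ((r:ℂ) * u))) (nhdsWithin 1 (Set.Iio 1)) (nhds (Complex.exp (-gg A u u))) := by
    have hc : ContinuousOn (fun r : ℝ => Complex.exp (-gg A ((r:ℂ) * u) ((r:ℂ) * u))) (Set.Icc 0 1) := by
      have hb : ∀ x ∈ Set.Icc (0:ℝ) 1, ‖(x:ℂ) * u‖ ≤ 1 := by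
        intro x hx
        rw [norm_mul, hu, Complex.norm_real, Real.norm_eq_abs, abs_of_nonneg hx.1, mul_one]; exact hx.2
      exact (gg_cont_comp hA (Continuous.continuousOn (by fun_prop)) (Continuous.continuousOn (by fun_prop)) hb hb).neg.cexp
    have := (hc 1 (by simp)).tendsto
    simp only [Complex.ofReal_one, one_mul] at this
    refine this.mono_left (nhdsWithin_le_iff.2 ?_)
    filter_upwards [hnear] with r hr
    exact ⟨hr.1.le, hr.2.le⟩
  refine tendsto_nhds_unique hL (hR.congr' ?_)
  filter_upwards [hnear] with r hr
  refine (key _ (mul_ne_zero (by simpa using hr.1.ne') hu0) ?_).symm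
  rw [norm_mul, hu, Complex.norm_real, Real.norm_eq_abs, abs_of_pos hr.1, mul_one]; exact hr.2

lemma taun_eq (n : ℕ) : taun n = ((ENNReal.ofReal (2 * Real.pi))⁻¹ ^ n) •
    ((volume.restrict (Set.pi Set.univ (fun _ : Fin n => Set.Icc (-Real.pi) Real.pi))).map (fun θ i => par (θ i))) := by
  have h0 : (volume.restrict (Set.pi Set.univ (fun _ : Fin n => Set.Icc (-Real.pi) Real.pi))) =
      Measure.pi (fun _ : Fin n => (volume.restrict (Set.Icc (-Real.pi) Real.pi))) := by
    rw [volume_pi, Measure.restrict_pi_pi]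
  rw [h0, Measure.pi_map_pi (fun _ => continuous_par.measurable.aemeasurable)]
  unfold taun
  refine Measure.pi_eq fun s hs => ?_
  rw [Measure.smul_apply, Measure.pi_pi]
  simp only [tau, Measure.smul_apply, smul_eq_mul]
  rw [Finset.prod_mul_distrib, Finset.prod_const, Finset.card_univ, Fintype.card_fin]

lemma integral_taun {n : ℕ} (f : (Fin n → ℂ) → ℝ) (hf : ContinuousOn f (torus n)) :
    ∫ x, f x ∂(taun n) = ((2 * Real.pi) ^ n)⁻¹ * ∫ θ in Set.pi Set.univ (fun _ : Fin n => Set.Icc (-Real.pi) Real.pi), f (fun i => par (θ i)) := by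
  have h0 := integrable_torus hf
  have hne : ((ENNReal.ofReal (2 * Real.pi))⁻¹ ^ n) ≠ 0 := pow_ne_zero _ (ENNReal.inv_ne_zero.2 ENNReal.ofReal_ne_top)
  have hnt : ((ENNReal.ofReal (2 * Real.pi))⁻¹ ^ n) ≠ ⊤ := ENNReal.pow_ne_top (by simp [Real.pi_pos])
  rw [taun_eq] at h0 ⊢
  rw [integrable_smul_measure hne hnt] at h0
  rw [integral_smul_measure, integral_map _ h0.1]
  · simp only [smul_eq_mul, ENNReal.toReal_pow, ENNReal.toReal_inv, ENNReal.toReal_ofReal two_pi_pos'.le, inv_pow]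
  · have := continuous_par
    exact Measurable.aemeasurable (by fun_prop)

lemma FFpp_eq (hA : Summable fun p : ℕ × ℕ => ‖A p.1 p.2‖) {n : ℕ} (x : Fin n → ℂ) (hx : x ∈ torus n) :
    FF A (pp x) = Complex.exp (-(1/2) * ∑ i, ∑ j, gg A (x i) (x j)) := by
  unfold FF
  congr 2
  have h : ∀ i j : Fin n, HasSum (fun p : ℕ × ℕ => A p.1 p.2 * x i ^ (p.1 + 1) * x j ^ (p.2 + 1)) (gg A (x i) (x j)) :=
    fun i j => (gg_summable hA (hx i).le (hx j).le).hasSum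
  have h2 := hasSum_sum (s := Finset.univ) (fun i _ => hasSum_sum (s := Finset.univ) (fun j _ => h i j))
  rw [← h2.tsum_eq]
  refine tsum_congr fun p => ?_
  unfold pp
  rw [mul_assoc, Finset.sum_mul_sum, Finset.mul_sum]
  refine Finset.sum_congr rfl fun i _ => ?_
  rw [Finset.mul_sum]
  exact Finset.sum_congr rfl fun j _ => by ring

lemma sum_sym {n : ℕ} (f : Fin n → Fin n → ℂ) (hf : ∀ i j, f i j = f j i) :
    ∑ i, ∑ j, f i j = 2 * (∑ p ∈ Finset.univ.filter (fun p : Fin n × Fin n => p.1 < p.2), f p.1 p.2) + ∑ i, f i i := by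
  have h0 : ∑ i, ∑ j, f i j = ∑ p : Fin n × Fin n, f p.1 p.2 := (Fintype.sum_prod_type' f).symm
  have h1 : ∑ p ∈ Finset.univ.filter (fun p : Fin n × Fin n => p.2 < p.1), f p.1 p.2 =
      ∑ p ∈ Finset.univ.filter (fun p : Fin n × Fin n => p.1 < p.2), f p.1 p.2 := by
    refine Finset.sum_bij (fun p _ => p.swap) ?_ ?_ ?_ ?_
    · intro p hp; simpa using hp
    · intro p _ q _ h; exact Prod.swap_injective h
    · intro p hp; exact ⟨p.swap, by simpa using hp, by simp⟩
    · intro p _; exact hf _ _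
  have h2 : ∑ p ∈ Finset.univ.filter (fun p : Fin n × Fin n => p.1 = p.2), f p.1 p.2 = ∑ i, f i i := by
    refine (Finset.sum_bij (fun i _ => (i, i)) ?_ ?_ ?_ ?_).symm
    · intro i _; simp
    · intro i _ j _ h; simpa using h
    · rintro ⟨i, j⟩ hp; simp at hp; exact ⟨i, by simp, by simp [hp]⟩
    · intro i _; rfl
  rw [h0, ← h2, two_mul]
  nth_rewrite 2 [← h1]
  rw [← Finset.sum_filter_add_sum_filter_not _ (fun p : Fin n × Fin n => p.1 < p.2), add_assoc]
  congr 1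
  rw [← Finset.sum_filter_add_sum_filter_not (Finset.univ.filter fun p : Fin n × Fin n => ¬ p.1 < p.2) (fun p : Fin n × Fin n => p.2 < p.1)]
  rw [Finset.filter_filter, Finset.filter_filter]
  congr 2
  · ext p; simp; intro h; exact h.le
  · ext p; simp; constructor
    · rintro ⟨h1, h2⟩; exact le_antisymm h2 h1
    · intro h; simp [h]

lemma norm_VV {n : ℕ} (x : Fin n → ℂ) : ‖VV x‖ ^ 2 = ∏ p ∈ Finset.univ.filter (fun p : Fin n × Fin n => p.1 < p.2), ‖x p.1 - x p.2‖ ^ 2 := by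
  unfold VV
  rw [Matrix.det_vandermonde, norm_prod, ← Finset.prod_pow]
  have : Finset.univ.filter (fun p : Fin n × Fin n => p.1 < p.2) = (Finset.univ.sigma (fun i : Fin n => Finset.Ioi i)).map (Equiv.sigmaEquivProd (Fin n) (Fin n)).toEmbedding := by
    ext p; simp
  rw [this, Finset.prod_map, Finset.prod_sigma]
  refine Finset.prod_congr rfl fun i _ => ?_
  rw [norm_prod, ← Finset.prod_pow]
  refine Finset.prod_congr rfl fun j _ => ?_
  simp [norm_sub_rev]

lemma integrand_eq {φ ψ : ℂ → ℂ} (hA : Summable fun p : ℕ × ℕ => ‖A p.1 p.2‖) (hsym : ∀ k l, A k l = A l k)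
    (h1 : ∀ u v : ℂ, u ≠ 0 → v ≠ 0 → ‖u‖ ≤ 1 → ‖v‖ ≤ 1 → φ u⁻¹ - φ v⁻¹ = (u⁻¹ - v⁻¹) * Complex.exp (-gg A u v))
    (h2 : ∀ u : ℂ, ‖u‖ = 1 → ψ u⁻¹ = Complex.exp (-gg A u u)) {n : ℕ} (x : Fin n → ℂ) (hx : x ∈ torus n) :
    (∏ p ∈ Finset.univ.filter (fun p : Fin n × Fin n => p.1 < p.2), ‖φ (x p.1)⁻¹ - φ (x p.2)⁻¹‖ ^ 2) * ∏ μ, ‖ψ (x μ)⁻¹‖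
      = ‖VV x‖ ^ 2 * ‖FF A (pp x)‖ ^ 2 := by
  have hx0 : ∀ i, x i ≠ 0 := fun i h => by have := hx i; rw [h] at this; simp at this
  have e1 : ∀ p : Fin n × Fin n, ‖φ (x p.1)⁻¹ - φ (x p.2)⁻¹‖ ^ 2 = ‖x p.1 - x p.2‖ ^ 2 * Real.exp (2 * (-gg A (x p.1) (x p.2)).re) := by
    intro p
    rw [h1 _ _ (hx0 _) (hx0 _) (hx _).le (hx _).le, norm_mul, mul_pow, Complex.norm_exp, ← Real.exp_nat_mul]
    congr 2
    rw [inv_sub_inv (hx0 _) (hx0 _), norm_div, norm_mul, hx, hx, norm_sub_rev]; simp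
  simp_rw [e1]
  rw [Finset.prod_mul_distrib, ← norm_VV, mul_assoc]
  congr 1
  rw [FFpp_eq hA x hx, sum_sym _ (fun i j => gg_symm hsym _ _), Complex.norm_exp, ← Real.exp_nat_mul, ← Real.exp_sum]
  simp_rw [h2 _ (hx _), Complex.norm_exp]
  rw [← Real.exp_sum, ← Real.exp_add]
  congr 1
  rw [← Finset.mul_sum, ← Complex.re_sum, ← Complex.re_sum, Finset.sum_neg_distrib, Finset.sum_neg_distrib]
  simp
  ring

lemma Z_eq {φ ψ : ℂ → ℂ} (hA : Summable fun p : ℕ × ℕ => ‖A p.1 p.2‖) (hsym : ∀ k l, A k l = A l k)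
    (h1 : ∀ u v : ℂ, u ≠ 0 → v ≠ 0 → ‖u‖ ≤ 1 → ‖v‖ ≤ 1 → φ u⁻¹ - φ v⁻¹ = (u⁻¹ - v⁻¹) * Complex.exp (-gg A u v))
    (h2 : ∀ u : ℂ, ‖u‖ = 1 → ψ u⁻¹ = Complex.exp (-gg A u u))
    (Z : ℕ → ℝ)
    (hZ : ∀ n : ℕ, Z n = (1 / (n.factorial : ℝ)) *
      ∫ θ in Set.pi Set.univ (fun _ : Fin n => Set.Icc (-Real.pi) Real.pi),
        (∏ p ∈ Finset.univ.filter (fun p : Fin n × Fin n => p.1 < p.2),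
          ‖φ (Complex.exp (Complex.I * (θ p.1 : ℂ)))
            - φ (Complex.exp (Complex.I * (θ p.2 : ℂ)))‖ ^ 2) *
        ∏ μ, ‖ψ (Complex.exp (Complex.I * (θ μ : ℂ)))‖) (n : ℕ) : Z n / (2 * Real.pi) ^ n = ZZ A n := by
  unfold ZZ
  rw [En_sq, Complex.ofReal_re, integral_taun, hZ, div_eq_mul_inv, one_div]
  · have e : ∀ θ : ℝ, Complex.exp (Complex.I * (θ : ℂ)) = (par θ)⁻¹ := by
      intro θ; unfold par; rw [Complex.exp_neg, inv_inv]
    have e2 : ∀ θ : Fin n → ℝ, (∏ p ∈ Finset.univ.filter (fun p : Fin n × Fin n => p.1 < p.2),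
          ‖φ (Complex.exp (Complex.I * (θ p.1 : ℂ)))
            - φ (Complex.exp (Complex.I * (θ p.2 : ℂ)))‖ ^ 2) *
        ∏ μ, ‖ψ (Complex.exp (Complex.I * (θ μ : ℂ)))‖ = ‖VV fun i => par (θ i)‖ ^ 2 * ‖FF A (pp fun i => par (θ i))‖ ^ 2 := by
      intro θ
      simp_rw [e]
      exact integrand_eq hA hsym h1 h2 (fun i => par (θ i)) (fun i => norm_par _)
    simp_rw [e2]
    ring
  · have h3 := continuous_VV (n := n)
    have h4 := FFpp_cont hA (n := n)
    fun_prop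

end Grun

namespace Grun

lemma taylor2 (F : ℝ → ℂ) (hF : ContDiff ℝ 2 F) : ∃ C : ℝ, 0 ≤ C ∧ ∀ s ∈ Set.Icc (-10:ℝ) 10, ∀ t ∈ Set.Icc (-10:ℝ) 10,
    ‖F t - F s - (t - s) • deriv F s‖ ≤ C * |t - s| ^ 2 := by
  have hF1 : ContDiff ℝ 1 (deriv F) := by
    have h2 : ContDiff ℝ (1+1) F := by rw [one_add_one_eq_two]; exact hF
    exact (contDiff_succ_iff_deriv.1 h2).2.2
  have hc2 : Continuous (deriv (deriv F)) := hF1.continuous_deriv le_rfl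
  obtain ⟨C, hC⟩ := (isCompact_Icc (a := (-10:ℝ)) (b := 10)).exists_bound_of_continuousOn hc2.continuousOn
  have hC0 : 0 ≤ C := (norm_nonneg _).trans (hC 0 (by norm_num))
  have hd : Differentiable ℝ F := hF.differentiable (by norm_num)
  have hd1 : Differentiable ℝ (deriv F) := hF1.differentiable (by norm_num)
  have hL : ∀ s ∈ Set.Icc (-10:ℝ) 10, ∀ t ∈ Set.Icc (-10:ℝ) 10, ‖deriv F t - deriv F s‖ ≤ C * ‖t - s‖ := fun s hs t ht =>
    (convex_Icc (-10:ℝ) 10).norm_image_sub_le_of_norm_deriv_le (fun x _ => hd1 x) hC hs ht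
  refine ⟨C, hC0, fun s hs t ht => ?_⟩
  have hsub : Set.uIcc s t ⊆ Set.Icc (-10:ℝ) 10 := Set.uIcc_subset_Icc hs ht
  have h := (convex_uIcc s t).norm_image_sub_le_of_norm_hasDerivWithin_le (f := fun x => F x - x • deriv F s)
    (f' := fun x => deriv F x - deriv F s) (C := C * |t - s|) (x := s) (y := t) (fun x hx => by
      have h1 := (hd x).hasDerivAt
      have h2 := (hasDerivAt_id x).smul_const (deriv F s)
      simp only [one_smul] at h2
      exact (h1.sub h2).hasDerivWithinAt) (fun x hx => by
      refine (hL s hs x (hsub hx)).trans ?_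
      refine mul_le_mul_of_nonneg_left ?_ hC0
      rw [Real.norm_eq_abs]
      exact Set.abs_sub_left_of_mem_uIcc hx) Set.left_mem_uIcc Set.right_mem_uIcc
  calc _ = ‖F t - t • deriv F s - (F s - s • deriv F s)‖ := by congr 1; rw [sub_smul]; ring
    _ ≤ _ := h
    _ = _ := by rw [Real.norm_eq_abs]; ring

variable {A : ℕ → ℕ → ℂ} {φ : ℂ → ℂ}

noncomputable def SS (A : ℕ → ℕ → ℂ) : ℝ := ∑' p : ℕ × ℕ, ‖A p.1 p.2‖

lemma SS_nonneg : 0 ≤ SS A := tsum_nonneg fun _ => norm_nonneg _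

lemma gg_le (hA : Summable fun p : ℕ × ℕ => ‖A p.1 p.2‖) {u v : ℂ} (hu : ‖u‖ ≤ 1) (hv : ‖v‖ ≤ 1) : ‖gg A u v‖ ≤ SS A := by
  unfold gg SS
  exact tsum_of_norm_bounded hA.hasSum (gg_bound hu hv)

lemma deriv_F (hA : Summable fun p : ℕ × ℕ => ‖A p.1 p.2‖)
    (h1 : ∀ u v : ℂ, u ≠ 0 → v ≠ 0 → ‖u‖ ≤ 1 → ‖v‖ ≤ 1 → φ u⁻¹ - φ v⁻¹ = (u⁻¹ - v⁻¹) * Complex.exp (-gg A u v))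
    (hd : Differentiable ℝ (fun θ : ℝ => φ (par θ)⁻¹)) (s : ℝ) :
    deriv (fun θ : ℝ => φ (par θ)⁻¹) s = Complex.exp (-gg A (par s) (par s)) * deriv (fun θ : ℝ => (par θ)⁻¹) s := by
  have hp : Differentiable ℝ (fun θ : ℝ => (par θ)⁻¹) := by
    have : (fun θ : ℝ => (par θ)⁻¹) = fun θ : ℝ => Complex.exp (Complex.I * θ) := by
      ext θ; unfold par; rw [Complex.exp_neg, inv_inv]
    rw [this]; fun_prop
  have h2 := hasDerivAt_iff_tendsto_slope.1 (hd s).hasDerivAt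
  have h3 := hasDerivAt_iff_tendsto_slope.1 (hp s).hasDerivAt
  have hc : Continuous (fun t : ℝ => Complex.exp (-gg A (par t) (par s))) := by
    rw [← continuousOn_univ]
    exact (gg_cont_comp hA continuous_par.continuousOn continuousOn_const (fun x _ => (norm_par x).le) (fun x _ => (norm_par s).le)).neg.cexp
  have h4 := ((hc.tendsto s).mono_left (nhdsWithin_le_nhds (s := {s}ᶜ))).mul h3
  refine tendsto_nhds_unique h2 (h4.congr fun t => ?_)
  rw [slope_def_module, slope_def_module, h1 _ _ (par_ne_zero _) (par_ne_zero _) (norm_par _).le (norm_par _).le]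
  simp only [Complex.real_smul]
  ring

lemma q_lip (hA : Summable fun p : ℕ × ℕ => ‖A p.1 p.2‖)
    (h1 : ∀ u v : ℂ, u ≠ 0 → v ≠ 0 → ‖u‖ ≤ 1 → ‖v‖ ≤ 1 → φ u⁻¹ - φ v⁻¹ = (u⁻¹ - v⁻¹) * Complex.exp (-gg A u v))
    (hF : ContDiff ℝ 2 (fun θ : ℝ => φ (par θ)⁻¹)) :
    ∃ C : ℝ, 0 ≤ C ∧ ∀ u v : ℂ, ‖u‖ = 1 → ‖v‖ = 1 → ‖Complex.exp (-gg A u v) - Complex.exp (-gg A v v)‖ ≤ C * ‖u - v‖ := by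
  have hp : ContDiff ℝ 2 (fun θ : ℝ => (par θ)⁻¹) := by
    have : (fun θ : ℝ => (par θ)⁻¹) = fun θ : ℝ => Complex.exp (Complex.I * θ) := by
      ext θ; unfold par; rw [Complex.exp_neg, inv_inv]
    rw [this]
    exact (contDiff_const.mul Complex.ofRealCLM.contDiff).cexp
  obtain ⟨C1, hC1, hT1⟩ := taylor2 _ hF
  obtain ⟨C2, hC2, hT2⟩ := taylor2 _ hp
  set C3 := C1 + Real.exp (SS A) * C2 with hC3
  have hC30 : 0 ≤ C3 := by positivity
  refine ⟨C3 * (Real.pi / 2) ^ 2, by positivity, fun u v hu hv => ?_⟩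
  by_cases huv : u = v
  · rw [huv]; simp
  -- angles
  obtain ⟨s, d, hs, hd, hsv, htu⟩ : ∃ s d : ℝ, |s| ≤ Real.pi ∧ |d| ≤ Real.pi ∧ par s = v ∧ par (s + d) = u := by
    have hv0 : v ≠ 0 := by rintro rfl; simp at hv
    refine ⟨-v.arg, -(u / v).arg, by simpa using Complex.abs_arg_le_pi v, by simpa using Complex.abs_arg_le_pi (u / v), ?_, ?_⟩
    · have h1 := Complex.norm_mul_exp_arg_mul_I v
      rw [hv, Complex.ofReal_one, one_mul] at h1
      calc par (-v.arg) = Complex.exp (v.arg * Complex.I) := by unfold par; congr 1; push_cast; ring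
        _ = v := h1
    · have h1 := Complex.norm_mul_exp_arg_mul_I v
      have h2 := Complex.norm_mul_exp_arg_mul_I (u / v)
      rw [norm_div, hu, hv, div_one, Complex.ofReal_one, one_mul] at h2
      rw [hv, Complex.ofReal_one, one_mul] at h1
      calc par (-v.arg + -(u / v).arg) = Complex.exp (v.arg * Complex.I) * Complex.exp ((u / v).arg * Complex.I) := by
            rw [← Complex.exp_add]; unfold par; congr 1; push_cast; ring
        _ = v * (u / v) := by rw [h1, h2]
        _ = u := by field_simp
  have hpi : Real.pi < 4 := Real.pi_lt_four
  have hs' := abs_le.1 hs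
  have hd' := abs_le.1 hd
  have hsI : s ∈ Set.Icc (-10:ℝ) 10 := ⟨by linarith, by linarith⟩
  have htI : s + d ∈ Set.Icc (-10:ℝ) 10 := ⟨by linarith, by linarith⟩
  have e1 := hT1 s hsI _ htI
  have e2 := hT2 s hsI _ htI
  rw [deriv_F hA h1 (hF.differentiable (by norm_num)) s, h1 _ _ (par_ne_zero _) (par_ne_zero _) (norm_par _).le (norm_par _).le] at e1
  rw [hsv, htu, add_sub_cancel_left] at e1 e2
  set Q := Complex.exp (-gg A u v)
  set P := Complex.exp (-gg A v v) with hP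
  set D := deriv (fun θ : ℝ => (par θ)⁻¹) s
  have hPn : ‖P‖ ≤ Real.exp (SS A) := by
    rw [hP, Complex.norm_exp]
    refine Real.exp_le_exp.2 ?_
    refine (Complex.re_le_norm _).trans ?_
    rw [norm_neg]; exact gg_le hA hv.le hv.le
  have e3 : ‖(u⁻¹ - v⁻¹) * (Q - P)‖ ≤ C3 * |d| ^ 2 := by
    calc ‖(u⁻¹ - v⁻¹) * (Q - P)‖ = ‖((u⁻¹ - v⁻¹) * Q - d • (P * D)) - P * (u⁻¹ - v⁻¹ - d • D)‖ := by
          congr 1; simp only [Complex.real_smul]; ring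
      _ ≤ ‖(u⁻¹ - v⁻¹) * Q - d • (P * D)‖ + ‖P‖ * ‖u⁻¹ - v⁻¹ - d • D‖ := by
          refine (norm_sub_le _ _).trans ?_; rw [norm_mul P]
      _ ≤ C1 * |d| ^ 2 + Real.exp (SS A) * (C2 * |d| ^ 2) := by gcongr
      _ = _ := by rw [hC3]; ring
  have hu0 : u ≠ 0 := by rintro rfl; simp at hu
  have hv0 : v ≠ 0 := by rintro rfl; simp at hv
  have e4 : ‖u⁻¹ - v⁻¹‖ = ‖u - v‖ := by
    rw [inv_sub_inv hu0 hv0, norm_div, norm_mul, hu, hv, norm_sub_rev]; simp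
  have e5 : |d| ≤ Real.pi / 2 * ‖u - v‖ := by
    have h2 : ‖u - v‖ = ‖Complex.exp (Complex.I * d) - 1‖ := by
      rw [← e4, ← hsv, ← htu]
      unfold par
      rw [← Complex.exp_neg, ← Complex.exp_neg, neg_neg, neg_neg]
      push_cast
      rw [mul_add, Complex.exp_add, ← mul_sub_one, norm_mul, Complex.norm_exp]; simp
    rw [h2, Complex.norm_exp_I_mul_ofReal_sub_one, Real.norm_eq_abs, abs_mul, abs_two]
    have h3 := Real.mul_abs_le_abs_sin (x := d / 2) (by rw [abs_div, abs_two]; linarith)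
    rw [abs_div, abs_two] at h3
    calc |d| = Real.pi / 2 * (2 * (2 / Real.pi * (|d| / 2))) := by field_simp
      _ ≤ _ := by gcongr
  have hpos : 0 < ‖u - v‖ := norm_pos_iff.2 (sub_ne_zero.2 huv)
  rw [norm_mul, e4] at e3
  have e6 : ‖u - v‖ * ‖Q - P‖ ≤ ‖u - v‖ * (C3 * (Real.pi / 2) ^ 2 * ‖u - v‖) := by
    refine e3.trans ?_
    calc C3 * |d| ^ 2 ≤ C3 * (Real.pi / 2 * ‖u - v‖) ^ 2 := by gcongr
      _ = _ := by ring
  exact le_of_mul_le_mul_left e6 hpos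

noncomputable def EE (A : ℕ → ℕ → ℂ) (u v : ℂ) : ℂ := Complex.exp (gg A u v - gg A u u / 2 - gg A v v / 2)

lemma small_exp (x : ℂ) (hx : ‖x‖ ≤ 1/2) : ‖x‖ ≤ 2 * ‖Complex.exp x - 1‖ := by
  have h := Complex.norm_exp_sub_one_sub_id_le (x := x) (by linarith)
  have h2 : ‖x‖ ≤ ‖Complex.exp x - 1‖ + ‖Complex.exp x - 1 - x‖ := by
    calc ‖x‖ = ‖(Complex.exp x - 1) - (Complex.exp x - 1 - x)‖ := by congr 1; ring
      _ ≤ _ := norm_sub_le _ _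
  nlinarith [norm_nonneg x]

lemma EE_le (hA : Summable fun p : ℕ × ℕ => ‖A p.1 p.2‖) {u v : ℂ} (hu : ‖u‖ ≤ 1) (hv : ‖v‖ ≤ 1) : ‖EE A u v‖ ≤ Real.exp (2 * SS A) := by
  unfold EE
  rw [Complex.norm_exp]
  refine Real.exp_le_exp.2 ((Complex.re_le_norm _).trans ?_)
  have h1 := gg_le hA hu hv
  have h2 := gg_le hA hu hu
  have h3 := gg_le hA hv hv
  calc _ ≤ ‖gg A u v‖ + ‖gg A u u / 2‖ + ‖gg A v v / 2‖ := (norm_sub_le _ _).trans (by gcongr; exact norm_sub_le _ _)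
    _ ≤ _ := by rw [norm_div, norm_div]; simp; linarith

lemma EE_lip (hA : Summable fun p : ℕ × ℕ => ‖A p.1 p.2‖) (hsym : ∀ k l, A k l = A l k)
    (h1 : ∀ u v : ℂ, u ≠ 0 → v ≠ 0 → ‖u‖ ≤ 1 → ‖v‖ ≤ 1 → φ u⁻¹ - φ v⁻¹ = (u⁻¹ - v⁻¹) * Complex.exp (-gg A u v))
    (hF : ContDiff ℝ 2 (fun θ : ℝ => φ (par θ)⁻¹)) :
    ∃ M : ℝ, 0 ≤ M ∧ ∀ u v : ℂ, ‖u‖ = 1 → ‖v‖ = 1 → ‖EE A u v - 1‖ ≤ M * ‖u - v‖ := by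
  obtain ⟨C, hC0, hC⟩ := q_lip hA h1 hF
  have huc := (((isCompact_closedBall (0:ℂ) 1).prod (isCompact_closedBall (0:ℂ) 1)).uniformContinuousOn_of_continuous (gg_cont hA))
  obtain ⟨δ, hδ, hδ2⟩ := Metric.uniformContinuousOn_iff.1 huc (1/2) (by norm_num)
  have hx : ∀ u v : ℂ, ‖u‖ = 1 → ‖v‖ = 1 → ‖u - v‖ < δ → ‖gg A v v - gg A u v‖ ≤ 1/2 ∧ ‖gg A v v - gg A u v‖ ≤ 2 * (Real.exp (SS A) * C) * ‖u - v‖ := by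
    intro u v hu hv huv
    have h2 := hδ2 (v, v) ⟨by simp [hv], by simp [hv]⟩ (u, v) ⟨by simp [hu], by simp [hv]⟩ (by
      rw [Prod.dist_eq, dist_self, max_eq_left dist_nonneg, dist_comm, dist_eq_norm]; exact huv)
    rw [dist_eq_norm] at h2
    simp only at h2
    refine ⟨h2.le, ?_⟩
    refine (small_exp _ h2.le).trans ?_
    rw [mul_assoc]
    refine mul_le_mul_of_nonneg_left ?_ (by norm_num)
    have e : Complex.exp (gg A v v - gg A u v) - 1 = Complex.exp (gg A v v) * (Complex.exp (-gg A u v) - Complex.exp (-gg A v v)) := by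
      rw [mul_sub, ← Complex.exp_add, ← Complex.exp_add, add_neg_cancel, Complex.exp_zero, sub_eq_add_neg (gg A v v)]
    rw [e, norm_mul, mul_assoc]
    refine mul_le_mul ?_ (hC u v hu hv) (norm_nonneg _) (Real.exp_pos _).le
    rw [Complex.norm_exp]
    exact Real.exp_le_exp.2 ((Complex.re_le_norm _).trans (gg_le hA hv.le hv.le))
  set M1 := 4 * (Real.exp (SS A) * C) with hM1
  set M2 := (Real.exp (2 * SS A) + 1) / δ with hM2
  have hM10 : 0 ≤ M1 := by positivity
  have hM20 : 0 ≤ M2 := by positivity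
  refine ⟨M1 + M2, by positivity, fun u v hu hv => ?_⟩
  by_cases hd : ‖u - v‖ < δ
  · obtain ⟨a1, a2⟩ := hx u v hu hv hd
    obtain ⟨b1, b2⟩ := hx v u hv hu (by rwa [norm_sub_rev])
    rw [norm_sub_rev v u] at b2
    rw [gg_symm hsym v u] at b1 b2
    set x := gg A v v - gg A u v
    set y := gg A u u - gg A u v
    have e : EE A u v = Complex.exp (-(x + y) / 2) := by
      unfold EE; congr 1; simp only [x, y]; ring
    have hxy : ‖-(x + y) / 2‖ ≤ (‖x‖ + ‖y‖) / 2 := by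
      rw [norm_div, norm_neg]; simp; linarith [norm_add_le x y]
    rw [e]
    refine (Complex.norm_exp_sub_one_le (by linarith)).trans ?_
    nlinarith [norm_nonneg (u - v)]
  · push Not at hd
    have : ‖EE A u v - 1‖ ≤ M2 * δ := by
      rw [hM2, div_mul_cancel₀ _ hδ.ne']
      refine (norm_sub_le _ _).trans ?_
      rw [norm_one]
      linarith [EE_le hA hu.le hv.le]
    refine this.trans ?_
    nlinarith [norm_nonneg (u - v)]

end Grun

namespace Grun

/-- power series expansion on the unit disc -/
def HasC (g : ℂ → ℂ) (c : ℕ → ℂ) : Prop := ∀ u : ℂ, ‖u‖ < 1 → HasSum (fun j => c j * u ^ j) (g u)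

lemma HasC.of_diff {g : ℂ → ℂ} (hg : DifferentiableOn ℂ g (Metric.ball 0 1)) : ∃ c, HasC g c := by
  refine ⟨fun n => (n.factorial : ℂ)⁻¹ * iteratedDeriv n g 0, fun u hu => ?_⟩
  have := Complex.hasSum_taylorSeries_on_ball hg (z := u) (by simpa using hu)
  refine this.congr_fun fun n => ?_ 
  simp only [smul_eq_mul, sub_zero]; ring

lemma HasC.summable {g : ℂ → ℂ} {c : ℕ → ℂ} (h : HasC g c) {u : ℂ} (hu : ‖u‖ < 1) : Summable fun j => ‖c j * u ^ j‖ :=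
  (h u hu).summable.norm

lemma HasC.summable' {g : ℂ → ℂ} {c : ℕ → ℂ} (h : HasC g c) {ρ : ℝ} (h0 : 0 ≤ ρ) (hρ : ρ < 1) : Summable fun j => ‖c j‖ * ρ ^ j := by
  have := h.summable (u := (ρ:ℂ)) (by rw [Complex.norm_real, Real.norm_of_nonneg h0]; exact hρ)
  refine this.congr fun j => ?_
  rw [norm_mul, norm_pow, Complex.norm_real, Real.norm_of_nonneg h0]

lemma HasC.mom {g : ℂ → ℂ} {c : ℕ → ℂ} (h : HasC g c) {ρ : ℝ} (h0 : 0 ≤ ρ) (hρ : ρ < 1) (j : ℕ) :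
    ∫ s, g (ρ * s) * (starRingEnd ℂ) s ^ j ∂tau = c j * ρ ^ j := by
  have hs := h.summable' h0 hρ
  let F : ℕ → ℂ → ℂ := fun i s => c i * ρ ^ i * (s ^ i * (starRingEnd ℂ) s ^ j)
  have hFc : ∀ i, Continuous (F i) := fun i => by
    have := Complex.continuous_conj
    simp only [F]; fun_prop
  have hn : ∀ i, ∫ s, ‖F i s‖ ∂tau = ‖c i‖ * ρ ^ i := by
    intro i
    have : ∫ s, ‖F i s‖ ∂tau = ∫ s, ‖c i‖ * ρ ^ i ∂tau := by
      refine integral_congr_ae ?_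
      filter_upwards [tau_ae] with s hs
      simp [F, hs, abs_of_nonneg h0]
    rw [this]; simp
  have h1 := hasSum_integral_of_summable_integral_norm (μ := tau) (F := F) (fun i => integrable_tau (hFc i).continuousOn)
    (by simp_rw [hn]; exact hs)
  have h2 : ∫ s, (∑' i, F i s) ∂tau = ∫ s, g (ρ * s) * (starRingEnd ℂ) s ^ j ∂tau := by
    refine integral_congr_ae ?_
    filter_upwards [tau_ae] with s hs
    have h3 := (h (ρ * s) (by rw [norm_mul, hs, Complex.norm_real, Real.norm_of_nonneg h0, mul_one]; exact hρ)).mul_right ((starRingEnd ℂ) s ^ j)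
    rw [← h3.tsum_eq]
    refine tsum_congr fun i => ?_
    simp only [F]; ring
  rw [h2] at h1
  refine h1.unique ?_
  have h3 : ∀ i, ∫ s, F i s ∂tau = if i = j then c j * ρ ^ j else 0 := by
    intro i
    simp only [F]
    rw [integral_const_mul, moment]
    split_ifs with hij
    · subst hij; simp
    · simp
  simp_rw [h3]
  exact hasSum_ite_eq j _

lemma HasC.unique {g : ℂ → ℂ} {c c' : ℕ → ℂ} (h : HasC g c) (h' : HasC g c') (j : ℕ) : c j = c' j := by
  have h1 := h.mom (ρ := 1/2) (by norm_num) (by norm_num) j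
  rw [h'.mom (ρ := 1/2) (by norm_num) (by norm_num) j] at h1
  have : (((1/2:ℝ):ℂ)) ^ j ≠ 0 := pow_ne_zero _ (by norm_num)
  exact (mul_right_cancel₀ this h1).symm

lemma HasC.mul {g g' : ℂ → ℂ} {c c' : ℕ → ℂ} (h : HasC g c) (h' : HasC g' c') :
    HasC (fun u => g u * g' u) (fun n => ∑ kl ∈ Finset.HasAntidiagonal.antidiagonal n, c kl.1 * c' kl.2) := by
  intro u hu
  have e1 := h.summable hu
  have e2 := h'.summable hu
  have e3 := tsum_mul_tsum_eq_tsum_sum_antidiagonal_of_summable_norm e1 e2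
  have e4 := (summable_norm_sum_mul_antidiagonal_of_summable_norm e1 e2).of_norm.hasSum
  rw [← e3, (h u hu).tsum_eq, (h' u hu).tsum_eq] at e4
  refine e4.congr_fun fun n => ?_
  rw [Finset.sum_mul]
  refine Finset.sum_congr rfl fun kl hkl => ?_
  rw [← Finset.HasAntidiagonal.mem_antidiagonal.1 hkl, pow_add]; ring

lemma HasC.add {g g' : ℂ → ℂ} {c c' : ℕ → ℂ} (h : HasC g c) (h' : HasC g' c') :
    HasC (fun u => g u + g' u) (fun n => c n + c' n) := by
  intro u hu
  refine ((h u hu).add (h' u hu)).congr_fun fun n => ?_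
  ring

lemma HasC.const_mul {g : ℂ → ℂ} {c : ℕ → ℂ} (h : HasC g c) (a : ℂ) :
    HasC (fun u => a * g u) (fun n => a * c n) := by
  intro u hu
  refine ((h u hu).mul_left a).congr_fun fun n => ?_
  ring

lemma HasC.zero_eq {g : ℂ → ℂ} {c : ℕ → ℂ} (h : HasC g c) : c 0 = g 0 := by
  have := h 0 (by simp)
  refine HasSum.unique ?_ this
  convert hasSum_ite_eq 0 (c 0) using 2 with j
  split_ifs with hj
  · simp [hj]
  · simp [hj]

lemma HasC.shift {g : ℂ → ℂ} {c : ℕ → ℂ} (h : HasC g c) :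
    HasC (fun u => u * g u) (fun n => Nat.casesOn n 0 (fun m => c m)) := by
  intro u hu
  rw [← hasSum_nat_add_iff' 1]
  refine HasSum.congr_fun (f := fun n => u * (c n * u ^ n)) ?_ fun n => ?_
  · simpa using (h u hu).mul_left u
  · simp only [pow_succ]; ring

lemma HasC.congr {g g' : ℂ → ℂ} {c : ℕ → ℂ} (h : HasC g c) (hg : ∀ u, ‖u‖ < 1 → g u = g' u) : HasC g' c := by
  intro u hu
  rw [← hg u hu]; exact h u hu

lemma HasC.bessel {g : ℂ → ℂ} {c : ℕ → ℂ} (h : HasC g c) (hg : DifferentiableOn ℂ g (Metric.ball 0 1)) {B : ℝ} (hB : ∀ u, ‖u‖ < 1 → ‖g u‖ ≤ B) (n : ℕ) :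
    ∑ j ∈ Finset.range n, ‖c j‖ ^ 2 ≤ B ^ 2 := by
  have key : ∀ ρ : ℝ, 0 ≤ ρ → ρ < 1 → ∑ j ∈ Finset.range n, (‖c j‖ * ρ ^ j) ^ 2 ≤ B ^ 2 := by
    intro ρ h0 hρ
    set d : ℕ → ℂ := fun j => c j * ρ ^ j with hd
    set p : ℂ → ℂ := fun s => ∑ j ∈ Finset.range n, d j * s ^ j with hp
    have hpc : Continuous p := by simp only [hp]; fun_prop
    have hcj := Complex.continuous_conj
    have hm : ∀ s ∈ Metric.sphere (0:ℂ) 1, ‖(ρ:ℂ) * s‖ < 1 := by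
      intro s hs
      rw [norm_mul, Complex.norm_real, Real.norm_of_nonneg h0]
      simp at hs; rw [hs]; simpa using hρ
    have hGc : ContinuousOn (fun s => g (ρ * s)) (Metric.sphere 0 1) := by
      refine hg.continuousOn.comp (f := fun s : ℂ => (ρ:ℂ) * s) (by fun_prop) ?_
      intro s hs
      simpa using hm s hs
    set S : ℝ := ∑ j ∈ Finset.range n, (‖c j‖ * ρ ^ j) ^ 2 with hS
    have gen : ∀ G : ℂ → ℂ, ContinuousOn G (Metric.sphere 0 1) → (∀ j ∈ Finset.range n, ∫ s, G s * (starRingEnd ℂ) s ^ j ∂tau = d j) →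
        ∫ s, G s * (starRingEnd ℂ) (p s) ∂tau = S := by
      intro G hG hj
      have e : ∀ s, G s * (starRingEnd ℂ) (p s) = ∑ j ∈ Finset.range n, (starRingEnd ℂ) (d j) * (G s * (starRingEnd ℂ) s ^ j) := by
        intro s
        simp only [hp, map_sum, map_mul, map_pow, Finset.mul_sum]
        exact Finset.sum_congr rfl fun j _ => by ring
      simp_rw [e]
      rw [integral_finsetSum]
      · rw [hS]; push_cast
        refine Finset.sum_congr rfl fun j hjn => ?_
        rw [integral_const_mul, hj j hjn, mul_comm, Complex.mul_conj, Complex.normSq_eq_norm_sq, hd]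
        simp only [norm_mul, norm_pow, Complex.norm_real, Real.norm_of_nonneg h0]
        push_cast; rfl
      · intro j _
        exact integrable_tau (continuousOn_const.mul (hG.mul (by fun_prop)))
    have e1 := gen _ hGc (fun j _ => h.mom h0 hρ j)
    have e2 := gen p hpc.continuousOn (fun j hj => by
      have : ∀ s, p s * (starRingEnd ℂ) s ^ j = ∑ i ∈ Finset.range n, d i * (s ^ i * (starRingEnd ℂ) s ^ j) := by
        intro s; simp only [hp, Finset.sum_mul]; exact Finset.sum_congr rfl fun i _ => by ring
      simp_rw [this]
      rw [integral_finsetSum]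
      · simp_rw [integral_const_mul, moment]
        simp [Finset.mem_range.1 hj]
      · intro i _
        exact integrable_tau (Continuous.continuousOn (by fun_prop)))
    have i1 : Integrable (fun s => g (ρ * s) * (starRingEnd ℂ) (p s)) tau := integrable_tau (hGc.mul (by fun_prop))
    have i2 : Integrable (fun s => p s * (starRingEnd ℂ) (p s)) tau := integrable_tau (Continuous.continuousOn (by fun_prop))
    have e3 : ∫ s, (g (ρ * s) * (starRingEnd ℂ) (p s)).re ∂tau = S := by
      have := integral_re i1
      simp only [RCLike.re_to_complex] at this
      rw [this, e1, Complex.ofReal_re]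
    have e4 : ∫ s, (p s * (starRingEnd ℂ) (p s)).re ∂tau = S := by
      have := integral_re i2
      simp only [RCLike.re_to_complex] at this
      rw [this, e2, Complex.ofReal_re]
    have e5 : ∫ s, 2 * (g (ρ * s) * (starRingEnd ℂ) (p s)).re ∂tau ≤ ∫ s, (B ^ 2 + (p s * (starRingEnd ℂ) (p s)).re) ∂tau := by
      refine integral_mono_ae (i1.re.const_mul 2) ((integrable_const _).add i2.re) ?_
      filter_upwards [tau_ae] with s hs
      have hb := hB _ (hm s (by simpa using hs))
      have h1 : (g (ρ * s) * (starRingEnd ℂ) (p s)).re ≤ ‖g (ρ * s)‖ * ‖p s‖ := by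
        refine (Complex.re_le_norm _).trans ?_
        rw [norm_mul, RCLike.norm_conj]
      have h2 : (p s * (starRingEnd ℂ) (p s)).re = ‖p s‖ ^ 2 := by
        rw [Complex.mul_conj, Complex.ofReal_re, Complex.normSq_eq_norm_sq]
      rw [h2]
      nlinarith [sq_nonneg (‖g (ρ * s)‖ - ‖p s‖), norm_nonneg (g (ρ * s))]
    have i3 : Integrable (fun s => (p s * (starRingEnd ℂ) (p s)).re) tau := i2.re
    rw [integral_const_mul, e3, integral_add (integrable_const _) i3, e4] at e5
    simp at e5
    linarith
  have hlim : Tendsto (fun ρ : ℝ => ∑ j ∈ Finset.range n, (‖c j‖ * ρ ^ j) ^ 2) (nhdsWithin 1 (Set.Iio 1)) (nhds (∑ j ∈ Finset.range n, (‖c j‖ * 1 ^ j) ^ 2)) := by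
    refine Tendsto.mono_left (Continuous.tendsto (by fun_prop) 1) nhdsWithin_le_nhds
  have hle := le_of_tendsto hlim (b := B ^ 2) (by
    filter_upwards [Ioo_mem_nhdsLT (show (0:ℝ) < 1 by norm_num)] with ρ hρ
    exact key ρ hρ.1.le hρ.2)
  simpa using hle

end Grun

namespace Grun

variable {A : ℕ → ℕ → ℂ} {φ : ℂ → ℂ}

lemma EE_diff (hA : Summable fun p : ℕ × ℕ => ‖A p.1 p.2‖) {U : Set ℂ} (hU : IsOpen U) {f h : ℂ → ℂ}
    (hf : DifferentiableOn ℂ f U) (hh : DifferentiableOn ℂ h U) (hf1 : ∀ x ∈ U, ‖f x‖ ≤ 1) (hh1 : ∀ x ∈ U, ‖h x‖ ≤ 1) :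
    DifferentiableOn ℂ (fun x => EE A (f x) (h x)) U := by
  unfold EE
  exact (((gg_diff hA hU hf hh hf1 hh1).sub ((gg_diff hA hU hf hf hf1 hf1).div_const 2)).sub ((gg_diff hA hU hh hh hh1 hh1).div_const 2)).cexp

lemma EE_cont (hA : Summable fun p : ℕ × ℕ => ‖A p.1 p.2‖) {X : Type*} [TopologicalSpace X] {s : Set X} {f h : X → ℂ}
    (hf : ContinuousOn f s) (hh : ContinuousOn h s) (hf1 : ∀ x ∈ s, ‖f x‖ ≤ 1) (hh1 : ∀ x ∈ s, ‖h x‖ ≤ 1) :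
    ContinuousOn (fun x => EE A (f x) (h x)) s := by
  unfold EE
  exact (((gg_cont_comp hA hf hh hf1 hh1).sub ((gg_cont_comp hA hf hf hf1 hf1).div_const 2)).sub ((gg_cont_comp hA hh hh hh1 hh1).div_const 2)).cexp

lemma EE_zero : EE A 0 0 = 1 := by unfold EE; simp [gg_zero_left]

lemma EE_lip2 (hA : Summable fun p : ℕ × ℕ => ‖A p.1 p.2‖) {M : ℝ} (hM0 : 0 ≤ M)
    (hM : ∀ u v : ℂ, ‖u‖ = 1 → ‖v‖ = 1 → ‖EE A u v - 1‖ ≤ M * ‖u - v‖) {u v : ℂ} (hu : ‖u‖ < 1) (hv : ‖v‖ = 1) :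
    ‖EE A u v - 1‖ ≤ 2 * M * ‖u - v‖ := by
  have key : ∀ ε : ℝ, 0 < ε → ‖EE A u v - 1‖ ≤ 2 * M * ‖u - (1 + ε) * v‖ := by
    intro ε hε
    have hnb : ∀ z : ℂ, ‖z‖ ≤ 1 → ε ≤ ‖z - (1 + ε) * v‖ := by
      intro z hz
      have h1 := norm_sub_norm_le ((1 + ε) * v) z
      rw [norm_mul, hv, mul_one, norm_sub_rev] at h1
      have : ‖(1:ℂ) + ε‖ = 1 + ε := by
        rw [show (1:ℂ) + ε = ((1 + ε : ℝ) : ℂ) by push_cast; rfl, Complex.norm_real, Real.norm_of_nonneg (by linarith)]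
      rw [this] at h1
      linarith
    have hne : ∀ z : ℂ, ‖z‖ ≤ 1 → z - (1 + ε) * v ≠ 0 := fun z hz h => by
      have := hnb z hz; rw [h, norm_zero] at this; linarith
    have hd : DiffContOnCl ℂ (fun z => (EE A z v - 1) / (z - (1 + ε) * v)) (Metric.ball 0 1) := by
      constructor
      · refine DifferentiableOn.div ((EE_diff hA Metric.isOpen_ball differentiableOn_id (differentiableOn_const v) ?_ ?_).sub_const 1) (by fun_prop) ?_
        · intro x hx; simp at hx; exact hx.le
        · intro x hx; exact hv.le
        · intro x hx; simp at hx; exact hne x hx.le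
      · rw [closure_ball _ one_ne_zero]
        refine ContinuousOn.div ((EE_cont hA continuousOn_id continuousOn_const ?_ ?_).sub continuousOn_const) (by fun_prop) ?_
        · intro x hx; simpa using hx
        · intro x hx; exact hv.le
        · intro x hx; exact hne x (by simpa using hx)
    have h := Complex.norm_le_of_forall_mem_frontier_norm_le Metric.isBounded_ball hd (C := 2 * M) (fun z hz => by
      rw [frontier_ball _ one_ne_zero] at hz
      have hz1 : ‖z‖ = 1 := by simpa using hz
      have h1 := hnb z hz1.le
      rw [norm_div, div_le_iff₀ (by linarith)]
      have h2 : ‖z - v‖ ≤ ‖z - (1 + ε) * v‖ + ε := by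
        calc ‖z - v‖ = ‖(z - (1 + ε) * v) + ε * v‖ := by congr 1; ring
          _ ≤ _ := norm_add_le _ _
          _ = _ := by rw [norm_mul, hv, Complex.norm_real, Real.norm_of_nonneg hε.le, mul_one]
      refine (hM z v hz1 hv).trans ?_
      nlinarith) (z := u) (subset_closure (by simpa using hu))
    have h1 := hnb u hu.le
    rw [norm_div, div_le_iff₀ (by linarith)] at h
    exact h
  have hlim : Tendsto (fun ε : ℝ => 2 * M * ‖u - (1 + ε) * v‖) (nhdsWithin 0 (Set.Ioi 0)) (nhds (2 * M * ‖u - (1 + (0:ℝ)) * v‖)) :=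
    Tendsto.mono_left (Continuous.tendsto (by fun_prop) 0) nhdsWithin_le_nhds
  have := ge_of_tendsto hlim (by filter_upwards [self_mem_nhdsWithin] with ε hε using key ε hε)
  simpa using this

/-- the remainder function -/
noncomputable def TT (A : ℕ → ℕ → ℂ) (v u : ℂ) : ℂ := (EE A (u * v) v - 1) / (1 - u)

lemma one_sub_ne2 {u : ℂ} (hu : ‖u‖ < 1) : 1 - u ≠ 0 := fun h => by
  rw [← sub_eq_zero.1 h] at hu; simp at hu

lemma TT_diff (hA : Summable fun p : ℕ × ℕ => ‖A p.1 p.2‖) {v : ℂ} (hv : ‖v‖ = 1) : DifferentiableOn ℂ (TT A v) (Metric.ball 0 1) := by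
  unfold TT
  refine DifferentiableOn.div ((EE_diff hA Metric.isOpen_ball (by fun_prop) (differentiableOn_const v) ?_ ?_).sub_const 1) (by fun_prop) ?_
  · intro x hx; simp at hx; rw [norm_mul, hv]; linarith
  · intro x hx; exact hv.le
  · intro x hx; simp at hx; exact one_sub_ne2 hx

lemma TT_le (hA : Summable fun p : ℕ × ℕ => ‖A p.1 p.2‖) {M : ℝ} (hM0 : 0 ≤ M)
    (hM : ∀ u v : ℂ, ‖u‖ = 1 → ‖v‖ = 1 → ‖EE A u v - 1‖ ≤ M * ‖u - v‖) {u v : ℂ} (hu : ‖u‖ < 1) (hv : ‖v‖ = 1) :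
    ‖TT A v u‖ ≤ 2 * M := by
  unfold TT
  have h := EE_lip2 hA hM0 hM (u := u * v) (v := v) (by rw [norm_mul, hv]; simpa using hu) hv
  have hp : 0 < ‖1 - u‖ := norm_pos_iff.2 (one_sub_ne2 hu)
  rw [norm_div, div_le_iff₀ hp]
  refine h.trans (le_of_eq ?_)
  rw [show u * v - v = -((1 - u) * v) by ring, norm_neg, norm_mul, hv, mul_one]

lemma TT_mean (hA : Summable fun p : ℕ × ℕ => ‖A p.1 p.2‖) {u : ℂ} (hu : ‖u‖ < 1) : ∫ v, TT A v u ∂tau = 0 := by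
  unfold TT
  rw [integral_div]
  have hd : DiffContOnCl ℂ (fun v => EE A (u * v) v - 1) (Metric.ball 0 1) := by
    have hb : ∀ v : ℂ, ‖v‖ ≤ 1 → ‖u * v‖ ≤ 1 := fun v hv => by
      rw [norm_mul]; nlinarith [norm_nonneg u, norm_nonneg v]
    constructor
    · refine (EE_diff hA Metric.isOpen_ball (by fun_prop) (by fun_prop) ?_ ?_).sub_const 1
      · intro x hx; simp at hx; exact hb x hx.le
      · intro x hx; simp at hx; exact hx.le
    · rw [closure_ball _ one_ne_zero]
      refine (EE_cont hA (by fun_prop) (by fun_prop) ?_ ?_).sub continuousOn_const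
      · intro x hx; simp at hx; exact hb x hx
      · intro x hx; simpa using hx
  rw [meanValue hd]
  simp [EE_zero]

end Grun

namespace Grun

variable {A : ℕ → ℕ → ℂ} {φ : ℂ → ℂ}

noncomputable def PP (κ ρ : ℕ → ℂ) : ℕ → Polynomial ℂ
  | 0 => 1
  | (n + 1) => Polynomial.X * PP κ ρ n + (Polynomial.C (ρ (n + 1)) - ∑ i : Fin (n + 1), Polynomial.C (κ (n + 1 - i)) * PP κ ρ i)
termination_by n => n
decreasing_by
  · exact Nat.lt_succ_self n
  · exact i.2

lemma PP_zero (κ ρ : ℕ → ℂ) : PP κ ρ 0 = 1 := by rw [PP]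

lemma PP_succ (κ ρ : ℕ → ℂ) (n : ℕ) : PP κ ρ (n + 1) = Polynomial.X * PP κ ρ n + (Polynomial.C (ρ (n + 1)) - ∑ i : Fin (n + 1), Polynomial.C (κ (n + 1 - i)) * PP κ ρ i) := by
  rw [PP]

lemma PP_monic (κ ρ : ℕ → ℂ) (n : ℕ) : (PP κ ρ n).Monic ∧ (PP κ ρ n).degree = n := by
  induction n using Nat.strong_induction_on with
  | _ n ih =>
    cases n with
    | zero => rw [PP_zero]; exact ⟨Polynomial.monic_one, by simp⟩
    | succ n =>
      rw [PP_succ]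
      obtain ⟨h1, h2⟩ := ih n (Nat.lt_succ_self n)
      have h3 : (Polynomial.X * PP κ ρ n).Monic := Polynomial.monic_X.mul h1
      have h4 : (Polynomial.X * PP κ ρ n).degree = ((n + 1 : ℕ) : WithBot ℕ) := by
        rw [Polynomial.degree_mul, Polynomial.degree_X, h2]; push_cast; rw [add_comm]
      have h5 : (Polynomial.C (ρ (n + 1)) - ∑ i : Fin (n + 1), Polynomial.C (κ (n + 1 - i)) * PP κ ρ i).degree < ((n + 1 : ℕ) : WithBot ℕ) := by
        refine (Polynomial.degree_sub_le _ _).trans_lt (max_lt ?_ ?_)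
        · refine Polynomial.degree_C_le.trans_lt ?_
          exact_mod_cast Nat.succ_pos n
        · refine (Polynomial.degree_sum_le _ _).trans_lt ?_
          rw [Finset.sup_lt_iff (by exact_mod_cast WithBot.bot_lt_coe _)]
          intro i _
          have hdd : (Polynomial.C (κ (n + 1 - i)) * PP κ ρ i).degree ≤ 0 + (PP κ ρ i).degree := by
            refine (Polynomial.degree_mul_le _ _).trans ?_
            gcongr
            exact Polynomial.degree_C_le
          refine hdd.trans_lt ?_
          rw [zero_add, (ih i i.2).2]
          exact_mod_cast i.2
      rw [← h4] at h5
      refine ⟨h3.add_of_left h5, ?_⟩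
      rw [Polynomial.degree_add_eq_left_of_degree_lt h5, h4]

noncomputable def rr (A : ℕ → ℕ → ℂ) (u : ℂ) : ℂ := Complex.exp (-(gg A u u / 2))

noncomputable def kk (A : ℕ → ℕ → ℂ) (φ : ℂ → ℂ) (u : ℂ) : ℂ := (1 - u) * Complex.exp (-gg A u 1) + φ 1 * u

lemma rr_diff (hA : Summable fun p : ℕ × ℕ => ‖A p.1 p.2‖) : DifferentiableOn ℂ (rr A) (Metric.ball 0 1) := by
  have hb : ∀ x ∈ Metric.ball (0:ℂ) 1, ‖x‖ ≤ 1 := fun x hx => by simp at hx; exact hx.le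
  unfold rr
  exact ((gg_diff hA Metric.isOpen_ball differentiableOn_id differentiableOn_id hb hb).div_const 2).neg.cexp

lemma rr_cont (hA : Summable fun p : ℕ × ℕ => ‖A p.1 p.2‖) : ContinuousOn (rr A) (Metric.closedBall 0 1) := by
  have hb : ∀ x ∈ Metric.closedBall (0:ℂ) 1, ‖x‖ ≤ 1 := fun x hx => by simpa using hx
  unfold rr
  exact ((gg_cont_comp hA continuousOn_id continuousOn_id hb hb).div_const 2).neg.cexp

lemma kk_diff (hA : Summable fun p : ℕ × ℕ => ‖A p.1 p.2‖) : DifferentiableOn ℂ (kk A φ) (Metric.ball 0 1) := by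
  have hb : ∀ x ∈ Metric.ball (0:ℂ) 1, ‖x‖ ≤ 1 := fun x hx => by simp at hx; exact hx.le
  unfold kk
  have := (gg_diff hA Metric.isOpen_ball differentiableOn_id (differentiableOn_const (1:ℂ)) hb (fun _ _ => by simp)).neg.cexp
  exact ((differentiableOn_const 1).sub differentiableOn_id).mul this |>.add ((differentiableOn_const _).mul differentiableOn_id)

lemma kk_eq (h1 : ∀ u v : ℂ, u ≠ 0 → v ≠ 0 → ‖u‖ ≤ 1 → ‖v‖ ≤ 1 → φ u⁻¹ - φ v⁻¹ = (u⁻¹ - v⁻¹) * Complex.exp (-gg A u v))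
    {u v : ℂ} (hu : ‖u‖ ≤ 1) (hv0 : v ≠ 0) (hv : ‖v‖ ≤ 1) : kk A φ u - φ v⁻¹ * u = (1 - u * v⁻¹) * Complex.exp (-gg A u v) := by
  by_cases hu0 : u = 0
  · subst hu0; simp [kk, gg_zero_left]
  have e1 := h1 u 1 hu0 one_ne_zero hu (by simp)
  have e2 := h1 u v hu0 hv0 hu hv
  have e3 : kk A φ u = u * φ u⁻¹ := by
    rw [inv_one] at e1
    have : φ u⁻¹ = φ 1 + (u⁻¹ - 1) * Complex.exp (-gg A u 1) := by rw [← e1]; ring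
    rw [this, kk]; field_simp; ring
  rw [e3]
  calc u * φ u⁻¹ - φ v⁻¹ * u = u * (φ u⁻¹ - φ v⁻¹) := by ring
    _ = _ := by rw [e2]; field_simp

lemma gen_rec (hA : Summable fun p : ℕ × ℕ => ‖A p.1 p.2‖)
    (h1 : ∀ u v : ℂ, u ≠ 0 → v ≠ 0 → ‖u‖ ≤ 1 → ‖v‖ ≤ 1 → φ u⁻¹ - φ v⁻¹ = (u⁻¹ - v⁻¹) * Complex.exp (-gg A u v))
    {κ ρ : ℕ → ℂ} (hκ : HasC (kk A φ) κ) (hρ : HasC (rr A) ρ) {v : ℂ} (hv : ‖v‖ = 1) {H : ℕ → ℂ} (hH : HasC (TT A v) H) (n : ℕ) :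
    1 + H n = v ^ n * (rr A v * (PP κ ρ n).eval (φ v⁻¹)) := by
  have hv0 : v ≠ 0 := by rintro rfl; simp at hv
  have hone : HasC (fun u => (1 - u)⁻¹) (fun _ => 1) := fun u hu => by
    simpa using hasSum_geometric_of_norm_lt_one hu
  have hh := hone.add hH
  set h : ℕ → ℂ := fun n => 1 + H n with hhd
  have scale : ∀ {g : ℂ → ℂ} {c : ℕ → ℂ}, HasC g c → HasC (fun u => g (u * v)) (fun n => c n * v ^ n) := by
    intro g c hg u hu
    refine (hg (u * v) (by rw [norm_mul, hv]; simpa using hu)).congr_fun fun n => ?_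
    rw [mul_pow]; ring
  have e1 := hh.mul (scale hκ)
  have e2 := (hh.shift).const_mul (-(φ v⁻¹ * v))
  have e3 := e1.add e2
  have e4 := (scale hρ).const_mul (rr A v)
  have e5 := e3.congr (g' := fun u => rr A v * rr A (u * v)) (fun u hu => by
    have huv : ‖u * v‖ ≤ 1 := by rw [norm_mul, hv]; linarith
    have e6 := kk_eq h1 huv hv0 hv.le
    have hne := one_sub_ne2 hu
    have e7 : (1 - u)⁻¹ + TT A v u = EE A (u * v) v / (1 - u) := by unfold TT; field_simp; ring
    rw [e7]
    calc EE A (u * v) v / (1 - u) * kk A φ (u * v) + -(φ v⁻¹ * v) * (u * (EE A (u * v) v / (1 - u)))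
        = EE A (u * v) v / (1 - u) * (kk A φ (u * v) - φ v⁻¹ * (u * v)) := by ring
      _ = EE A (u * v) v * Complex.exp (-gg A (u * v) v) := by
        rw [e6, mul_assoc u, mul_inv_cancel₀ hv0, mul_one]; field_simp
      _ = _ := by
        unfold EE rr
        rw [← Complex.exp_add, ← Complex.exp_add]; congr 1; ring)
  have e8 := fun n => e5.unique e4 n
  have hκ0 : κ 0 = 1 := by rw [hκ.zero_eq]; simp [kk, gg_zero_left]
  have hρ0 : ρ 0 = 1 := by rw [hρ.zero_eq]; simp [rr, gg_zero_left]
  change h n = _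
  induction n using Nat.strong_induction_on with
  | _ n ih =>
    have e9 := e8 n
    rw [Finset.Nat.sum_antidiagonal_eq_sum_range_succ (fun i j => h i * (κ j * v ^ j)), Finset.sum_range_succ] at e9
    cases n with
    | zero => 
      simp [hκ0, hρ0] at e9
      rw [e9, PP_zero]; simp
    | succ n =>
      simp only [Nat.sub_self, hκ0, pow_zero, mul_one] at e9
      have e10 : ∑ x ∈ Finset.range (n + 1), h x * (κ (n + 1 - x) * v ^ (n + 1 - x)) =
          v ^ (n + 1) * (rr A v * ∑ i : Fin (n + 1), κ (n + 1 - i) * (PP κ ρ i).eval (φ v⁻¹)) := by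
        rw [Finset.sum_range, Finset.mul_sum, Finset.mul_sum]
        refine Finset.sum_congr rfl fun i _ => ?_
        rw [ih i i.2]
        have : v ^ (n + 1) = v ^ (i:ℕ) * v ^ (n + 1 - i) := by rw [← pow_add]; congr 1; omega
        rw [this]; ring
      have e11 : h (n + 1) = rr A v * (ρ (n + 1) * v ^ (n + 1)) + φ v⁻¹ * v * h n - ∑ x ∈ Finset.range (n + 1), h x * (κ (n + 1 - x) * v ^ (n + 1 - x)) := by
        rw [← e9]; ring
      rw [e11, e10, ih n (Nat.lt_succ_self n), PP_succ]
      simp only [Polynomial.eval_add, Polynomial.eval_sub, Polynomial.eval_mul, Polynomial.eval_X, Polynomial.eval_C, Polynomial.eval_finset_sum]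
      ring

end Grun

namespace Grun

open ComplexOrder in
lemma det_le_exp {n : ℕ} (G : Matrix (Fin n) (Fin n) ℂ) (hG : G.PosSemidef) : G.det.re ≤ Real.exp (G.trace.re - n) := by
  have h1 := hG.1.det_eq_prod_eigenvalues
  have h2 := hG.1.trace_eq_sum_eigenvalues
  have h3 : G.det.re = ∏ i, hG.1.eigenvalues i := by
    rw [h1]
    have : ∏ i, ((hG.1.eigenvalues i : ℝ) : ℂ) = ((∏ i, hG.1.eigenvalues i : ℝ) : ℂ) := by push_cast; rfl
    exact (congrArg Complex.re this).trans (Complex.ofReal_re _)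
  have h4 : G.trace.re = ∑ i, hG.1.eigenvalues i := by
    rw [h2]
    have : ∑ i, ((hG.1.eigenvalues i : ℝ) : ℂ) = ((∑ i, hG.1.eigenvalues i : ℝ) : ℂ) := by push_cast; rfl
    exact (congrArg Complex.re this).trans (Complex.ofReal_re _)
  rw [h3, h4]
  calc ∏ i, hG.1.eigenvalues i ≤ ∏ i, Real.exp (hG.1.eigenvalues i - 1) := by
        refine Finset.prod_le_prod (fun i _ => hG.eigenvalues_nonneg i) fun i _ => ?_
        have := Real.add_one_le_exp (hG.1.eigenvalues i - 1)
        linarith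
    _ = _ := by rw [← Real.exp_sum]; simp

noncomputable def Gm {n : ℕ} (f : Fin n → ℂ → ℂ) : Matrix (Fin n) (Fin n) ℂ := Matrix.of fun i j => ∫ v, f i v * (starRingEnd ℂ) (f j v) ∂tau

lemma conj_cont {f : ℂ → ℂ} {s : Set ℂ} (hf : ContinuousOn f s) : ContinuousOn (fun v => (starRingEnd ℂ) (f v)) s :=
  Complex.continuous_conj.comp_continuousOn hf

open ComplexOrder in
lemma Gm_psd {n : ℕ} (f : Fin n → ℂ → ℂ) (hf : ∀ i, ContinuousOn (f i) (Metric.sphere 0 1)) : (Gm f).PosSemidef := by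
  refine Matrix.PosSemidef.of_dotProduct_mulVec_nonneg ?_ ?_
  · ext i j
    rw [Matrix.conjTranspose_apply]
    simp only [Gm, Matrix.of_apply, ← integral_conj, Complex.star_def]
    refine integral_congr_ae (Eventually.of_forall fun v => ?_)
    simp [mul_comm]
  · intro x
    have e : star x ⬝ᵥ (Gm f *ᵥ x) = ∫ v, (∑ i, star (x i) * f i v) * (starRingEnd ℂ) (∑ i, star (x i) * f i v) ∂tau := by
      have h1 : ∀ v, (∑ i, star (x i) * f i v) * (starRingEnd ℂ) (∑ i, star (x i) * f i v)
          = ∑ i, ∑ j, (star (x i) * x j) * (f i v * (starRingEnd ℂ) (f j v)) := by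
        intro v
        rw [map_sum, Finset.sum_mul_sum]
        refine Finset.sum_congr rfl fun i _ => Finset.sum_congr rfl fun j _ => ?_
        simp; ring
      simp_rw [h1]
      have hi : ∀ i j, Integrable (fun v => (star (x i) * x j) * (f i v * (starRingEnd ℂ) (f j v))) tau := fun i j =>
        integrable_tau (continuousOn_const.mul ((hf i).mul (conj_cont (hf j))))
      rw [integral_finsetSum _ (fun i _ => integrable_finset_sum _ fun j _ => hi i j)]
      simp only [dotProduct, mulVec, Finset.mul_sum]
      refine Finset.sum_congr rfl fun i _ => ?_
      rw [integral_finsetSum _ (fun j _ => hi i j)]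
      refine Finset.sum_congr rfl fun j _ => ?_
      rw [integral_const_mul]
      simp only [Gm, Matrix.of_apply, Pi.star_apply]; ring
    rw [e]
    have h2 : ∀ v, (∑ i, star (x i) * f i v) * (starRingEnd ℂ) (∑ i, star (x i) * f i v) = ((‖∑ i, star (x i) * f i v‖ ^ 2 : ℝ) : ℂ) := by
      intro v; rw [Complex.mul_conj, Complex.normSq_eq_norm_sq]
    simp_rw [h2]
    rw [integral_complex_ofReal]
    have : 0 ≤ ∫ v, ‖∑ i, star (x i) * f i v‖ ^ 2 ∂tau := integral_nonneg fun v => by positivity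
    exact_mod_cast this

lemma andreief {n : ℕ} (f : Fin n → ℂ → ℂ) (hf : ∀ i, ContinuousOn (f i) (Metric.sphere 0 1)) :
    ∫ x, ‖(Matrix.of fun j i => f j (x i)).det‖ ^ 2 ∂(taun n) = n.factorial * (Gm f).det.re := by
  have key : ∫ x, (Matrix.of fun j i => f j (x i)).det * (starRingEnd ℂ) (Matrix.of fun j i => f j (x i)).det ∂(taun n) = n.factorial * (Gm f).det := by
    have h1 : ∀ x : Fin n → ℂ, (Matrix.of fun j i => f j (x i)).det * (starRingEnd ℂ) (Matrix.of fun j i => f j (x i)).det =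
        ∑ σ : Equiv.Perm (Fin n), ∑ τ : Equiv.Perm (Fin n), (((Equiv.Perm.sign σ : ℤ) : ℂ) * ((Equiv.Perm.sign τ : ℤ) : ℂ)) *
          ∏ i, (f (σ i) (x i) * (starRingEnd ℂ) (f (τ i) (x i))) := by
      intro x
      rw [Matrix.det_apply', map_sum, Finset.sum_mul_sum]
      refine Finset.sum_congr rfl fun σ _ => Finset.sum_congr rfl fun τ _ => ?_
      simp only [Matrix.of_apply, map_mul, map_prod, map_intCast, Finset.prod_mul_distrib]
      ring
    simp_rw [h1]
    have hi : ∀ σ τ : Equiv.Perm (Fin n), Integrable (fun x : Fin n → ℂ => (((Equiv.Perm.sign σ : ℤ) : ℂ) * ((Equiv.Perm.sign τ : ℤ) : ℂ)) *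
          ∏ i, (f (σ i) (x i) * (starRingEnd ℂ) (f (τ i) (x i)))) (taun n) := by
      intro σ τ
      refine integrable_torus (continuousOn_const.mul (continuousOn_finset_prod _ fun i _ => ?_))
      have hm : Set.MapsTo (fun x : Fin n → ℂ => x i) (torus n) (Metric.sphere (0:ℂ) 1) := fun x hx => by simpa using hx i
      exact ((hf (σ i)).mul (conj_cont (hf (τ i)))).comp (continuous_apply i).continuousOn hm
    rw [integral_finsetSum _ (fun σ _ => integrable_finset_sum _ fun τ _ => hi σ τ)]
    have h2 : ∀ σ, ∫ x, ∑ τ : Equiv.Perm (Fin n), (((Equiv.Perm.sign σ : ℤ) : ℂ) * ((Equiv.Perm.sign τ : ℤ) : ℂ)) *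
          ∏ i, (f (σ i) (x i) * (starRingEnd ℂ) (f (τ i) (x i))) ∂(taun n) = ∑ τ : Equiv.Perm (Fin n), (((Equiv.Perm.sign σ : ℤ) : ℂ) * ((Equiv.Perm.sign τ : ℤ) : ℂ)) *
          ∏ i, Gm f (σ i) (τ i) := by
      intro σ
      rw [integral_finsetSum _ (fun τ _ => hi σ τ)]
      refine Finset.sum_congr rfl fun τ _ => ?_
      rw [integral_const_mul]
      congr 1
      unfold taun
      rw [integral_fintype_prod_eq_prod (𝕜 := ℂ) (μ := fun _ => tau) (fun (i : Fin n) (v : ℂ) => f (σ i) v * (starRingEnd ℂ) (f (τ i) v))]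
      rfl
    simp_rw [h2]
    rw [Finset.sum_comm]
    have h3 : ∀ τ : Equiv.Perm (Fin n), ∑ σ : Equiv.Perm (Fin n), (((Equiv.Perm.sign σ : ℤ) : ℂ) * ((Equiv.Perm.sign τ : ℤ) : ℂ)) *
          ∏ i, Gm f (σ i) (τ i) = (Gm f).det := by
      intro τ
      have h4 := Matrix.det_permute' τ (Gm f)
      rw [Matrix.det_apply'] at h4
      simp only [Matrix.submatrix_apply, id] at h4
      have h5 : ((Equiv.Perm.sign τ : ℤ) : ℂ) * ((Equiv.Perm.sign τ : ℤ) : ℂ) = 1 := by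
        rw [← Int.cast_mul, Int.units_coe_mul_self]; simp
      calc _ = ((Equiv.Perm.sign τ : ℤ) : ℂ) * ∑ σ : Equiv.Perm (Fin n), ((Equiv.Perm.sign σ : ℤ) : ℂ) * ∏ i, Gm f (σ i) (τ i) := by
            rw [Finset.mul_sum]; exact Finset.sum_congr rfl fun σ _ => by ring
        _ = _ := by rw [h4, ← mul_assoc, h5, one_mul]
    simp_rw [h3]
    simp [Fintype.card_perm]
  have h2 : ∀ x : Fin n → ℂ, (Matrix.of fun j i => f j (x i)).det * (starRingEnd ℂ) (Matrix.of fun j i => f j (x i)).det = ((‖(Matrix.of fun j i => f j (x i)).det‖ ^ 2 : ℝ) : ℂ) := by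
    intro x; rw [Complex.mul_conj, Complex.normSq_eq_norm_sq]
  simp_rw [h2] at key
  rw [integral_complex_ofReal] at key
  have := congrArg Complex.re key
  rw [Complex.ofReal_re] at this
  rw [this, show ((n.factorial : ℂ)) = ((n.factorial : ℝ) : ℂ) by push_cast; rfl, Complex.re_ofReal_mul]

end Grun

namespace Grun

variable {A : ℕ → ℕ → ℂ} {φ ψ : ℂ → ℂ}

lemma ZZ_bound (hA : Summable fun p : ℕ × ℕ => ‖A p.1 p.2‖) (hsym : ∀ k l, A k l = A l k)
    (h1 : ∀ u v : ℂ, u ≠ 0 → v ≠ 0 → ‖u‖ ≤ 1 → ‖v‖ ≤ 1 → φ u⁻¹ - φ v⁻¹ = (u⁻¹ - v⁻¹) * Complex.exp (-gg A u v))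
    (h2 : ∀ u : ℂ, ‖u‖ = 1 → ψ u⁻¹ = Complex.exp (-gg A u u))
    (hcont : ContinuousOn φ {z : ℂ | 1 ≤ ‖z‖})
    (hF : ContDiff ℝ 2 (fun θ : ℝ => φ (par θ)⁻¹)) : ∃ C : ℝ, ∀ n, ZZ A n ≤ C := by
  obtain ⟨M, hM0, hM⟩ := EE_lip hA hsym h1 hF
  obtain ⟨κ, hκ⟩ := HasC.of_diff (kk_diff (φ := φ) hA)
  obtain ⟨ρ, hρ⟩ := HasC.of_diff (rr_diff hA)
  let f : ℕ → ℂ → ℂ := fun j v => rr A v * (PP κ ρ j).eval (φ v⁻¹)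
  let H : ℕ → ℂ → ℂ := fun j v => v ^ j * f j v - 1
  have hne : ∀ v ∈ Metric.sphere (0:ℂ) 1, v ≠ 0 := fun v hv h => by rw [h] at hv; simp at hv
  have hφc : ContinuousOn (fun v => φ v⁻¹) (Metric.sphere (0:ℂ) 1) := by
    refine hcont.comp (f := fun v : ℂ => v⁻¹) (continuousOn_inv₀.mono hne) ?_
    intro v hv
    simp at hv
    simp [hv]
  have hfc : ∀ j, ContinuousOn (f j) (Metric.sphere 0 1) := fun j =>
    ((rr_cont hA).mono Metric.sphere_subset_closedBall).mul ((PP κ ρ j).continuous.comp_continuousOn hφc)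
  have hHc : ∀ j, ContinuousOn (H j) (Metric.sphere 0 1) := fun j =>
    ((continuous_pow j).continuousOn.mul (hfc j)).sub continuousOn_const
  have hHC : ∀ v : ℂ, ‖v‖ = 1 → HasC (TT A v) (fun j => H j v) := by
    intro v hv
    obtain ⟨c, hc⟩ := HasC.of_diff (TT_diff hA hv)
    have : c = fun j => H j v := by
      ext j
      have := gen_rec hA h1 hκ hρ hv hc j
      simp only [H, f]; rw [← this]; ring
    rwa [← this]
  have hB : ∀ v : ℂ, ‖v‖ = 1 → ∀ n, ∑ j ∈ Finset.range n, ‖H j v‖ ^ 2 ≤ (2 * M) ^ 2 := fun v hv n =>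
    (hHC v hv).bessel (TT_diff hA hv) (fun u hu => TT_le hA hM0 hM hu hv) n
  have hB1 : ∀ v : ℂ, ‖v‖ = 1 → ∀ j, ‖H j v‖ ≤ 2 * M := by
    intro v hv j
    refine abs_le_of_sq_le_sq' ?_ (by positivity) |>.2
    refine le_trans ?_ (hB v hv (j + 1))
    exact Finset.single_le_sum (f := fun j => ‖H j v‖ ^ 2) (fun i _ => by positivity) (Finset.self_mem_range_succ j)
  have hH0 : ∀ j, ∫ v, H j v ∂tau = 0 := by
    have hz : HasC (fun _ => 0) (fun j => ∫ v, H j v ∂tau) := by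
      intro u hu
      let F : ℕ → ℂ → ℂ := fun j v => H j v * u ^ j
      have hFi : ∀ j, Integrable (F j) tau := fun j => integrable_tau ((hHc j).mul continuousOn_const)
      have hs : Summable fun j => ∫ v, ‖F j v‖ ∂tau := by
        refine Summable.of_nonneg_of_le (fun j => integral_nonneg fun v => norm_nonneg _) (f := fun j => 2 * M * ‖u‖ ^ j) (fun j => ?_)
          ((summable_geometric_of_lt_one (norm_nonneg u) hu).mul_left _)
        calc ∫ v, ‖F j v‖ ∂tau ≤ ∫ v, 2 * M * ‖u‖ ^ j ∂tau := by
              refine integral_mono_ae (hFi j).norm (integrable_const _) ?_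
              filter_upwards [tau_ae] with v hv
              simp only [F, norm_mul, norm_pow]
              exact mul_le_mul_of_nonneg_right (hB1 v hv j) (by positivity)
          _ = _ := by simp
      have h3 := hasSum_integral_of_summable_integral_norm hFi hs
      have h4 : ∫ v, ∑' j, F j v ∂tau = 0 := by
        rw [← TT_mean hA hu]
        refine integral_congr_ae ?_
        filter_upwards [tau_ae] with v hv
        exact (hHC v hv u hu).tsum_eq
      rw [h4] at h3
      refine h3.congr_fun fun j => ?_
      simp only [F]
      rw [integral_mul_const]
    have hz' : HasC (fun _ => 0) (fun _ => 0) := fun u hu => by simpa using hasSum_zero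
    exact fun j => hz.unique hz' j
  have hnorm : ∀ j, (∫ v, f j v * (starRingEnd ℂ) (f j v) ∂tau).re = 1 + ∫ v, ‖H j v‖ ^ 2 ∂tau := by
    intro j
    have i1 : Integrable (fun v => f j v * (starRingEnd ℂ) (f j v)) tau := integrable_tau ((hfc j).mul (conj_cont (hfc j)))
    have i2 : Integrable (H j) tau := integrable_tau (hHc j)
    have i3 : Integrable (fun v => ‖H j v‖ ^ 2) tau := integrable_tau ((hHc j).norm.pow 2)
    have e1 := integral_re i1
    have e2 := integral_re i2
    simp only [RCLike.re_to_complex] at e1 e2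
    have i4 : Integrable (fun v => (H j v).re) tau := i2.re
    rw [← e1]
    have e3 : ∫ v, (f j v * (starRingEnd ℂ) (f j v)).re ∂tau = ∫ v, (1 + 2 * (H j v).re + ‖H j v‖ ^ 2) ∂tau := by
      refine integral_congr_ae ?_
      filter_upwards [tau_ae] with v hv
      have h3 : ‖f j v‖ ^ 2 = ‖1 + H j v‖ ^ 2 := by
        simp only [H, add_sub_cancel, norm_mul, norm_pow, hv, one_pow, one_mul]
      rw [Complex.mul_conj, Complex.ofReal_re, Complex.normSq_eq_norm_sq, h3, ← Complex.normSq_eq_norm_sq, ← Complex.normSq_eq_norm_sq,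
        Complex.normSq_apply, Complex.normSq_apply]
      simp; ring
    have i5 : Integrable (fun v => 1 + 2 * (H j v).re) tau := (integrable_const _).add (i4.const_mul 2)
    rw [e3, integral_add i5 i3, integral_add (integrable_const _) (i4.const_mul 2), integral_const_mul, e2, hH0 j]
    simp
  refine ⟨Real.exp ((2 * M) ^ 2), fun n => ?_⟩
  have hIntEq : ∀ x ∈ torus n, ‖VV x‖ ^ 2 * ‖FF A (pp x)‖ ^ 2 = ‖(Matrix.of fun (j i : Fin n) => f j (x i)).det‖ ^ 2 := by
    intro x hx
    rw [← integrand_eq hA hsym h1 h2 x hx, ← norm_VV (fun i => φ (x i)⁻¹), VV,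
      Matrix.det_eval_matrixOfPolynomials_eq_det_vandermonde (fun i => φ (x i)⁻¹) (fun j : Fin n => PP κ ρ j)
        (fun i => Polynomial.natDegree_eq_of_degree_eq_some (PP_monic κ ρ i).2) (fun i => (PP_monic κ ρ i).1)]
    have e1 : (Matrix.of fun (j i : Fin n) => f j (x i)).det = (∏ i, rr A (x i)) * (Matrix.of fun i j : Fin n => (PP κ ρ j).eval (φ (x i)⁻¹)).det := by
      rw [← Matrix.det_mul_column, ← Matrix.det_transpose]
      rfl
    rw [e1, norm_mul, mul_pow, norm_prod, ← Finset.prod_pow, mul_comm]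
    congr 1
    refine Finset.prod_congr rfl fun i _ => ?_
    rw [h2 _ (hx i), rr, ← norm_pow, ← Complex.exp_nat_mul]
    congr 2; push_cast; ring
  have hZ : ZZ A n = (Gm fun j : Fin n => f j).det.re := by
    unfold ZZ
    rw [En_sq, Complex.ofReal_re]
    have : ∫ x, ‖VV x‖ ^ 2 * ‖FF A (pp x)‖ ^ 2 ∂(taun n) = ∫ x, ‖(Matrix.of fun (j i : Fin n) => f j (x i)).det‖ ^ 2 ∂(taun n) :=
      integral_congr_ae (by filter_upwards [taun_ae n] with x hx using hIntEq x hx)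
    rw [this, andreief (fun j : Fin n => f j) (fun j => hfc j), ← mul_assoc, inv_mul_cancel₀ (by positivity), one_mul]
  rw [hZ]
  refine (det_le_exp _ (Gm_psd _ fun j => hfc j)).trans (Real.exp_le_exp.2 ?_)
  have i6 : ∀ j, Integrable (fun v => ‖H j v‖ ^ 2) tau := fun j => integrable_tau ((hHc j).norm.pow 2)
  have ht : (Gm fun j : Fin n => f j).trace.re = n + ∫ v, ∑ j ∈ Finset.range n, ‖H j v‖ ^ 2 ∂tau := by
    rw [integral_finsetSum _ (fun j _ => i6 j), Finset.sum_range, Matrix.trace, Complex.re_sum]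
    simp only [Matrix.diag_apply, Gm, Matrix.of_apply, hnorm]
    rw [Finset.sum_add_distrib]; simp
  rw [ht, add_sub_cancel_left]
  calc ∫ v, ∑ j ∈ Finset.range n, ‖H j v‖ ^ 2 ∂tau ≤ ∫ v, (2 * M) ^ 2 ∂tau := by
        refine integral_mono_ae (integrable_finset_sum _ fun j _ => i6 j) (integrable_const _) ?_
        filter_upwards [tau_ae] with v hv using hB v hv n
    _ = _ := by simp

end Grun

/-- Asymptotics of the Coulomb gas partition function on a `C^{5+α}`
Jordan curve of capacity `1` (parametrized by the boundary values of the exterior map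
`φ`, with `ψ` the continuous boundary extension of `φ'`): `det(I + K_m) > 0` for every
`m`, these determinants converge to some `D ∈ (0, ∞)`, and
`Z_n/(2π)^n → D^{-1/2}` as `n → ∞`. -/
theorem stmt19 (φ ψ : ℂ → ℂ) (φ₀ : ℂ) (c : ℕ → ℂ) (a : ℕ → ℕ → ℂ) (α : ℝ)
    (hα : α ∈ Set.Ioo (0 : ℝ) 1)
    (hcont : ContinuousOn φ {z : ℂ | 1 ≤ ‖z‖})
    (hinj : Set.InjOn φ {z : ℂ | 1 ≤ ‖z‖})
    (hholo : DifferentiableOn ℂ φ {z : ℂ | 1 < ‖z‖})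
    (hLaurent : ∀ z : ℂ, 1 < ‖z‖ →
      Summable (fun k : ℕ => ‖c k * z ^ (-(k : ℤ) - 1)‖) ∧
      φ z = z + φ₀ + ∑' k : ℕ, c k * z ^ (-(k : ℤ) - 1))
    (hC5 : ContDiff ℝ 5 (fun θ : ℝ => φ (Complex.exp (Complex.I * (θ : ℂ)))))
    (hHolder : ∃ Cα : ℝ, ∀ x y : ℝ,
      ‖iteratedDeriv 5 (fun θ : ℝ => φ (Complex.exp (Complex.I * (θ : ℂ)))) x
        - iteratedDeriv 5 (fun θ : ℝ => φ (Complex.exp (Complex.I * (θ : ℂ)))) y‖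
        ≤ Cα * |x - y| ^ α)
    (hderiv_ne : ∀ θ : ℝ,
      deriv (fun t : ℝ => φ (Complex.exp (Complex.I * (t : ℂ)))) θ ≠ 0)
    (hψcont : ContinuousOn ψ {z : ℂ | 1 ≤ ‖z‖})
    (hψ : ∀ z : ℂ, 1 < ‖z‖ → ψ z = deriv φ z)
    (hψ0 : ∀ z : ℂ, 1 ≤ ‖z‖ → ψ z ≠ 0)
    (hsym : ∀ k l, a k l = a l k)
    (hGrunsky : ∀ z ζ : ℂ, 1 ≤ ‖z‖ → 1 ≤ ‖ζ‖ →
      Summable (fun p : ℕ × ℕ =>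
        ‖a (p.1 + 1) (p.2 + 1) * ζ ^ (-(p.1 : ℤ) - 1) * z ^ (-(p.2 : ℤ) - 1)‖) ∧
      (z ≠ ζ → φ ζ - φ z = (ζ - z) * Complex.exp
        (-∑' p : ℕ × ℕ, a (p.1 + 1) (p.2 + 1) * ζ ^ (-(p.1 : ℤ) - 1) * z ^ (-(p.2 : ℤ) - 1))))
    (Z : ℕ → ℝ)
    (hZ : ∀ n : ℕ, Z n = (1 / (n.factorial : ℝ)) *
      ∫ θ in Set.pi Set.univ (fun _ : Fin n => Set.Icc (-Real.pi) Real.pi),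
        (∏ p ∈ Finset.univ.filter (fun p : Fin n × Fin n => p.1 < p.2),
          ‖φ (Complex.exp (Complex.I * (θ p.1 : ℂ)))
            - φ (Complex.exp (Complex.I * (θ p.2 : ℂ)))‖ ^ 2) *
        ∏ μ, ‖ψ (Complex.exp (Complex.I * (θ μ : ℂ)))‖) :
    (∀ m : ℕ, 0 < (1 + grunskyK a m).det) ∧
    ∃ D : ℝ, 0 < D ∧
      Tendsto (fun m : ℕ => (1 + grunskyK a m).det) atTop (nhds D) ∧
      Tendsto (fun n : ℕ => Z n / (2 * Real.pi) ^ n) atTop (nhds ((Real.sqrt D)⁻¹)) := by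
  have hA := Grun.A_summable hGrunsky
  have hsym' : ∀ k l, (fun k l => a (k + 1) (l + 1)) k l = (fun k l => a (k + 1) (l + 1)) l k := fun k l => hsym _ _
  have h1 : ∀ u v : ℂ, u ≠ 0 → v ≠ 0 → ‖u‖ ≤ 1 → ‖v‖ ≤ 1 →
      φ u⁻¹ - φ v⁻¹ = (u⁻¹ - v⁻¹) * Complex.exp (-Grun.gg (fun k l => a (k + 1) (l + 1)) u v) :=
    fun u v hu0 hv0 hu hv => Grun.ident1 hGrunsky hu0 hv0 hu hv
  have h2 : ∀ u : ℂ, ‖u‖ = 1 → ψ u⁻¹ = Complex.exp (-Grun.gg (fun k l => a (k + 1) (l + 1)) u u) :=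
    fun u hu => Grun.ident2 (A := (fun k l => a (k + 1) (l + 1))) hA hholo hψcont hψ h1 hu
  have hF : ContDiff ℝ 2 (fun θ : ℝ => φ (Grun.par θ)⁻¹) := by
    have e : (fun θ : ℝ => φ (Grun.par θ)⁻¹) = fun θ : ℝ => φ (Complex.exp (Complex.I * (θ : ℂ))) := by
      ext θ; unfold Grun.par; rw [Complex.exp_neg, inv_inv]
    rw [e]
    exact hC5.of_le (by norm_num)
  obtain ⟨C, hC⟩ := Grun.ZZ_bound (A := (fun k l => a (k + 1) (l + 1))) hA hsym' h1 h2 hcont hF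
  obtain ⟨hs, hlim⟩ := Grun.ZZ_limit (A := (fun k l => a (k + 1) (l + 1))) hA C hC
  obtain ⟨hdet, D, hD, hDlim, hDeq⟩ := Grun.gauss_concl a hsym hA hs
  refine ⟨hdet, D, hD, hDlim, ?_⟩
  rw [hDeq]
  refine hlim.congr fun n => ?_
  exact (Grun.Z_eq (A := (fun k l => a (k + 1) (l + 1))) hA hsym' h1 h2 Z hZ n).symm
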